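/- arXiv:1104.3090 — 2 statements merged into one kernel-verified Lean document; each statement's English description precedes it below -/
import Mathlib

section
/- Let G be a connected simple graph on n ≥ 1 vertices with maximum degree at most 3 such that for every vertex v the subgraph induced on the remaining vertices is connected. Then G has a spanning closed walk of length at most 4n/3 − 2/3. (This settles the conjecture of Boyd, Sitters, van der Ster and Stougie that every 2-vertex-connected subcubic graph has a spanning Eulerian multigraph with at most 4n/3 − 2/3 edges.) -/
open SimpleGraph


set_option linter.unusedSectionVars false

namespace SubcubicTour

section Boundary

variable {V ε : Type*} [Fintype V] [DecidableEq V] [DecidableEq ε]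

/-- boundary of a single edge, mod 2 -/
def de (a b : ε → V) (e : ε) : V → ZMod 2 := Pi.single (a e) 1 + Pi.single (b e) 1

/-- boundary of a set of edges, mod 2 -/
def bd (a b : ε → V) (C : Finset ε) : V → ZMod 2 := ∑ e ∈ C, de a b e

/-- indicator -/
def pt (v : V) : V → ZMod 2 := Pi.single v 1

lemma two_tors (x : V → ZMod 2) : x + x = 0 := by
  ext v; exact CharTwo.add_self_eq_zero _

lemma eq_of_add_zero {x y : V → ZMod 2} (h : x + y = 0) : x = y := by
  have := two_tors y
  calc x = x + (y + y) := by rw [this, add_zero]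
    _ = (x + y) + y := by abel
    _ = y := by rw [h, zero_add]

lemma pt_self (v : V) : pt v v = 1 := by simp [pt]
lemma pt_ne {v u : V} (h : u ≠ v) : pt v u = 0 := by simp [pt, h]
lemma pt_inj {v u : V} (h : pt v = pt u) : v = u := by
  by_contra hne
  have := congrFun h v
  rw [pt_self, pt_ne hne] at this
  exact one_ne_zero this

lemma z2 (x : ZMod 2) : x = 0 ∨ x = 1 := by revert x; decide

lemma bd_empty (a b : ε → V) : bd a b ∅ = 0 := by simp [bd]
lemma bd_single (a b : ε → V) (e : ε) : bd a b {e} = de a b e := by simp [bd]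

lemma bd_union (a b : ε → V) {C D : Finset ε} (h : Disjoint C D) :
    bd a b (C ∪ D) = bd a b C + bd a b D := Finset.sum_union h

lemma bd_sdiff (a b : ε → V) {C D : Finset ε} (h : D ⊆ C) :
    bd a b (C \ D) = bd a b C + bd a b D := by
  have h1 : bd a b (C \ D) + bd a b D = bd a b C := Finset.sum_sdiff h
  rw [← h1, add_assoc, two_tors, add_zero]

lemma bd_symmDiff (a b : ε → V) (C D : Finset ε) :
    bd a b (symmDiff C D) = bd a b C + bd a b D := by
  have h1 : bd a b (symmDiff C D) = bd a b (C \ D) + bd a b (D \ C) := by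
    rw [← bd_union]
    · rfl
    · exact disjoint_sdiff_sdiff
  have h2 : bd a b (C \ D) = bd a b C + bd a b (C ∩ D) := by
    rw [← bd_sdiff _ _ Finset.inter_subset_left, Finset.sdiff_inter_self_left]
  have h3 : bd a b (D \ C) = bd a b D + bd a b (C ∩ D) := by
    rw [← bd_sdiff _ _ Finset.inter_subset_right, Finset.inter_comm, Finset.sdiff_inter_self_left]
  rw [h1, h2, h3]
  have := two_tors (bd a b (C ∩ D))
  calc _ = bd a b C + bd a b D + (bd a b (C ∩ D) + bd a b (C ∩ D)) := by abel
    _ = _ := by rw [this, add_zero]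

lemma bd_erase (a b : ε → V) {C : Finset ε} {e : ε} (h : e ∈ C) :
    bd a b (C.erase e) = bd a b C + de a b e := by
  rw [← Finset.sdiff_singleton_eq_erase, bd_sdiff _ _ (by simpa using h), bd_single]

lemma bd_insert (a b : ε → V) {C : Finset ε} {e : ε} (h : e ∉ C) :
    bd a b (insert e C) = bd a b C + de a b e := by
  rw [bd, Finset.sum_insert h, add_comm]; rfl

lemma exists_edge (a b : ε → V) {C : Finset ε} {v : V} (h : bd a b C v = 1) :
    ∃ e ∈ C, de a b e v = 1 := by
  have h0 : ∑ e ∈ C, de a b e v ≠ 0 := by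
    rw [← Finset.sum_apply]; change bd a b C v ≠ 0; rw [h]; exact one_ne_zero
  obtain ⟨e, he, hne⟩ := Finset.exists_ne_zero_of_sum_ne_zero h0
  exact ⟨e, he, (z2 _).resolve_left hne⟩

lemma other_end (a b : ε → V) {e : ε} {t : V} (h : de a b e t = 1) :
    ∃ x, x ≠ t ∧ de a b e = pt t + pt x := by
  by_cases h1 : a e = t
  · refine ⟨b e, ?_, ?_⟩
    · rintro h2
      simp [de, h1, h2] at h
    · simp [de, pt, h1]
  · by_cases h2 : b e = t
    · refine ⟨a e, h1, ?_⟩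
      simp [de, pt, h2, add_comm]
    · exfalso
      have h1' : t ≠ a e := fun h => h1 h.symm
      have h2' : t ≠ b e := fun h => h2 h.symm
      simp [de, h1', h2'] at h

lemma sum_pt (X : Finset V) (v : V) : ∑ u ∈ X, pt v u = if v ∈ X then 1 else 0 := by
  simp [pt, Pi.single_apply]

lemma de_eq (a b : ε → V) (e : ε) : de a b e = pt (a e) + pt (b e) := rfl

/-- closed sets have even total boundary -/
lemma sum_bd_closed (a b : ε → V) (Z : Finset ε) (X : Finset V)
    (h : ∀ e ∈ Z, (a e ∈ X ↔ b e ∈ X)) : ∑ v ∈ X, bd a b Z v = 0 := by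
  have : ∑ v ∈ X, bd a b Z v = ∑ e ∈ Z, ∑ v ∈ X, de a b e v := by
    rw [Finset.sum_comm]; refine Finset.sum_congr rfl fun v _ => ?_
    simp [bd]
  rw [this]
  refine Finset.sum_eq_zero fun e he => ?_
  simp only [de_eq, Pi.add_apply, Finset.sum_add_distrib, sum_pt]
  have := h e he
  by_cases h1 : a e ∈ X
  · simp [h1, this.1 h1]; decide
  · have h2 : b e ∉ X := fun h2 => h1 (this.2 h2)
    simp [h1, h2]

lemma path_step (a b : ε → V) {Z P : Finset ε} {x u v : V} {e : ε} (hP : P ⊆ Z) (he : e ∈ Z)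
    (hb : bd a b P = pt x + pt u) (hd : de a b e = pt u + pt v) :
    ∃ P' ⊆ Z, bd a b P' = pt x + pt v := by
  refine ⟨symmDiff P {e}, ?_, ?_⟩
  · intro f hf
    rw [Finset.mem_symmDiff] at hf
    rcases hf with h | h
    · exact hP h.1
    · rw [Finset.mem_singleton.1 h.1]; exact he
  · rw [bd_symmDiff, bd_single, hb, hd]
    have := two_tors (pt u)
    calc _ = pt x + pt v + (pt u + pt u) := by abel
      _ = _ := by rw [this, add_zero]

open Classical in
/-- vertices reachable from `x` by edge sets inside `Z` -/
noncomputable def reach (a b : ε → V) (Z : Finset ε) (x : V) : Finset V :=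
  Finset.univ.filter fun v => ∃ P ⊆ Z, bd a b P = pt x + pt v

lemma mem_reach (a b : ε → V) {Z : Finset ε} {x v : V} :
    v ∈ reach a b Z x ↔ ∃ P ⊆ Z, bd a b P = pt x + pt v := by simp [reach]

lemma reach_closed (a b : ε → V) (Z : Finset ε) (x : V) :
    ∀ e ∈ Z, (a e ∈ reach a b Z x ↔ b e ∈ reach a b Z x) := by
  intro e he
  rw [mem_reach, mem_reach]
  constructor
  · rintro ⟨P, hP, hb⟩
    exact path_step a b hP he hb (de_eq a b e)
  · rintro ⟨P, hP, hb⟩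
    exact path_step a b hP he hb ((de_eq a b e).trans (add_comm _ _))

lemma self_mem_reach (a b : ε → V) (Z : Finset ε) (x : V) : x ∈ reach a b Z x := by
  rw [mem_reach]; exact ⟨∅, by simp, by rw [bd_empty, two_tors]⟩

lemma exists_join (a b : ε → V) {Z : Finset ε} {x : V} (h : bd a b Z x = 1) :
    ∃ y, y ≠ x ∧ bd a b Z y = 1 ∧ ∃ P ⊆ Z, bd a b P = pt x + pt y := by
  by_contra hcon
  push Not at hcon
  have h0 := sum_bd_closed a b Z _ (reach_closed a b Z x)
  rw [Finset.sum_eq_single x] at h0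
  · rw [h] at h0; exact one_ne_zero h0
  · intro y hy hne
    refine (z2 _).resolve_right fun h1 => ?_
    obtain ⟨P, hP, hb⟩ := (mem_reach a b).1 hy
    exact hcon y hne h1 P hP hb
  · intro hx; exact absurd (self_mem_reach a b Z x) hx

/-- `C` is a minimal nonempty even set. -/
def IsCyc (a b : ε → V) (C : Finset ε) : Prop :=
  C.Nonempty ∧ bd a b C = 0 ∧ ∀ D ⊆ C, bd a b D = 0 → D.Nonempty → D = C

lemma exists_cyc (a b : ε → V) (C : Finset ε) (hne : C.Nonempty) (h0 : bd a b C = 0) :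
    ∃ D ⊆ C, IsCyc a b D := by
  induction C using Finset.strongInduction with
  | _ C ih =>
    by_cases h : ∀ D ⊆ C, bd a b D = 0 → D.Nonempty → D = C
    · exact ⟨C, subset_rfl, hne, h0, h⟩
    · push Not at h
      obtain ⟨D, hD, hb, hn, hneq⟩ := h
      obtain ⟨D', hD', hc⟩ := ih D (Finset.ssubset_iff_subset_ne.2 ⟨hD, hneq⟩) hn hb
      exact ⟨D', hD'.trans hD, hc⟩

/-- nonnegativity on cycles gives nonnegativity on even sets -/
lemma nonneg_of_cyc (a b : ε → V) (E : Finset ε) (w : ε → ℤ)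
    (h : ∀ C ⊆ E, IsCyc a b C → 0 ≤ ∑ e ∈ C, w e) :
    ∀ C ⊆ E, bd a b C = 0 → 0 ≤ ∑ e ∈ C, w e := by
  intro C
  induction C using Finset.strongInduction with
  | _ C ih =>
    intro hC h0
    rcases C.eq_empty_or_nonempty with rfl | hne
    · simp
    obtain ⟨D, hD, hc⟩ := exists_cyc a b C hne h0
    have h1 := h D (hD.trans hC) hc
    have h2 := ih (C \ D) (Finset.sdiff_ssubset hD hc.1) (Finset.sdiff_subset.trans hC)
      (by rw [bd_sdiff _ _ hD, h0, hc.2.1, add_zero])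
    rw [← Finset.sum_sdiff hD]
    omega

/-- A cycle through `t` has exactly two edges at `t`. -/
lemma cyc_two (a b : ε → V) {C : Finset ε} (hC : IsCyc a b C) (t : V) :
    (C.filter fun e => de a b e t = 1) = ∅ ∨
    ∃ e₁ ∈ C, ∃ e₂ ∈ C, e₁ ≠ e₂ ∧ (C.filter fun e => de a b e t = 1) = {e₁, e₂} := by
  rcases (C.filter fun e => de a b e t = 1).eq_empty_or_nonempty with h | ⟨e₁, he⟩
  · exact Or.inl h
  right
  rw [Finset.mem_filter] at he
  obtain ⟨he1, het⟩ := he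
  obtain ⟨x, hxt, hx⟩ := other_end a b het
  set T := C.filter fun e => de a b e t = 1 with hT
  have hTC : T ⊆ C := Finset.filter_subset _ _
  have he1T : e₁ ∈ T := by rw [hT, Finset.mem_filter]; exact ⟨he1, het⟩
  have hbt : bd a b (C \ T) t = 0 := by
    refine (z2 _).resolve_right fun h1 => ?_
    obtain ⟨e, he, h2⟩ := exists_edge a b h1
    rw [Finset.mem_sdiff, hT, Finset.mem_filter] at he
    exact he.2 ⟨he.1, h2⟩
  have key : ∃ y, ∃ P ⊆ C \ T, bd a b P = pt x + pt y ∧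
      ∃ e₂ ∈ T, e₂ ≠ e₁ ∧ de a b e₂ = pt t + pt y := by
    have hsd : bd a b (C \ T) = bd a b T := by rw [bd_sdiff _ _ hTC, hC.2.1, zero_add]
    rcases z2 (bd a b (C \ T) x) with h0 | h1
    · refine ⟨x, ∅, by simp, by rw [bd_empty, two_tors], ?_⟩
      have : bd a b (T.erase e₁) x = 1 := by
        rw [bd_erase _ _ he1T, ← hsd, hx]
        simp [h0, pt_self, pt_ne hxt]
      obtain ⟨e₂, h2, h3⟩ := exists_edge a b this
      rw [Finset.mem_erase] at h2
      refine ⟨e₂, h2.2, h2.1, ?_⟩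
      have h4 := h2.2
      rw [hT, Finset.mem_filter] at h4
      obtain ⟨x', hx't, hx'⟩ := other_end a b h4.2
      rw [hx'] at h3
      rcases eq_or_ne x x' with rfl | hne
      · exact hx'
      · rw [Pi.add_apply, pt_ne hxt, pt_ne hne] at h3; simp at h3
    · obtain ⟨y, hyx, hy1, P, hP, hPb⟩ := exists_join a b h1
      have hyt : y ≠ t := by rintro rfl; rw [hbt] at hy1; exact zero_ne_one hy1
      refine ⟨y, P, hP, hPb, ?_⟩
      rw [hsd] at hy1
      obtain ⟨e₂, h2, h3⟩ := exists_edge a b hy1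
      have h4 := h2
      rw [hT, Finset.mem_filter] at h4
      obtain ⟨x', hx't, hx'⟩ := other_end a b h4.2
      have : y = x' := by
        by_contra hne
        rw [hx', Pi.add_apply, pt_ne hyt, pt_ne hne] at h3; simp at h3
      subst this
      refine ⟨e₂, h2, ?_, hx'⟩
      rintro rfl
      rw [hx] at hx'
      exact hyx (pt_inj (add_left_cancel hx')).symm
  obtain ⟨y, P, hP, hPb, e₂, h2, hne, hd2⟩ := key
  refine ⟨e₁, he1, e₂, hTC h2, hne.symm, ?_⟩
  have hdis : Disjoint P {e₁, e₂} := by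
    rw [Finset.disjoint_right]
    intro e he heP
    have := (Finset.mem_sdiff.1 (hP heP)).2
    simp only [Finset.mem_insert, Finset.mem_singleton] at he
    rcases he with rfl | rfl
    · exact this he1T
    · exact this h2
  have hall : P ∪ {e₁, e₂} = C := by
    apply hC.2.2
    · intro e he
      simp only [Finset.mem_union, Finset.mem_insert, Finset.mem_singleton] at he
      rcases he with h | rfl | rfl
      · exact (Finset.mem_sdiff.1 (hP h)).1
      · exact he1
      · exact hTC h2
    · rw [bd_union _ _ hdis, bd_insert _ _ (by simpa using hne.symm), bd_single, hPb, hx, hd2]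
      calc _ = (pt x + pt x) + (pt y + pt y) + (pt t + pt t) := by abel
        _ = _ := by simp [two_tors]
    · exact ⟨e₁, by simp⟩
  apply Finset.Subset.antisymm
  · intro e he
    have h5 := hTC he
    rw [← hall, Finset.mem_union] at h5
    rcases h5 with h | h
    · exact absurd he (Finset.mem_sdiff.1 (hP h)).2
    · exact h
  · intro e he
    simp only [Finset.mem_insert, Finset.mem_singleton] at he
    rcases he with rfl | rfl
    · exact he1T
    · exact h2

/-- A join without nonempty even subsets has exactly one edge at its end. -/
lemma join_one (a b : ε → V) {Q : Finset ε} {s t : V} (hst : s ≠ t)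
    (hQ : bd a b Q = pt s + pt t) (hmin : ∀ D ⊆ Q, bd a b D = 0 → D = ∅) :
    ∃ f, (Q.filter fun e => de a b e t = 1) = {f} := by
  set T := Q.filter fun e => de a b e t = 1 with hT
  have hTQ : T ⊆ Q := Finset.filter_subset _ _
  have hbt : bd a b (Q \ T) t = 0 := by
    refine (z2 _).resolve_right fun h1 => ?_
    obtain ⟨e, he, h2⟩ := exists_edge a b h1
    rw [Finset.mem_sdiff, hT, Finset.mem_filter] at he
    exact he.2 ⟨he.1, h2⟩
  have key : ∃ y, ∃ P ⊆ Q \ T, bd a b P = pt s + pt y ∧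
      ∃ f ∈ T, de a b f = pt t + pt y := by
    have hsd : bd a b T = bd a b Q + bd a b (Q \ T) := by
      rw [bd_sdiff _ _ hTQ, ← add_assoc, two_tors, zero_add]
    have fin : ∀ y, y ≠ t → bd a b T y = 1 → ∃ f ∈ T, de a b f = pt t + pt y := by
      intro y hyt h1
      obtain ⟨e₂, h2, h3⟩ := exists_edge a b h1
      have h4 := h2
      rw [hT, Finset.mem_filter] at h4
      obtain ⟨x', hx't, hx'⟩ := other_end a b h4.2
      have : y = x' := by
        by_contra hne
        rw [hx', Pi.add_apply, pt_ne hyt, pt_ne hne] at h3; simp at h3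
      subst this
      exact ⟨e₂, h2, hx'⟩
    rcases z2 (bd a b (Q \ T) s) with h0 | h1
    · refine ⟨s, ∅, by simp, by rw [bd_empty, two_tors], fin s hst ?_⟩
      rw [hsd, hQ]; simp [h0, pt_self, pt_ne hst]
    · obtain ⟨y, hyx, hy1, P, hP, hPb⟩ := exists_join a b h1
      have hyt : y ≠ t := by rintro rfl; rw [hbt] at hy1; exact zero_ne_one hy1
      refine ⟨y, P, hP, hPb, fin y hyt ?_⟩
      rw [hsd, hQ]; simp [hy1, pt_ne hyx, pt_ne hyt]
  obtain ⟨y, P, hP, hPb, f, hf, hfd⟩ := key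
  refine ⟨f, ?_⟩
  have hfP : f ∉ P := fun h => (Finset.mem_sdiff.1 (hP h)).2 hf
  have hsub : insert f P ⊆ Q := by
    intro e he
    rcases Finset.mem_insert.1 he with rfl | h
    · exact hTQ hf
    · exact (Finset.mem_sdiff.1 (hP h)).1
  have := hmin (Q \ insert f P) Finset.sdiff_subset (by
    rw [bd_sdiff _ _ hsub, bd_insert _ _ hfP, hQ, hPb, hfd]
    calc _ = (pt s + pt s) + (pt y + pt y) + (pt t + pt t) := by abel
      _ = _ := by simp [two_tors])
  rw [Finset.sdiff_eq_empty_iff_subset] at this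
  apply Finset.Subset.antisymm
  · intro e he
    rcases Finset.mem_insert.1 (this (hTQ he)) with rfl | h
    · simp
    · exact absurd he (Finset.mem_sdiff.1 (hP h)).2
  · intro e he
    rw [Finset.mem_singleton.1 he]; exact hf

end Boundary

end SubcubicTour

set_option linter.unusedSectionVars false
namespace SubcubicTour
section Weighted
variable {V ε : Type*} [Fintype V] [DecidableEq V] [DecidableEq ε]

lemma sum_symmDiff_int (w : ε → ℤ) (C D : Finset ε) :
    ∑ e ∈ symmDiff C D, w e = ∑ e ∈ C, w e + ∑ e ∈ D, w e - 2 * ∑ e ∈ C ∩ D, w e := by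
  have h1 : ∑ e ∈ symmDiff C D, w e = ∑ e ∈ C \ D, w e + ∑ e ∈ D \ C, w e :=
    Finset.sum_union disjoint_sdiff_sdiff
  have h2 := Finset.sum_inter_add_sum_sdiff C D w
  have h3 := Finset.sum_inter_add_sum_sdiff D C w
  rw [Finset.inter_comm] at h3
  linarith

lemma exists_best (a b : ε → V) (E : Finset ε) (w : ε → ℤ) (s : V) :
    ∃ t, ∃ Q ⊆ E, bd a b Q = pt s + pt t ∧
      (∀ v, ∀ Q' ⊆ E, bd a b Q' = pt s + pt v → ∑ e ∈ Q, w e ≤ ∑ e ∈ Q', w e) ∧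
      (∀ v, ∀ Q' ⊆ E, bd a b Q' = pt s + pt v → ∑ e ∈ Q', w e = ∑ e ∈ Q, w e →
        Q.card ≤ Q'.card) := by
  classical
  let A := E.powerset.filter fun Q => ∃ t, bd a b Q = pt s + pt t
  have hA : A.Nonempty := ⟨∅, by
    simp only [A, Finset.mem_filter, Finset.mem_powerset]
    exact ⟨by simp, s, by rw [bd_empty, two_tors]⟩⟩
  obtain ⟨Q₀, hQ₀, hmin₀⟩ := A.exists_min_image (fun Q => ∑ e ∈ Q, w e) hA
  let B := A.filter fun Q => ∑ e ∈ Q, w e = ∑ e ∈ Q₀, w e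
  obtain ⟨Q, hQ, hmin⟩ := B.exists_min_image Finset.card ⟨Q₀, by simp [B, hQ₀]⟩
  simp only [B, A, Finset.mem_filter, Finset.mem_powerset] at hQ hmin hmin₀
  obtain ⟨⟨hQE, t, ht⟩, hw⟩ := hQ
  refine ⟨t, Q, hQE, ht, ?_, ?_⟩
  · intro v Q' h1 h2
    rw [hw]; exact hmin₀ Q' ⟨h1, v, h2⟩
  · intro v Q' h1 h2 h3
    exact hmin Q' ⟨⟨h1, v, h2⟩, by rw [h3, hw]⟩

lemma star_step (a b : ε → V) (E : Finset ε) (w : ε → ℤ)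
    (hcons : ∀ C ⊆ E, bd a b C = 0 → 0 ≤ ∑ e ∈ C, w e)
    (hpar : ∀ C ⊆ E, bd a b C = 0 → Even (∑ e ∈ C, w e))
    (hnz : ∀ e ∈ E, w e ≠ 0) (hneg : ∃ e ∈ E, w e < 0) :
    ∃ t, (∃ f, (E.filter fun e => de a b e t = 1 ∧ w e < 0) = {f}) ∧
      ∀ C ⊆ E, bd a b C = 0 →
        0 ≤ ∑ e ∈ C, (w e - if de a b e t = 1 then (w e).sign else 0) := by
  obtain ⟨e₀, he₀, hw₀⟩ := hneg
  obtain ⟨t, Q, hQE, hQb, hmin, htie⟩ := exists_best a b E w (a e₀)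
  set s := a e₀ with hs
  have hQneg : ∑ e ∈ Q, w e < 0 := by
    have := hmin (b e₀) {e₀} (by simpa using he₀) (by rw [bd_single, de_eq])
    simp at this; omega
  have hst : s ≠ t := by
    intro h
    have := hcons Q hQE (by rw [hQb, h, two_tors])
    omega
  -- Q has no nonempty even subset
  have hQmin : ∀ D ⊆ Q, bd a b D = 0 → D = ∅ := by
    intro D hD h0
    have h1 := hcons D (hD.trans hQE) h0
    have h2 : bd a b (Q \ D) = pt s + pt t := by rw [bd_sdiff _ _ hD, h0, add_zero, hQb]
    have h3 := hmin t (Q \ D) (Finset.sdiff_subset.trans hQE) h2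
    have h4 := Finset.sum_sdiff (f := w) hD
    have h5 := htie t (Q \ D) (Finset.sdiff_subset.trans hQE) h2 (by omega)
    have h6 := Finset.card_sdiff_add_card_eq_card hD
    exact Finset.card_eq_zero.1 (by omega)
  have hstar : ∀ e ∈ E, de a b e t = 1 → (e ∈ Q ↔ w e < 0) := by
    intro e he h1
    obtain ⟨x, hxt, hx⟩ := other_end a b h1
    constructor
    · intro heQ
      have h2 := hmin x (Q.erase e) ((Finset.erase_subset _ _).trans hQE) (by
        rw [bd_erase _ _ heQ, hQb, hx]
        calc _ = pt s + pt x + (pt t + pt t) := by abel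
          _ = _ := by rw [two_tors, add_zero])
      have h3 := Finset.add_sum_erase Q w heQ
      have := hnz e he
      omega
    · intro hlt
      by_contra heQ
      have h2 := hmin x (insert e Q) (Finset.insert_subset he hQE) (by
        rw [bd_insert _ _ heQ, hQb, hx]
        calc _ = pt s + pt x + (pt t + pt t) := by abel
          _ = _ := by rw [two_tors, add_zero])
      rw [Finset.sum_insert heQ] at h2
      omega
  refine ⟨t, ?_, ?_⟩
  · obtain ⟨f, hf⟩ := join_one a b hst hQb hQmin
    refine ⟨f, ?_⟩
    rw [← hf]
    ext e
    simp only [Finset.mem_filter]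
    constructor
    · rintro ⟨h1, h2, h3⟩; exact ⟨(hstar e h1 h2).2 h3, h2⟩
    · rintro ⟨h1, h2⟩; exact ⟨hQE h1, h2, (hstar e (hQE h1) h2).1 h1⟩
  · apply nonneg_of_cyc
    intro C hCE hC
    rw [Finset.sum_sub_distrib, ← Finset.sum_filter]
    have hC0 := hcons C hCE hC.2.1
    rcases cyc_two a b hC t with h0 | ⟨e₁, h1, e₂, h2, hne, hT⟩
    · rw [h0]; simpa using hC0
    rw [hT, Finset.sum_pair hne]
    have he1 : de a b e₁ t = 1 := by
      have : e₁ ∈ C.filter fun e => de a b e t = 1 := by rw [hT]; simp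
      exact (Finset.mem_filter.1 this).2
    have he2 : de a b e₂ t = 1 := by
      have : e₂ ∈ C.filter fun e => de a b e t = 1 := by rw [hT]; simp
      exact (Finset.mem_filter.1 this).2
    have hn1 := hnz e₁ (hCE h1)
    have hn2 := hnz e₂ (hCE h2)
    rcases lt_or_gt_of_ne hn1 with hl1 | hl1
    · rw [Int.sign_eq_neg_one_of_neg hl1]
      have : (w e₂).sign ≤ 1 := by
        rcases lt_or_gt_of_ne hn2 with h | h
        · rw [Int.sign_eq_neg_one_of_neg h]; norm_num
        · rw [Int.sign_eq_one_of_pos h]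
      omega
    rw [Int.sign_eq_one_of_pos hl1]
    rcases lt_or_gt_of_ne hn2 with hl2 | hl2
    · rw [Int.sign_eq_neg_one_of_neg hl2]; omega
    rw [Int.sign_eq_one_of_pos hl2]
    -- both positive
    by_contra hcon
    have hCz : ∑ e ∈ C, w e = 0 := by
      obtain ⟨k, hk⟩ := hpar C hCE hC.2.1
      omega
    have hnotQ : ∀ e ∈ Q ∩ C, de a b e t ≠ 1 := by
      intro e he h
      rw [Finset.mem_inter] at he
      have h3 := (hstar e (hQE he.1) h).1 he.1
      have : e ∈ C.filter fun e => de a b e t = 1 := Finset.mem_filter.2 ⟨he.2, h⟩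
      rw [hT] at this
      simp only [Finset.mem_insert, Finset.mem_singleton] at this
      rcases this with rfl | rfl <;> omega
    have hQC : ∑ e ∈ Q ∩ C, w e < 0 := by
      obtain ⟨y, hyt, hy⟩ := other_end a b he2
      have h3 := hmin y (symmDiff Q (C.erase e₂)) (by
          intro e he
          rw [Finset.mem_symmDiff] at he
          rcases he with h | h
          · exact hQE h.1
          · exact hCE (Finset.mem_of_mem_erase h.1)) (by
        rw [bd_symmDiff, bd_erase _ _ h2, hQb, hC.2.1, hy]
        calc _ = pt s + pt y + (pt t + pt t) := by abel
          _ = _ := by rw [two_tors, add_zero])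
      rw [sum_symmDiff_int] at h3
      have h4 := Finset.add_sum_erase C w h2
      have h5 : Q ∩ C.erase e₂ = Q ∩ C := by
        ext e
        simp only [Finset.mem_inter, Finset.mem_erase]
        constructor
        · rintro ⟨h, _, h'⟩; exact ⟨h, h'⟩
        · rintro ⟨h, h'⟩
          refine ⟨h, ?_, h'⟩
          rintro rfl
          exact hnotQ e (Finset.mem_inter.2 ⟨h, h'⟩) he2
      rw [h5] at h3
      omega
    -- travel from t along Q outside C
    have hsplit : bd a b Q = bd a b (Q ∩ C) + bd a b (Q \ C) := by
      rw [bd, ← Finset.sum_inter_add_sum_sdiff Q C]; rfl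
    have htz : bd a b (Q ∩ C) t = 0 := by
      refine (z2 _).resolve_right fun h => ?_
      obtain ⟨e, he, h'⟩ := exists_edge a b h
      exact hnotQ e he h'
    have ht1 : bd a b (Q \ C) t = 1 := by
      have := congrFun hsplit t
      rw [hQb, Pi.add_apply, Pi.add_apply, htz, pt_self, pt_ne hst.symm] at this
      simpa using this.symm
    obtain ⟨u, hut, hu1, P, hP, hPb⟩ := exists_join a b ht1
    have hPQ : P ⊆ Q := hP.trans Finset.sdiff_subset
    rcases eq_or_ne u s with rfl | hus
    · have h3 := hQmin (Q \ P) Finset.sdiff_subset (by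
        rw [bd_sdiff _ _ hPQ, hQb, hPb, add_comm (pt t), two_tors])
      rw [Finset.sdiff_eq_empty_iff_subset] at h3
      have : Q ∩ C = ∅ := by
        ext e
        simp only [Finset.mem_inter, Finset.notMem_empty, iff_false, not_and]
        intro he
        exact (Finset.mem_sdiff.1 (hP (h3 he))).2
      rw [this] at hQC; simp at hQC
    -- u ≠ s
    have huC : bd a b (Q ∩ C) u = 1 := by
      have := congrFun hsplit u
      rw [hQb, Pi.add_apply, Pi.add_apply, hu1, pt_ne hus, pt_ne hut] at this
      rcases z2 (bd a b (Q ∩ C) u) with h | h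
      · rw [h] at this; simp at this
      · exact h
    obtain ⟨e₃, he₃, hd₃⟩ := exists_edge a b huC
    have he₃C := (Finset.mem_inter.1 he₃).2
    have hPne : P.Nonempty := by
      rw [Finset.nonempty_iff_ne_empty]; rintro rfl
      rw [bd_empty] at hPb
      exact hut (pt_inj (eq_of_add_zero hPb.symm)).symm
    have hPw : ∑ e ∈ P, w e < 0 := by
      have h3 : bd a b (Q \ P) = pt s + pt u := by
        rw [bd_sdiff _ _ hPQ, hQb, hPb]
        calc _ = pt s + pt u + (pt t + pt t) := by abel
          _ = _ := by rw [two_tors, add_zero]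
      have h4 := hmin u (Q \ P) (Finset.sdiff_subset.trans hQE) h3
      have h5 := Finset.sum_sdiff (f := w) hPQ
      by_contra hge
      have h6 := htie u (Q \ P) (Finset.sdiff_subset.trans hQE) h3 (by omega)
      have h7 := Finset.card_sdiff_add_card_eq_card hPQ
      have h8 := hPne.card_pos
      omega
    -- split C
    have hreach : u ∈ reach a b C t := by
      let D := C.filter fun e => a e ∈ reach a b C t
      have hDC : D = C := by
        apply hC.2.2 D (Finset.filter_subset _ _)
        · ext v
          by_cases hv : v ∈ reach a b C t
          · have h3 : bd a b C v = bd a b D v + bd a b (C \ D) v := by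
              rw [← Pi.add_apply, ← bd_union _ _ Finset.disjoint_sdiff,
                Finset.union_sdiff_of_subset (Finset.filter_subset _ _)]
            have h4 : bd a b (C \ D) v = 0 := by
              refine (z2 _).resolve_right fun h => ?_
              obtain ⟨e, he, h'⟩ := exists_edge a b h
              simp only [D, Finset.mem_sdiff, Finset.mem_filter, not_and] at he
              have h6 := he.2 he.1
              have h7 : b e ∉ reach a b C t := fun h => h6 ((reach_closed a b C t e he.1).2 h)
              rw [de_eq, Pi.add_apply, pt_ne (by rintro rfl; exact h6 hv),
                pt_ne (by rintro rfl; exact h7 hv)] at h'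
              simp at h'
            rw [hC.2.1, h4] at h3
            simpa using h3.symm
          · refine (z2 _).resolve_right fun h => ?_
            obtain ⟨e, he, h'⟩ := exists_edge a b h
            simp only [D, Finset.mem_filter] at he
            have h7 := (reach_closed a b C t e he.1).1 he.2
            rw [de_eq, Pi.add_apply, pt_ne (by rintro rfl; exact hv he.2),
              pt_ne (by rintro rfl; exact hv h7)] at h'
            simp at h'
        · refine ⟨e₁, Finset.mem_filter.2 ⟨h1, ?_⟩⟩
          have h3 := reach_closed a b C t e₁ h1
          by_contra h4
          have h5 : b e₁ ∉ reach a b C t := fun h => h4 (h3.2 h)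
          have h6 := self_mem_reach a b C t
          rw [de_eq, Pi.add_apply, pt_ne (by rintro rfl; exact h4 h6),
            pt_ne (by rintro rfl; exact h5 h6)] at he1
          simp at he1
      have h3 : e₃ ∈ D := by rw [hDC]; exact he₃C
      have h4 := (Finset.mem_filter.1 h3).2
      have h5 := (reach_closed a b C t e₃ he₃C).1 h4
      by_contra hu
      rw [de_eq, Pi.add_apply, pt_ne (by rintro rfl; exact hu h4),
        pt_ne (by rintro rfl; exact hu h5)] at hd₃
      simp at hd₃
    obtain ⟨C₁, hC₁, hb₁⟩ := (mem_reach a b).1 hreach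
    have hb₂ : bd a b (C \ C₁) = pt t + pt u := by
      rw [bd_sdiff _ _ hC₁, hC.2.1, zero_add, hb₁]
    have hdis : Disjoint P C := by
      rw [Finset.disjoint_left]; intro e he
      exact (Finset.mem_sdiff.1 (hP he)).2
    have fin : ∀ D ⊆ C, bd a b D = pt t + pt u → 0 ≤ ∑ e ∈ P, w e + ∑ e ∈ D, w e := by
      intro D hD hb
      have hdis' : Disjoint P D := Finset.disjoint_of_subset_right hD hdis
      rw [← Finset.sum_union hdis']
      apply hcons
      · exact Finset.union_subset (hPQ.trans hQE) (hD.trans hCE)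
      · rw [bd_union _ _ hdis', hPb, hb, two_tors]
    have f1 := fin C₁ hC₁ hb₁
    have f2 := fin (C \ C₁) Finset.sdiff_subset hb₂
    have f3 := Finset.sum_sdiff (f := w) hC₁
    omega

end Weighted
end SubcubicTour

set_option linter.unusedSectionVars false
namespace SubcubicTour
section Weighted
variable {V ε : Type*} [Fintype V] [DecidableEq V] [DecidableEq ε]

/-- edges of `E` leaving `S` -/
def cut (a b : ε → V) (E : Finset ε) (S : Finset V) : Finset ε :=
  E.filter fun e => ¬ (a e ∈ S ↔ b e ∈ S)

lemma de_one_iff (a b : ε → V) (e : ε) (t : V) :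
    de a b e t = 1 ↔ ¬ (a e ∈ ({t} : Finset V) ↔ b e ∈ ({t} : Finset V)) := by
  simp only [Finset.mem_singleton]
  rw [de_eq, Pi.add_apply]
  by_cases h1 : a e = t <;> by_cases h2 : b e = t
  · simp [h1, h2, pt_self]
  · simp [h1, h2, pt_self, pt_ne (Ne.symm h2)]
  · simp [h1, h2, pt_self, pt_ne (Ne.symm h1)]
  · simp [h1, h2, pt_ne (Ne.symm h1), pt_ne (Ne.symm h2)]

lemma cut_singleton (a b : ε → V) (E : Finset ε) (t : V) :
    cut a b E {t} = E.filter fun e => de a b e t = 1 := by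
  ext e; simp only [cut, Finset.mem_filter, de_one_iff]

/-- parity of a cut -/
lemma cut_parity (a b : ε → V) (C : Finset ε) (S : Finset V) :
    ((cut a b C S).card : ZMod 2) = ∑ v ∈ S, bd a b C v := by
  have : ∑ v ∈ S, bd a b C v = ∑ e ∈ C, ∑ v ∈ S, de a b e v := by
    rw [Finset.sum_comm]; refine Finset.sum_congr rfl fun v _ => ?_
    simp [bd]
  rw [this, cut, Finset.card_filter, Nat.cast_sum]
  refine Finset.sum_congr rfl fun e _ => ?_
  simp only [de_eq, Pi.add_apply, Finset.sum_add_distrib, sum_pt]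
  by_cases h1 : a e ∈ S <;> by_cases h2 : b e ∈ S <;> simp [h1, h2]
  decide

lemma sum_sign_even (s : Finset ε) (w : ε → ℤ) (h : ∀ e ∈ s, w e ≠ 0) (hs : Even s.card) :
    Even (∑ e ∈ s, (w e).sign) := by
  have : ∀ e ∈ s, (((w e).sign : ℤ) : ZMod 2) = 1 := by
    intro e he
    rcases lt_or_gt_of_ne (h e he) with h | h
    · rw [Int.sign_eq_neg_one_of_neg h]; decide
    · rw [Int.sign_eq_one_of_pos h]; decide
  rw [← ZMod.intCast_eq_zero_iff_even, Int.cast_sum, Finset.sum_congr rfl this]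
  simp only [Finset.sum_const, nsmul_eq_mul, mul_one]
  exact (ZMod.natCast_eq_zero_iff_even).2 hs

theorem weighted (N : ℕ) : ∀ (a b : ε → V) (E F : Finset ε) (w g : ε → ℤ),
    E.card + ∑ e ∈ E, (w e).natAbs ≤ N →
    (∀ C ⊆ E, bd a b C = 0 → 0 ≤ ∑ e ∈ C, w e) →
    (∀ C ⊆ E, bd a b C = 0 → Even (∑ e ∈ C, w e)) →
    (∀ e ∈ E, e ∈ F → w e ≤ 0) → (∀ e ∈ E, e ∉ F → 0 ≤ w e) →
    (∀ e ∈ E, e ∉ F → 0 ≤ g e) →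
    (∀ S : Finset V, (∃ f, cut a b E S ∩ F = {f}) → 0 ≤ ∑ e ∈ cut a b E S, g e) →
    0 ≤ ∑ e ∈ E, |w e| * g e := by
  induction N with
  | zero =>
    intro a b E F w g hN _ _ _ _ _ _
    have : E = ∅ := Finset.card_eq_zero.1 (by omega)
    simp [this]
  | succ N ih =>
    intro a b E F w g hN hcons hpar hF1 hF2 hg hcut
    by_cases hz : ∃ e ∈ E, w e = 0
    · -- contract a zero edge
      obtain ⟨e₀, he₀, hw₀⟩ := hz
      let φ : V → V := fun v => if v = b e₀ then a e₀ else v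
      have hde : ∀ C : Finset ε, bd (φ ∘ a) (φ ∘ b) C =
          fun v => ∑ u ∈ Finset.univ.filter (fun u => φ u = v), bd a b C u := by
        intro C
        ext v
        have h1 : ∀ e, de (φ ∘ a) (φ ∘ b) e v =
            ∑ u ∈ Finset.univ.filter (fun u => φ u = v), de a b e u := by
          intro e
          simp only [de_eq, Pi.add_apply, Finset.sum_add_distrib, sum_pt, Finset.mem_filter,
            Finset.mem_univ, true_and, Function.comp]
          simp only [pt, Pi.single_apply, eq_comm]
        simp only [bd, Finset.sum_apply]
        rw [Finset.sum_comm]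
        exact Finset.sum_congr rfl fun e _ => h1 e
      have hcontr : ∀ C ⊆ E.erase e₀, bd (φ ∘ a) (φ ∘ b) C = 0 →
          ∃ C' ⊆ E, bd a b C' = 0 ∧ ∑ e ∈ C', w e = ∑ e ∈ C, w e := by
        intro C hC h0
        have hCE : C ⊆ E := hC.trans (Finset.erase_subset _ _)
        have heC : e₀ ∉ C := fun h => by simpa using hC h
        have hfib : ∀ v, v ≠ a e₀ → v ≠ b e₀ → bd a b C v = 0 := by
          intro v hva hvb
          have h1 := congrFun h0 v
          rw [hde] at h1
          simp only [Pi.zero_apply] at h1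
          rw [← h1]
          symm
          apply Finset.sum_eq_single_of_mem
          · simp [φ, hvb]
          · intro u hu hne
            exfalso
            simp only [Finset.mem_filter, Finset.mem_univ, true_and, φ] at hu
            split_ifs at hu
            · exact hva hu.symm
            · exact hne hu
        by_cases hl : a e₀ = b e₀
        · refine ⟨C, hCE, ?_, rfl⟩
          have hid : φ = id := by
            funext v; simp only [φ, id]; split_ifs with h
            · rw [h, hl]
            · rfl
          rw [hid] at h0; exact h0
        have hab : bd a b C (a e₀) + bd a b C (b e₀) = 0 := by
          have h1 := congrFun h0 (a e₀)
          rw [hde] at h1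
          simp only [Pi.zero_apply] at h1
          rw [← h1, ← Finset.sum_pair hl]
          apply Finset.sum_congr _ fun _ _ => rfl
          ext u
          simp only [Finset.mem_insert, Finset.mem_singleton, Finset.mem_filter, Finset.mem_univ,
            true_and, φ]
          by_cases hu : u = b e₀ <;> simp [hu]
        have hab' : bd a b C (a e₀) = bd a b C (b e₀) := by
          revert hab; generalize bd a b C (a e₀) = p; generalize bd a b C (b e₀) = q
          revert p q; decide
        rcases z2 (bd a b C (a e₀)) with h | h
        · refine ⟨C, hCE, ?_, rfl⟩
          ext v
          by_cases h1 : v = a e₀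
          · rw [h1, h]; rfl
          by_cases h2 : v = b e₀
          · rw [h2, ← hab', h]; rfl
          exact hfib v h1 h2
        · refine ⟨insert e₀ C, Finset.insert_subset he₀ hCE, ?_, ?_⟩
          · rw [bd_insert _ _ heC, de_eq]
            ext v
            simp only [Pi.add_apply, Pi.zero_apply]
            by_cases h1 : v = a e₀
            · rw [h1, h, pt_self, pt_ne hl]; decide
            by_cases h2 : v = b e₀
            · rw [h2, ← hab', h, pt_self, pt_ne (Ne.symm hl)]; decide
            rw [hfib v h1 h2, pt_ne h1, pt_ne h2]; simp
          · rw [Finset.sum_insert heC, hw₀, zero_add]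
      have hlt := Finset.card_erase_lt_of_mem he₀
      have hsum := Finset.add_sum_erase E (fun e => (w e).natAbs) he₀
      have hfin := ih (φ ∘ a) (φ ∘ b) (E.erase e₀) F w g (by omega)
        (by
          intro C hC h0
          obtain ⟨C', h1, h2, h3⟩ := hcontr C hC h0
          rw [← h3]; exact hcons C' h1 h2)
        (by
          intro C hC h0
          obtain ⟨C', h1, h2, h3⟩ := hcontr C hC h0
          rw [← h3]; exact hpar C' h1 h2)
        (fun e he => hF1 e (Finset.mem_of_mem_erase he))
        (fun e he => hF2 e (Finset.mem_of_mem_erase he))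
        (fun e he => hg e (Finset.mem_of_mem_erase he))
        (by
          intro S hS
          have hS' : cut (φ ∘ a) (φ ∘ b) (E.erase e₀) S =
              cut a b E (Finset.univ.filter fun v => φ v ∈ S) := by
            ext e
            simp only [cut, Finset.mem_filter, Finset.mem_erase, Finset.mem_univ, true_and,
              Function.comp]
            constructor
            · rintro ⟨⟨_, h1⟩, h2⟩; exact ⟨h1, h2⟩
            · rintro ⟨h1, h2⟩
              refine ⟨⟨?_, h1⟩, h2⟩
              rintro rfl
              apply h2
              simp [φ]
          rw [hS'] at hS ⊢
          exact hcut _ hS)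
      rw [← Finset.add_sum_erase E _ he₀, hw₀]
      simpa using hfin
    · push Not at hz
      by_cases hneg : ∃ e ∈ E, w e < 0
      · obtain ⟨t, ⟨f, hf⟩, hnew⟩ := star_step a b E w hcons hpar hz hneg
        have hT : (∃ f, cut a b E {t} ∩ F = {f}) := by
          refine ⟨f, ?_⟩
          rw [← hf, cut_singleton]
          ext e
          simp only [Finset.mem_inter, Finset.mem_filter]
          constructor
          · rintro ⟨⟨h1, h2⟩, h3⟩
            exact ⟨h1, h2, lt_of_le_of_ne (hF1 e h1 h3) (hz e h1)⟩
          · rintro ⟨h1, h2, h3⟩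
            refine ⟨⟨h1, h2⟩, ?_⟩
            by_contra h4
            have := hF2 e h1 h4
            omega
        have hgT := hcut {t} hT
        rw [cut_singleton] at hgT
        let w' : ε → ℤ := fun e => w e - if de a b e t = 1 then (w e).sign else 0
        have hw' : ∀ e ∈ E, (w' e).natAbs + (if de a b e t = 1 then 1 else 0) = (w e).natAbs ∧
            (w e < 0 → w' e ≤ 0) ∧ (0 < w e → 0 ≤ w' e) ∧
            |w e| = |w' e| + (if de a b e t = 1 then 1 else 0) := by
          intro e he
          simp only [w']
          have hn := hz e he
          by_cases hd : de a b e t = 1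
          · simp only [hd, if_true]
            rcases lt_or_gt_of_ne hn with h | h
            · rw [Int.sign_eq_neg_one_of_neg h, abs_of_neg h, abs_of_nonpos (by omega)]
              omega
            · rw [Int.sign_eq_one_of_pos h, abs_of_pos h, abs_of_nonneg (by omega)]
              omega
          · simp only [hd, if_false]
            refine ⟨by simp, by intro h; omega, by intro h; omega, by simp⟩
        have hfin := ih a b E F w' g (by
            have h1 : ∑ e ∈ E, (w' e).natAbs + ∑ e ∈ E, (if de a b e t = 1 then 1 else 0) =
                ∑ e ∈ E, (w e).natAbs := by
              rw [← Finset.sum_add_distrib]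
              exact Finset.sum_congr rfl fun e he => (hw' e he).1
            have h2 : 0 < ∑ e ∈ E, (if de a b e t = 1 then 1 else 0) := by
              have hfm : f ∈ E.filter fun e => de a b e t = 1 ∧ w e < 0 := by rw [hf]; simp
              rw [Finset.mem_filter] at hfm
              apply Finset.sum_pos' (fun _ _ => by split_ifs <;> simp)
              exact ⟨f, hfm.1, by simp [hfm.2.1]⟩
            omega)
          hnew
          (by
            intro C hC h0
            simp only [w']
            rw [Finset.sum_sub_distrib, ← Finset.sum_filter]
            apply Even.sub (hpar C hC h0)
            apply sum_sign_even
            · intro e he; exact hz e (hC (Finset.mem_filter.1 he).1)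
            · rw [← ZMod.natCast_eq_zero_iff_even, ← cut_singleton, cut_parity, h0]
              simp)
          (fun e he h => (hw' e he).2.1 (lt_of_le_of_ne (hF1 e he h) (hz e he)))
          (fun e he h => (hw' e he).2.2.1 (lt_of_le_of_ne (hF2 e he h) (Ne.symm (hz e he))))
          hg hcut
        have : ∑ e ∈ E, |w e| * g e = ∑ e ∈ E, |w' e| * g e +
            ∑ e ∈ E.filter (fun e => de a b e t = 1), g e := by
          rw [Finset.sum_filter, ← Finset.sum_add_distrib]
          refine Finset.sum_congr rfl fun e he => ?_
          rw [(hw' e he).2.2.2]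
          split_ifs <;> ring
        omega
      · push Not at hneg
        apply Finset.sum_nonneg
        intro e he
        have hp : 0 < w e := lt_of_le_of_ne (hneg e he) (Ne.symm (hz e he))
        apply mul_nonneg (abs_nonneg _)
        apply hg e he
        intro h
        have := hF1 e he h
        omega

/-- In a bridgeless graph, there is a `T`-join (`T` the odd vertices) of weight at most a third. -/
theorem third_join (a b : ε → V) (E : Finset ε) (w : ε → ℤ)
    (hbr : ∀ S : Finset V, (cut a b E S).card ≠ 1) :
    ∃ J ⊆ E, bd a b J = bd a b E ∧ 3 * ∑ e ∈ J, w e ≤ ∑ e ∈ E, w e := by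
  classical
  let A := E.powerset.filter fun J => bd a b J = bd a b E
  obtain ⟨J, hJ, hmin⟩ := A.exists_min_image (fun J => ∑ e ∈ J, w e)
    ⟨E, by simp [A]⟩
  simp only [A, Finset.mem_filter, Finset.mem_powerset] at hJ hmin
  obtain ⟨hJE, hJb⟩ := hJ
  refine ⟨J, hJE, hJb, ?_⟩
  let w' : ε → ℤ := fun e => if e ∈ J then -w e else w e
  let F := E.filter fun e => w' e < 0
  let g : ε → ℤ := fun e => (if e ∈ J then 2 else 1) * (if e ∈ F then -1 else 1)
  have hsum' : ∀ C : Finset ε, ∑ e ∈ C, w' e = ∑ e ∈ C, w e - 2 * ∑ e ∈ J ∩ C, w e := by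
    intro C
    have : ∑ e ∈ J ∩ C, w e = ∑ e ∈ C, if e ∈ J then w e else 0 := by
      rw [← Finset.sum_filter, Finset.filter_mem_eq_inter, Finset.inter_comm]
    rw [this, Finset.mul_sum, ← Finset.sum_sub_distrib]
    refine Finset.sum_congr rfl fun e _ => ?_
    simp only [w']; split_ifs <;> ring
  have hcons : ∀ C ⊆ E, bd a b C = 0 → 0 ≤ ∑ e ∈ C, w' e := by
    intro C hC h0
    have h1 := hmin (symmDiff J C) ⟨by
      intro e he
      rw [Finset.mem_symmDiff] at he
      rcases he with h | h
      · exact hJE h.1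
      · exact hC h.1, by rw [bd_symmDiff, h0, add_zero, hJb]⟩
    rw [sum_symmDiff_int] at h1
    rw [hsum']; omega
  have hW := weighted _ a b E F (fun e => 2 * w' e) g le_rfl
    (by intro C hC h0; rw [← Finset.mul_sum]; have := hcons C hC h0; omega)
    (by intro C hC h0; rw [← Finset.mul_sum]; exact even_two_mul _)
    (by intro e he h; simp only [F, Finset.mem_filter] at h; omega)
    (by intro e he h; simp only [F, Finset.mem_filter] at h; simp only [he, true_and] at h; omega)
    (by intro e he h; simp only [g, h, if_false]; split_ifs <;> norm_num)
    (by
      rintro S ⟨f, hf⟩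
      set D := cut a b E S with hD
      have hfD : f ∈ D := by
        have : f ∈ D ∩ F := by rw [hf]; simp
        exact (Finset.mem_inter.1 this).1
      have hfF : f ∈ F := by
        have : f ∈ D ∩ F := by rw [hf]; simp
        exact (Finset.mem_inter.1 this).2
      have hoth : ∀ e ∈ D.erase f, e ∉ F := by
        intro e he hF
        have : e ∈ D ∩ F := Finset.mem_inter.2 ⟨Finset.mem_of_mem_erase he, hF⟩
        rw [hf, Finset.mem_singleton] at this
        exact (Finset.mem_erase.1 he).1 this
      have hge1 : ∀ e ∈ D.erase f, 1 ≤ g e := by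
        intro e he
        simp only [g, hoth e he, if_false]; split_ifs <;> norm_num
      have hcard : 2 ≤ D.card := by
        have h1 := hbr S
        have h2 : 0 < D.card := Finset.card_pos.2 ⟨f, hfD⟩
        rw [← hD] at h1; omega
      have hce := Finset.card_erase_of_mem hfD
      have hlow : ((D.erase f).card : ℤ) ≤ ∑ e ∈ D.erase f, g e := by
        have := Finset.card_nsmul_le_sum (D.erase f) g 1 hge1
        simpa using this
      rw [← Finset.add_sum_erase _ _ hfD]
      by_cases hfJ : f ∈ J
      · have hgf : g f = -2 := by simp [g, hfJ, hfF]
        rw [hgf]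
        by_cases hJ2 : ∃ e ∈ D.erase f, e ∈ J
        · obtain ⟨e, he, heJ⟩ := hJ2
          have h1 : g e = 2 := by simp [g, heJ, hoth e he]
          have h2 := Finset.single_le_sum (f := g)
            (fun e he => by have := hge1 e he; omega) he
          omega
        · have hDJ : cut a b J S = {f} := by
            ext e
            simp only [Finset.mem_singleton]
            constructor
            · intro h
              by_contra hne
              rw [cut, Finset.mem_filter] at h
              exact hJ2 ⟨e, Finset.mem_erase.2 ⟨hne, by
                rw [hD, cut, Finset.mem_filter]; exact ⟨hJE h.1, h.2⟩⟩, h.1⟩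
            · rintro rfl
              rw [hD, cut, Finset.mem_filter] at hfD
              rw [cut, Finset.mem_filter]; exact ⟨hfJ, hfD.2⟩
          have hp : (D.card : ZMod 2) = 1 := by
            rw [hD, cut_parity, ← hJb, ← cut_parity, hDJ]; simp
          have hne2 : D.card ≠ 2 := by
            intro h; rw [h] at hp; revert hp; decide
          omega
      · have hgf : g f = -1 := by simp [g, hfJ, hfF]
        rw [hgf]; omega)
  have : ∑ e ∈ E, |2 * w' e| * g e = 2 * (∑ e ∈ E, w e - 3 * ∑ e ∈ J, w e) := by
    have h1 : ∑ e ∈ J, w e = ∑ e ∈ E, if e ∈ J then w e else 0 := by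
      rw [← Finset.sum_filter, Finset.filter_mem_eq_inter, Finset.inter_eq_right.2 hJE]
    rw [h1, Finset.mul_sum, ← Finset.sum_sub_distrib, Finset.mul_sum]
    refine Finset.sum_congr rfl fun e he => ?_
    have h2 : |2 * w' e| * (if e ∈ F then -1 else 1) = 2 * w' e := by
      by_cases h : w' e < 0
      · have : e ∈ F := Finset.mem_filter.2 ⟨he, h⟩
        rw [if_pos this, abs_of_neg (by omega)]; ring
      · have : e ∉ F := fun h' => h (Finset.mem_filter.1 h').2
        rw [if_neg this, abs_of_nonneg (by omega)]; ring
    have h3 : |2 * w' e| * g e = (if e ∈ J then 2 else 1) * (2 * w' e) := by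
      simp only [g]; rw [mul_left_comm, h2]
    rw [h3]; simp only [w']
    split_ifs <;> ring
  rw [this] at hW
  omega

end Weighted
end SubcubicTour

set_option linter.unusedSectionVars false
namespace SubcubicTour
section Euler
variable {V ε : Type*} [Fintype V] [DecidableEq V] [DecidableEq ε]

lemma adj_of_de {G : SimpleGraph V} (a b : ε → V) {e : ε} (hadj : G.Adj (a e) (b e)) {x : V}
    (h : de a b e x = 1) : ∃ y, G.Adj x y ∧ de a b e = pt x + pt y ∧
      ∀ z, (z = a e ∨ z = b e) → (z = x ∨ z = y) := by
  by_cases h1 : a e = x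
  · refine ⟨b e, h1 ▸ hadj, by rw [de_eq, h1], ?_⟩
    rintro z (rfl | rfl)
    · exact Or.inl h1
    · exact Or.inr rfl
  · by_cases h2 : b e = x
    · refine ⟨a e, h2 ▸ hadj.symm, by rw [de_eq, h2, add_comm], ?_⟩
      rintro z (rfl | rfl)
      · exact Or.inr rfl
      · exact Or.inl h2
    · rw [de_eq, Pi.add_apply, pt_ne (Ne.symm h1), pt_ne (Ne.symm h2)] at h
      simp at h

lemma walk_of_join (G : SimpleGraph V) (a b : ε → V) (z : V) (n : ℕ) :
    ∀ (H : Finset ε) (x : V), H.card = n → (∀ e ∈ H, G.Adj (a e) (b e)) →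
    bd a b H = pt x + pt z →
    ∃ U ⊆ H, bd a b U = pt x + pt z ∧ ∃ p : G.Walk x z, p.length = U.card ∧
      ∀ e ∈ U, a e ∈ p.support ∧ b e ∈ p.support := by
  induction n with
  | zero =>
    intro H x hn _ hb
    have : H = ∅ := Finset.card_eq_zero.1 hn
    subst this
    have hxz : x = z := by
      rw [bd_empty] at hb; exact pt_inj (eq_of_add_zero hb.symm)
    subst hxz
    exact ⟨∅, by simp, hb, Walk.nil, by simp, by simp⟩
  | succ n ih =>
    intro H x hn hadj hb
    rcases eq_or_ne x z with rfl | hxz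
    · exact ⟨∅, by simp, by rw [bd_empty, two_tors], Walk.nil, by simp, by simp⟩
    have hx1 : bd a b H x = 1 := by rw [hb]; simp [pt_self, pt_ne hxz]
    obtain ⟨e, he, hde⟩ := exists_edge a b hx1
    obtain ⟨y, hxy, hd, hz⟩ := adj_of_de a b (hadj e he) hde
    obtain ⟨U, hU, hUb, p, hp, hs⟩ := ih (H.erase e) y
      (by rw [Finset.card_erase_of_mem he]; omega)
      (fun e' he' => hadj e' (Finset.mem_of_mem_erase he'))
      (by
        rw [bd_erase _ _ he, hb, hd]
        calc _ = pt y + pt z + (pt x + pt x) := by abel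
          _ = _ := by rw [two_tors, add_zero])
    have heU : e ∉ U := fun h => by simpa using hU h
    refine ⟨insert e U, Finset.insert_subset he (hU.trans (Finset.erase_subset _ _)), ?_,
      Walk.cons hxy p, ?_, ?_⟩
    · rw [bd_insert _ _ heU, hUb, hd]
      calc _ = pt x + pt z + (pt y + pt y) := by abel
        _ = _ := by rw [two_tors, add_zero]
    · rw [Walk.length_cons, Finset.card_insert_of_notMem heU, hp]
    · intro e' he'
      have hy : y ∈ p.support := p.start_mem_support
      rw [Walk.support_cons]
      rcases Finset.mem_insert.1 he' with rfl | h
      · constructor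
        · rcases hz _ (Or.inl rfl) with h | h
          · rw [h]; simp
          · rw [h]; simp [hy]
        · rcases hz _ (Or.inr rfl) with h | h
          · rw [h]; simp
          · rw [h]; simp [hy]
      · exact ⟨List.mem_cons_of_mem _ (hs e' h).1, List.mem_cons_of_mem _ (hs e' h).2⟩

lemma closed_of_even (G : SimpleGraph V) (a b : ε → V) (H : Finset ε) {x : V}
    (hadj : ∀ e ∈ H, G.Adj (a e) (b e)) (hb : bd a b H = 0) {e : ε} (he : e ∈ H)
    (hx : de a b e x = 1) :
    ∃ U ⊆ H, U.Nonempty ∧ bd a b U = 0 ∧ ∃ p : G.Walk x x, p.length = U.card ∧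
      ∀ e ∈ U, a e ∈ p.support ∧ b e ∈ p.support := by
  obtain ⟨y, hxy, hd, hz⟩ := adj_of_de a b (hadj e he) hx
  obtain ⟨U, hU, hUb, p, hp, hs⟩ := walk_of_join G a b x _ (H.erase e) y rfl
    (fun e' he' => hadj e' (Finset.mem_of_mem_erase he'))
    (by rw [bd_erase _ _ he, hb, hd, zero_add, add_comm])
  have heU : e ∉ U := fun h => by simpa using hU h
  refine ⟨insert e U, Finset.insert_subset he (hU.trans (Finset.erase_subset _ _)), ⟨e, by simp⟩,
    ?_, Walk.cons hxy p, ?_, ?_⟩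
  · rw [bd_insert _ _ heU, hUb, hd, add_comm (pt x), two_tors]
  · rw [Walk.length_cons, Finset.card_insert_of_notMem heU, hp]
  · intro e' he'
    have hy : y ∈ p.support := p.start_mem_support
    rw [Walk.support_cons]
    rcases Finset.mem_insert.1 he' with rfl | h
    · constructor
      · rcases hz _ (Or.inl rfl) with h | h
        · rw [h]; simp
        · rw [h]; simp [hy]
      · rcases hz _ (Or.inr rfl) with h | h
        · rw [h]; simp
        · rw [h]; simp [hy]
    · exact ⟨List.mem_cons_of_mem _ (hs e' h).1, List.mem_cons_of_mem _ (hs e' h).2⟩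

/-- Euler: a connected even multigraph carried by `G` gives a spanning closed walk. -/
theorem euler (G : SimpleGraph V) (a b : ε → V) (H : Finset ε) (r : V)
    (hadj : ∀ e ∈ H, G.Adj (a e) (b e)) (hb : bd a b H = 0)
    (hconn : ∀ X : Finset V, r ∈ X → (∀ e ∈ H, (a e ∈ X ↔ b e ∈ X)) → ∀ v, v ∈ X) :
    ∃ p : G.Walk r r, (∀ u, u ∈ p.support) ∧ p.length ≤ H.card := by
  classical
  let A := H.powerset.filter fun U => bd a b U = 0 ∧ ∃ p : G.Walk r r, p.length = U.card ∧
      ∀ e ∈ U, a e ∈ p.support ∧ b e ∈ p.support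
  have hA : A.Nonempty := ⟨∅, by
    simp only [A, Finset.mem_filter]
    exact ⟨by simp, bd_empty _ _, Walk.nil, by simp, by simp⟩⟩
  obtain ⟨U, hU, hmax⟩ := A.exists_max_image Finset.card hA
  simp only [A, Finset.mem_filter, Finset.mem_powerset] at hU hmax
  obtain ⟨hUH, hUb, p, hp, hs⟩ := hU
  refine ⟨p, ?_, by rw [hp]; exact Finset.card_le_card hUH⟩
  have key : ∀ e ∈ H, ∀ x, x ∈ p.support → de a b e x = 1 → e ∈ U := by
    intro e he x hx hd
    by_contra heU
    obtain ⟨U', hU', hne, hb', q, hq, hs'⟩ := closed_of_even G a b (H \ U) (x := x)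
      (fun e he => hadj e (Finset.mem_sdiff.1 he).1) (by rw [bd_sdiff _ _ hUH, hb, hUb, add_zero])
      (Finset.mem_sdiff.2 ⟨he, heU⟩) hd
    have hdis : Disjoint U U' := by
      rw [Finset.disjoint_right]; intro e he; exact (Finset.mem_sdiff.1 (hU' he)).2
    have hspec := p.take_spec hx
    have hlen : (p.takeUntil x hx).length + (p.dropUntil x hx).length = p.length := by
      rw [← Walk.length_append, hspec]
    have hsup : ∀ v, v ∈ p.support → v ∈ (p.takeUntil x hx).support ∨
        v ∈ (p.dropUntil x hx).support := by
      intro v hv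
      rw [← hspec, Walk.mem_support_append_iff] at hv; exact hv
    have hsup2 : ∀ v, (v ∈ p.support ∨ v ∈ q.support) →
        v ∈ ((p.takeUntil x hx).append (q.append (p.dropUntil x hx))).support := by
      intro v hv
      rw [Walk.mem_support_append_iff, Walk.mem_support_append_iff]
      rcases hv with h | h
      · rcases hsup v h with h | h
        · exact Or.inl h
        · exact Or.inr (Or.inr h)
      · exact Or.inr (Or.inl h)
    have := hmax (U ∪ U') ⟨Finset.union_subset hUH (hU'.trans Finset.sdiff_subset),
      by rw [bd_union _ _ hdis, hUb, hb', add_zero],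
      (p.takeUntil x hx).append (q.append (p.dropUntil x hx)), by
        rw [Walk.length_append, Walk.length_append, Finset.card_union_of_disjoint hdis]; omega, by
        intro e he
        rcases Finset.mem_union.1 he with h | h
        · exact ⟨hsup2 _ (Or.inl (hs e h).1), hsup2 _ (Or.inl (hs e h).2)⟩
        · exact ⟨hsup2 _ (Or.inr (hs' e h).1), hsup2 _ (Or.inr (hs' e h).2)⟩⟩
    rw [Finset.card_union_of_disjoint hdis] at this
    have := hne.card_pos
    omega
  intro u
  have := hconn p.support.toFinset (by simp) (by
    intro e he
    simp only [List.mem_toFinset]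
    have hne : a e ≠ b e := (hadj e he).ne
    constructor
    · intro h
      exact (hs e (key e he _ h (by rw [de_eq, Pi.add_apply, pt_self, pt_ne hne, add_zero]))).2
    · intro h
      exact (hs e (key e he _ h
        (by rw [de_eq, Pi.add_apply, pt_self, pt_ne hne.symm, zero_add]))).1) u
  simpa using this

end Euler

section DFS
variable {V : Type*} [Fintype V] [DecidableEq V]

/-- rooted spanning tree given by parent function and depth -/
structure Tr (G : SimpleGraph V) (r : V) (f : V → V) (d : V → ℕ) : Prop where
  root : d r = 0
  froot : f r = r
  par : ∀ v, v ≠ r → G.Adj v (f v) ∧ d v = d (f v) + 1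

/-- `v` is an ancestor of `x` -/
def Anc (f : V → V) (x v : V) : Prop := ∃ k, f^[k] x = v

lemma Anc.refl (f : V → V) (x : V) : Anc f x x := ⟨0, rfl⟩

lemma Anc.step {f : V → V} {x v : V} (h : Anc f (f x) v) : Anc f x v := by
  obtain ⟨k, hk⟩ := h
  exact ⟨k + 1, by rwa [Function.iterate_succ_apply]⟩

lemma Anc.of_ne {f : V → V} {x v : V} (h : Anc f x v) (hne : x ≠ v) : Anc f (f x) v := by
  obtain ⟨k, hk⟩ := h
  cases k with
  | zero => exact absurd hk hne
  | succ k => exact ⟨k, by rwa [Function.iterate_succ_apply] at hk⟩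

/-- the child of `v` towards `x` -/
lemma Anc.child {f : V → V} {x v : V} (h : Anc f x v) (hne : x ≠ v) :
    ∃ c, f c = v ∧ c ≠ v ∧ Anc f x c := by
  classical
  have hk := Nat.find_spec h
  cases hn : Nat.find h with
  | zero => rw [hn] at hk; exact absurd hk hne
  | succ k =>
    rw [hn, Function.iterate_succ_apply'] at hk
    refine ⟨f^[k] x, hk, ?_, k, rfl⟩
    intro h2
    exact Nat.find_min h (m := k) (by omega) h2

variable {G : SimpleGraph V} {r : V} {f : V → V} {d : V → ℕ}

lemma Tr.eq_root (h : Tr G r f d) {v : V} (hv : d v = 0) : v = r := by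
  by_contra hne
  have := (h.par v hne).2
  omega

lemma Tr.depth_iter (h : Tr G r f d) (x : V) (k : ℕ) : d (f^[k] x) = d x - k := by
  induction k with
  | zero => rfl
  | succ k ih =>
    rw [Function.iterate_succ_apply']
    rcases eq_or_ne (f^[k] x) r with h1 | h1
    · rw [h1, h.froot, h.root]; rw [h1, h.root] at ih; omega
    · have := (h.par _ h1).2; omega

lemma Tr.anc_root (h : Tr G r f d) (x : V) : Anc f x r :=
  ⟨d x, h.eq_root (by rw [h.depth_iter]; omega)⟩

lemma Tr.depth_lt (h : Tr G r f d) (x : V) : d x < Fintype.card V := by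
  have hinj : Function.Injective (fun i : Fin (d x + 1) => f^[i.1] x) := by
    intro i j hij
    have h1 := h.depth_iter x i.1
    have h2 := h.depth_iter x j.1
    simp only at hij
    rw [hij] at h1
    ext
    have := i.2; have := j.2
    omega
  have := Fintype.card_le_of_injective _ hinj
  simp at this
  omega

lemma Tr.anc_depth (h : Tr G r f d) {x v : V} (ha : Anc f x v) (hne : x ≠ v) : d v < d x := by
  obtain ⟨c, hc, hcv, k, hk⟩ := ha.child hne
  have h1 := h.depth_iter x k
  rw [hk] at h1
  have hcr : c ≠ r := by rintro rfl; rw [h.froot] at hc; exact hcv hc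
  have := (h.par c hcr).2
  rw [hc] at this
  omega

lemma Tr.exists (hG : G.Connected) (r : V) : ∃ f d, Tr G r f d := by
  have hstep : ∀ v, ∃ u, v ≠ r → G.Adj v u ∧ G.dist r v = G.dist r u + 1 := by
    intro v
    by_cases hv : v = r
    · exact ⟨v, fun h => absurd hv h⟩
    obtain ⟨p, hp⟩ := hG.exists_walk_length_eq_dist v r
    cases p with
    | nil => exact absurd rfl hv
    | @cons _ u _ hadj q =>
      refine ⟨u, fun _ => ⟨hadj, ?_⟩⟩
      rw [Walk.length_cons] at hp
      have h1 := dist_le q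
      have h2 : G.dist v r ≤ G.dist v u + G.dist u r := hG.dist_triangle
      have h3 : G.dist v u = 1 := dist_eq_one_iff_adj.2 hadj
      rw [dist_comm (u := r) (v := v), dist_comm (u := r) (v := u)]
      omega
  choose u hu using hstep
  refine ⟨fun v => if v = r then r else u v, G.dist r, by simp, by simp, ?_⟩
  intro v hv
  simpa [hv] using hu v hv

/-- exchange step -/
lemma Tr.exchange (h : Tr G r f d) {u v : V} (hadj : G.Adj u v) (h1 : ¬ Anc f u v)
    (h2 : ¬ Anc f v u) (hd : d v ≤ d u) : ∃ f' d', Tr G r f' d' ∧ ∑ x, d x < ∑ x, d' x := by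
  classical
  have hvr : v ≠ r := by rintro rfl; exact h1 (h.anc_root u)
  refine ⟨Function.update f v u, fun x => if Anc f x v then d x + (d u + 1 - d v) else d x,
    ⟨?_, ?_, ?_⟩, ?_⟩
  · have : ¬ Anc f r v := by
      intro ha
      by_cases hrv : r = v
      · exact hvr hrv.symm
      · have := h.anc_depth ha hrv; rw [h.root] at this; omega
    simp [this, h.root]
  · rw [Function.update_of_ne (Ne.symm hvr), h.froot]
  · intro x hx
    by_cases hxv : x = v
    · subst hxv
      simp only [Function.update_self, Anc.refl, if_true, h1, if_false]
      exact ⟨hadj.symm, by omega⟩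
    · rw [Function.update_of_ne hxv]
      refine ⟨(h.par x hx).1, ?_⟩
      have h3 : Anc f x v ↔ Anc f (f x) v := ⟨fun h => h.of_ne hxv, fun h => h.step⟩
      have h4 := (h.par x hx).2
      by_cases h5 : Anc f x v
      · simp only [h5, h3.1 h5, if_true]; omega
      · have h6 : ¬ Anc f (f x) v := fun h => h5 (h3.2 h)
        simp only [h5, h6, if_false]; omega
  · apply Finset.sum_lt_sum
    · intro x _
      split_ifs <;> omega
    · refine ⟨v, Finset.mem_univ _, ?_⟩
      simp only [Anc.refl, if_true]; omega

theorem dfs_exists (hG : G.Connected) (r : V) :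
    ∃ f d, Tr G r f d ∧ ∀ u v, G.Adj u v → Anc f u v ∨ Anc f v u := by
  by_contra hcon
  push Not at hcon
  have : ∀ N : ℕ, ∃ f d, Tr G r f d ∧ N ≤ ∑ x, d x := by
    intro N
    induction N with
    | zero => obtain ⟨f, d, h⟩ := Tr.exists hG r; exact ⟨f, d, h, Nat.zero_le _⟩
    | succ N ih =>
      obtain ⟨f, d, h, hN⟩ := ih
      obtain ⟨u, v, hadj, h1, h2⟩ := hcon f d h
      rcases le_total (d v) (d u) with hd | hd
      · obtain ⟨f', d', h', hlt⟩ := h.exchange hadj h1 h2 hd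
        exact ⟨f', d', h', by omega⟩
      · obtain ⟨f', d', h', hlt⟩ := h.exchange hadj.symm h2 h1 hd
        exact ⟨f', d', h', by omega⟩
  obtain ⟨f, d, h, hN⟩ := this (Fintype.card V * Fintype.card V + 1)
  have : ∑ x, d x ≤ ∑ _x : V, Fintype.card V :=
    Finset.sum_le_sum fun x _ => (h.depth_lt x).le
  simp at this
  omega

/-- removing edges with back-up keeps the graph connected -/
lemma Tr.conn (h : Tr G r f d) (H : Finset (V × V))
    (hH : ∀ v, v ≠ r → (f v, v) ∈ H ∨ ∃ y, Anc f y v ∧ (f v, y) ∈ H)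
    (X : Finset V) (hX : ∀ e ∈ H, (e.1 ∈ X ↔ e.2 ∈ X)) :
    ∀ c x, Anc f x c → (x ∈ X ↔ c ∈ X) := by
  have main : ∀ n c, Fintype.card V - d c = n → ∀ x, Anc f x c → (x ∈ X ↔ c ∈ X) := by
    intro n
    induction n using Nat.strong_induction_on with
    | _ n ih =>
      intro c hc x hx
      by_cases hxc : x = c
      · rw [hxc]
      obtain ⟨e, he, hec, hxe⟩ := hx.child hxc
      have her : e ≠ r := by rintro rfl; rw [h.froot] at he; exact hec he
      have hd := (h.par e her).2
      rw [he] at hd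
      have hlt := h.depth_lt e
      have ihe := ih (Fintype.card V - d e) (by omega) e rfl
      rw [ihe x hxe]
      have h5 := hH e her
      rw [he] at h5
      rcases h5 with h5 | ⟨y, hy, h5⟩
      · exact (hX _ h5).symm
      · rw [← ihe y hy]; exact (hX _ h5).symm
  intro c
  exact main _ c rfl

end DFS
end SubcubicTour

set_option linter.unusedSectionVars false
namespace SubcubicTour
section Matching
variable {V ε : Type*} [Fintype V] [DecidableEq V] [DecidableEq ε]

theorem matching_join (a b : ε → V) (E : Finset ε) (w₀ : ε → ℤ)
    (hw : ∀ e, -1 ≤ w₀ e ∧ w₀ e ≤ 1)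
    (hbr : ∀ S : Finset V, (cut a b E S).card ≠ 1) :
    ∃ J ⊆ E, bd a b J = bd a b E ∧ 3 * ∑ e ∈ J, w₀ e ≤ ∑ e ∈ E, w₀ e ∧
      ∀ v, (cut a b E {v}).card = 3 → (cut a b J {v}).card = 1 := by
  let D : Finset V := Finset.univ.filter fun v => (cut a b E {v}).card = 3
  let K : ℤ := 4 * E.card + 1
  let w : ε → ℤ := fun e => w₀ e + K * ∑ v ∈ D, (if de a b e v = 1 then 1 else 0)
  obtain ⟨J, hJE, hJb, hJw⟩ := third_join a b E w hbr
  have hsum : ∀ C : Finset ε, ∑ e ∈ C, w e =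
      ∑ e ∈ C, w₀ e + K * ∑ v ∈ D, ((cut a b C {v}).card : ℤ) := by
    intro C
    simp only [w]
    rw [Finset.sum_add_distrib, ← Finset.mul_sum, Finset.sum_comm]
    congr 2
    refine Finset.sum_congr rfl fun v _ => ?_
    rw [cut_singleton, Finset.card_filter]
    push_cast
    rfl
  have hodd : ∀ v ∈ D, (1 : ℤ) ≤ (cut a b J {v}).card := by
    intro v hv
    have h3 : (cut a b E {v}).card = 3 := (Finset.mem_filter.1 hv).2
    have h1 : ((cut a b J {v}).card : ZMod 2) = ((cut a b E {v}).card : ZMod 2) := by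
      rw [cut_parity, cut_parity, hJb]
    rw [h3] at h1
    have : (cut a b J {v}).card ≠ 0 := by
      intro h; rw [h] at h1; revert h1; decide
    omega
  have hE3 : ∑ v ∈ D, ((cut a b E {v}).card : ℤ) = 3 * D.card := by
    rw [Finset.sum_congr rfl (g := fun _ => (3 : ℤ))]
    · simp [mul_comm]
    · intro v hv
      have h3 : (cut a b E {v}).card = 3 := (Finset.mem_filter.1 hv).2
      rw [h3]; rfl
  have hJD : ∑ v ∈ D, ((cut a b J {v}).card : ℤ) =
      D.card + ∑ v ∈ D, (((cut a b J {v}).card : ℤ) - 1) := by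
    rw [Finset.sum_sub_distrib]; simp
  set x := ∑ v ∈ D, (((cut a b J {v}).card : ℤ) - 1) with hx
  have hx0 : 0 ≤ x := Finset.sum_nonneg fun v hv => by have := hodd v hv; omega
  have hbE : ∑ e ∈ E, w₀ e ≤ E.card := by
    have := Finset.sum_le_card_nsmul E w₀ 1 fun e _ => (hw e).2
    simpa using this
  have hbJ : -(E.card : ℤ) ≤ ∑ e ∈ J, w₀ e := by
    have h1 : J.card • (-1 : ℤ) ≤ ∑ e ∈ J, w₀ e :=
      Finset.card_nsmul_le_sum J w₀ (-1) fun e _ => (hw e).1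
    have h2 := Finset.card_le_card hJE
    simp only [nsmul_eq_mul, mul_neg, mul_one] at h1
    omega
  rw [hsum, hsum, hE3, hJD] at hJw
  have hKx : 3 * (K * x) ≤ ∑ e ∈ E, w₀ e - 3 * ∑ e ∈ J, w₀ e := by nlinarith
  have hxz : x = 0 := by
    by_contra hne
    have h1 : 1 ≤ x := by omega
    have h2 : K ≤ K * x := by
      have : 0 ≤ K := by simp only [K]; omega
      nlinarith
    simp only [K] at h2 hKx
    omega
  refine ⟨J, hJE, hJb, by rw [hxz] at hKx; omega, ?_⟩
  intro v hv
  have hvD : v ∈ D := Finset.mem_filter.2 ⟨Finset.mem_univ _, hv⟩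
  rw [hx, Finset.sum_eq_zero_iff_of_nonneg
    (fun v hv => by have := hodd v hv; omega)] at hxz
  have := hxz v hvD
  omega

end Matching

section Main
variable {V : Type*} [Fintype V] [DecidableEq V]

lemma pred_of_connected {W : Type*} {K : SimpleGraph W} (hK : K.Connected) (P : W → Prop)
    (hP : ∀ x y, K.Adj x y → P x → P y) (x y : W) (hx : P x) : P y := by
  obtain ⟨p⟩ := hK.preconnected x y
  induction p with
  | nil => exact hx
  | cons hadj _ ih => exact ih (hP _ _ hadj hx)

/-- no bridges -/
lemma no_bridge {G : SimpleGraph V} (hn : 3 ≤ Fintype.card V)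
    (h2 : ∀ v : V, (G.induce {u : V | u ≠ v}).Connected) (S : Finset V) {u v : V}
    (hu : u ∈ S) (hv : v ∉ S)
    (hS : ∀ x y, G.Adj x y → x ∈ S → y ∉ S → x = u ∧ y = v) : False := by
  have huv : u ≠ v := by rintro rfl; exact hv hu
  obtain ⟨x, hx⟩ : ∃ x, x ∉ ({u, v} : Finset V) := by
    by_contra hcon
    push Not at hcon
    have h1 : (Finset.univ : Finset V) ⊆ {u, v} := fun x _ => hcon x
    have h2 := Finset.card_le_card h1
    rw [Finset.card_univ, Finset.card_pair huv] at h2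
    omega
  simp only [Finset.mem_insert, Finset.mem_singleton, not_or] at hx
  by_cases hxS : x ∈ S
  · have := pred_of_connected (h2 u) (fun y => y.1 ∈ S) (by
      rintro ⟨y, hy⟩ ⟨z, hz⟩ hadj hyS
      by_contra hzS
      exact hy (hS y z hadj hyS hzS).1) ⟨x, hx.1⟩ ⟨v, huv.symm⟩ hxS
    exact hv this
  · have := pred_of_connected (h2 v) (fun y => y.1 ∉ S) (by
      rintro ⟨y, hy⟩ ⟨z, hz⟩ hadj hyS hzS
      exact hy (hS z y hadj.symm hzS hyS).2) ⟨x, hx.2⟩ ⟨u, huv⟩ hxS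
    exact this hu

theorem main_three (G : SimpleGraph V) [DecidableRel G.Adj] (hn : 3 ≤ Fintype.card V)
    (hconn : G.Connected) (hdeg : ∀ v : V, G.degree v ≤ 3)
    (h2vc : ∀ v : V, (G.induce {u : V | u ≠ v}).Connected) :
    ∃ (v : V) (w : G.Walk v v), (∀ u : V, u ∈ w.support) ∧
      3 * w.length + 2 ≤ 4 * Fintype.card V := by
  classical
  obtain ⟨r⟩ := hconn.nonempty
  obtain ⟨f, d, hT, hdfs⟩ := dfs_exists hconn r
  let a : V × V → V := Prod.fst
  let b : V × V → V := Prod.snd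
  let E : Finset (V × V) := Finset.univ.filter fun p => G.Adj p.1 p.2 ∧ d p.1 < d p.2
  have hE : ∀ p, p ∈ E ↔ G.Adj p.1 p.2 ∧ d p.1 < d p.2 := fun p => by simp [E]
  have hlt : ∀ x y, G.Adj x y → (x, y) ∈ E ∨ (y, x) ∈ E := by
    intro x y hxy
    rcases hdfs x y hxy with h | h
    · exact Or.inr ((hE _).2 ⟨hxy.symm, hT.anc_depth h hxy.ne⟩)
    · exact Or.inl ((hE _).2 ⟨hxy, hT.anc_depth h hxy.ne.symm⟩)
  have hanc : ∀ p ∈ E, Anc f p.2 p.1 := by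
    intro p hp
    rw [hE] at hp
    rcases hdfs _ _ hp.1 with h | h
    · have := hT.anc_depth h hp.1.ne; omega
    · exact h
  have htree : ∀ v, v ≠ r → (f v, v) ∈ E := by
    intro v hv
    have := hT.par v hv
    exact (hE _).2 ⟨this.1.symm, by simp only; omega⟩
  -- bridgeless
  have hbr : ∀ S : Finset V, (cut a b E S).card ≠ 1 := by
    intro S h1
    obtain ⟨⟨u, v⟩, he⟩ := Finset.card_eq_one.1 h1
    have hmem : ∀ x y, (x, y) ∈ E → ¬ (x ∈ S ↔ y ∈ S) → x = u ∧ y = v := by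
      intro x y hxy hS
      have : (x, y) ∈ cut a b E S := Finset.mem_filter.2 ⟨hxy, hS⟩
      rw [he, Finset.mem_singleton, Prod.mk.injEq] at this
      exact this
    have huv : (u, v) ∈ cut a b E S := by rw [he]; simp
    have huv2 : ¬ (u ∈ S ↔ v ∈ S) := (Finset.mem_filter.1 huv).2
    by_cases hu : u ∈ S
    · have hv : v ∉ S := fun hv => huv2 ⟨fun _ => hv, fun _ => hu⟩
      refine no_bridge hn h2vc S hu hv ?_
      intro x y hxy hx hy
      rcases hlt x y hxy with h | h
      · exact hmem x y h (by simp [hx, hy])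
      · have := hmem y x h (by simp [hx, hy])
        rw [this.1] at hy; exact absurd hu hy
    · have hv : v ∈ S := by
        by_contra hv
        exact huv2 ⟨fun h => absurd h hu, fun h => absurd h hv⟩
      refine no_bridge hn h2vc S hv hu ?_
      intro x y hxy hx hy
      rcases hlt x y hxy with h | h
      · have := hmem x y h (by simp [hx, hy])
        rw [this.1] at hx; exact absurd hx hu
      · exact (hmem y x h (by simp [hx, hy])).symm
  -- degrees
  have hmemcut : ∀ (C : Finset (V × V)), C ⊆ E → ∀ p u, p ∈ cut a b C {u} ↔
      p ∈ C ∧ (p.1 = u ∨ p.2 = u) := by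
    intro C hC p u
    simp only [cut, Finset.mem_filter, Finset.mem_singleton, a, b]
    constructor
    · rintro ⟨h1, h2⟩
      refine ⟨h1, ?_⟩
      by_contra h3; push Not at h3; exact h2 (by simp [h3.1, h3.2])
    · rintro ⟨h1, h2⟩
      refine ⟨h1, ?_⟩
      have hne := ((hE p).1 (hC h1)).1.ne
      rintro h3
      rcases h2 with h2 | h2
      · exact hne (h2.trans (h3.1 h2).symm)
      · exact hne ((h3.2 h2).trans h2.symm)
  have hdg : ∀ u, (cut a b E {u}).card ≤ 3 := by
    intro u
    refine le_trans ?_ (hdeg u)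
    rw [← G.card_neighborFinset_eq_degree]
    apply Finset.card_le_card_of_injOn (fun p => if p.1 = u then p.2 else p.1)
    · intro p hp
      rw [Finset.mem_coe, hmemcut E subset_rfl, hE] at hp
      simp only [Finset.mem_coe, mem_neighborFinset]
      by_cases h : p.1 = u
      · rw [if_pos h, ← h]; exact hp.1.1
      · rw [if_neg h, ← hp.2.resolve_left h]; exact hp.1.1.symm
    · rintro ⟨p1, p2⟩ hp ⟨q1, q2⟩ hq hpq
      rw [Finset.mem_coe, hmemcut E subset_rfl, hE] at hp hq
      simp only at hp hq hpq
      by_cases h : p1 = u <;> by_cases h' : q1 = u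
      · simp only [h, h', if_true] at hpq; rw [h, h', hpq]
      · simp only [h, h', if_true, if_false] at hpq
        have := hq.2.resolve_left h'
        rw [h, hpq] at hp; rw [this] at hq; omega
      · simp only [h, h', if_true, if_false] at hpq
        have := hp.2.resolve_left h
        rw [this, hpq] at hp; rw [h'] at hq; omega
      · simp only [h, h', if_false] at hpq
        rw [hpq, hp.2.resolve_left h, hq.2.resolve_left h']
  -- back edges and removable tree edges
  let B := E.filter fun p => p.1 ≠ f p.2
  let R2 := E.filter fun p => p.1 = f p.2 ∧ (cut a b E {p.1}).card = 3 ∧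
    ∃ y, Anc f y p.2 ∧ (p.1, y) ∈ B
  let R := B ∪ R2
  have hBE : B ⊆ E := Finset.filter_subset _ _
  have hR2E : R2 ⊆ E := Finset.filter_subset _ _
  have hBR : Disjoint B R2 := by
    rw [Finset.disjoint_left]; intro p h1 h2
    exact (Finset.mem_filter.1 h1).2 (Finset.mem_filter.1 h2).2.1
  have hcardE : E.card + 1 = Fintype.card V + B.card := by
    have h1 : (E.filter fun p => p.1 = f p.2).card = (Finset.univ.erase r).card := by
      symm
      apply Finset.card_bij (fun v _ => (f v, v))
      · intro v hv
        exact Finset.mem_filter.2 ⟨htree v (Finset.mem_erase.1 hv).1, rfl⟩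
      · intro v _ v' _ h; exact (Prod.mk.injEq _ _ _ _ ▸ h).2
      · rintro ⟨x, y⟩ hp
        rw [Finset.mem_filter, hE] at hp
        refine ⟨y, Finset.mem_erase.2 ⟨?_, Finset.mem_univ _⟩, ?_⟩
        · rintro rfl
          have := hp.1.2; rw [hT.root] at this; simp at this
        · rw [Prod.mk.injEq]; exact ⟨hp.2.symm, rfl⟩
    have h2 := Finset.card_filter_add_card_filter_not (s := E) (fun p => p.1 = f p.2)
    rw [h1, Finset.card_erase_of_mem (Finset.mem_univ _), Finset.card_univ] at h2
    have h3 : (E.filter fun p => ¬ p.1 = f p.2).card = B.card := rfl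
    omega
  have hcount : B.card ≤ R2.card + 1 := by
    have hfib : ∀ C : Finset (V × V), C.card = ∑ u, (C.filter fun p => p.1 = u).card := by
      intro C
      exact Finset.card_eq_sum_card_fiberwise fun p _ => Finset.mem_univ _
    have hu : ∀ u, (B.filter fun p => p.1 = u).card ≤
        (R2.filter fun p => p.1 = u).card + if u = r then 1 else 0 := by
      intro u
      rcases (B.filter fun p => p.1 = u).eq_empty_or_nonempty with h0 | ⟨⟨u', y⟩, hp⟩
      · rw [h0]; simp
      rw [Finset.mem_filter] at hp
      obtain ⟨hpB, hpu⟩ := hp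
      simp only at hpu
      subst hpu
      have hpE := hBE hpB
      have hpne := (Finset.mem_filter.1 hpB).2
      simp only at hpne
      obtain ⟨c, hc, hcu, hyc⟩ := (hanc _ hpE).child ((hE _).1 hpE).1.ne.symm
      simp only at hc hcu hyc
      have hcr : c ≠ r := by rintro rfl; rw [hT.froot] at hc; exact hcu hc
      have hcE := htree c hcr
      rw [hc] at hcE
      have hcB : (u', c) ∉ B := fun h => (Finset.mem_filter.1 h).2 hc.symm
      -- edges at u'
      have hsub : insert (u', c) (B.filter fun p => p.1 = u') ⊆ cut a b E {u'} := by
        intro p hp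
        rw [hmemcut E subset_rfl]
        rcases Finset.mem_insert.1 hp with rfl | h
        · exact ⟨hcE, Or.inl rfl⟩
        · rw [Finset.mem_filter] at h; exact ⟨hBE h.1, Or.inl h.2⟩
      have hcnot : (u', c) ∉ B.filter fun p => p.1 = u' :=
        fun h => hcB (Finset.mem_filter.1 h).1
      have hle := Finset.card_le_card hsub
      rw [Finset.card_insert_of_notMem hcnot] at hle
      have h3 := hdg u'
      have hR : (cut a b E {u'}).card = 3 → 1 ≤ (R2.filter fun p => p.1 = u').card := by
        intro h
        apply Finset.card_pos.2
        refine ⟨(u', c), Finset.mem_filter.2 ⟨Finset.mem_filter.2 ⟨hcE, hc.symm, h, y, hyc, hpB⟩,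
          rfl⟩⟩
      by_cases hur : u' = r
      · rw [if_pos hur]
        by_cases h4 : (cut a b E {u'}).card = 3
        · have := hR h4; omega
        · omega
      · rw [if_neg hur]
        have hfu := htree u' hur
        have hfne : (f u', u') ∉ insert (u', c) (B.filter fun p => p.1 = u') := by
          have hne : f u' ≠ u' := ((hE _).1 hfu).1.ne
          intro h
          rcases Finset.mem_insert.1 h with h | h
          · rw [Prod.mk.injEq] at h; exact hne h.1
          · exact hne (Finset.mem_filter.1 h).2
        have hsub2 : insert (f u', u') (insert (u', c) (B.filter fun p => p.1 = u')) ⊆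
            cut a b E {u'} := by
          apply Finset.insert_subset _ hsub
          rw [hmemcut E subset_rfl]
          exact ⟨hfu, Or.inr rfl⟩
        have hle2 := Finset.card_le_card hsub2
        rw [Finset.card_insert_of_notMem hfne, Finset.card_insert_of_notMem hcnot] at hle2
        have hpos : 0 < (B.filter fun p => p.1 = u').card :=
          Finset.card_pos.2 ⟨(u', y), Finset.mem_filter.2 ⟨hpB, rfl⟩⟩
        have := hR (by omega)
        omega
    rw [hfib B, hfib R2]
    have h1 := Finset.sum_le_sum fun u (_ : u ∈ Finset.univ) => hu u
    rw [Finset.sum_add_distrib] at h1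
    simpa using h1
  -- the join
  obtain ⟨J, hJE, hJb, hJw, hJ3⟩ := matching_join a b E (fun e => if e ∈ R then -1 else 1)
    (fun e => by split_ifs <;> norm_num) hbr
  have hRE : R ⊆ E := Finset.union_subset hBE hR2E
  have hwsum : ∀ C : Finset (V × V), ∑ e ∈ C, (if e ∈ R then (-1 : ℤ) else 1) =
      C.card - 2 * (C ∩ R).card := by
    intro C
    have h1 : ∀ e ∈ C, (if e ∈ R then (-1 : ℤ) else 1) = 1 - 2 * (if e ∈ R then 1 else 0) := by
      intro e _; split_ifs <;> norm_num
    rw [Finset.sum_congr rfl h1, Finset.sum_sub_distrib, ← Finset.mul_sum, Finset.sum_boole,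
      Finset.filter_mem_eq_inter]
    simp
  rw [hwsum, hwsum, Finset.inter_eq_right.2 hRE] at hJw
  -- the multigraph
  let X := J ∩ R
  have hXE : X ⊆ E := Finset.inter_subset_left.trans hJE
  let H : Finset ((V × V) × Bool) := (E \ X) ×ˢ {false} ∪ (J \ R) ×ˢ {true}
  have hHdis : Disjoint ((E \ X) ×ˢ ({false} : Finset Bool)) ((J \ R) ×ˢ {true}) := by
    rw [Finset.disjoint_left]; rintro ⟨p, i⟩ h1 h2
    have e1 := Finset.mem_singleton.1 (Finset.mem_product.1 h1).2
    have e2 := Finset.mem_singleton.1 (Finset.mem_product.1 h2).2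
    simp only at e1 e2
    rw [e1] at e2
    exact Bool.noConfusion e2
  have hHmem : ∀ q, q ∈ H → q.1 ∈ E := by
    rintro ⟨p, i⟩ hq
    simp only [H, Finset.mem_union, Finset.mem_product, Finset.mem_sdiff] at hq
    rcases hq with h | h
    · exact h.1.1
    · exact hJE h.1.1
  have hHcard : H.card = (E \ X).card + (J \ R).card := by
    rw [Finset.card_union_of_disjoint hHdis]; simp
  have hHbd : bd (a ∘ Prod.fst) (b ∘ Prod.fst) H = 0 := by
    have h1 : ∀ (C : Finset (V × V)) (i : Bool),
        bd (a ∘ Prod.fst) (b ∘ Prod.fst) (C ×ˢ ({i} : Finset Bool)) = bd a b C := by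
      intro C i
      simp only [bd]
      rw [Finset.sum_product]
      simp [de]
    rw [bd_union _ _ hHdis, h1, h1, bd_sdiff _ _ hXE]
    have h2 : bd a b (J \ R) = bd a b J + bd a b X := by
      rw [← bd_sdiff _ _ Finset.inter_subset_left, Finset.sdiff_inter_self_left]
    rw [h2, hJb, two_tors]
  obtain ⟨p, hp, hlen⟩ := euler G (a ∘ Prod.fst) (b ∘ Prod.fst) H r
    (fun q hq => ((hE _).1 (hHmem q hq)).1) hHbd (by
      intro Y hrY hY v
      refine ((hT.conn (E \ X) ?_ Y ?_) r v (hT.anc_root v)).2 hrY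
      · intro v hv
        by_cases hvX : (f v, v) ∈ X
        · right
          obtain ⟨hvJ, hvR⟩ := Finset.mem_inter.1 hvX
          have hvR2 : (f v, v) ∈ R2 := by
            rcases Finset.mem_union.1 hvR with h | h
            · exact absurd rfl (Finset.mem_filter.1 h).2
            · exact h
          obtain ⟨_, _, h3, y, hy, hyB⟩ := Finset.mem_filter.1 hvR2
          refine ⟨y, hy, Finset.mem_sdiff.2 ⟨hBE hyB, ?_⟩⟩
          intro hyX
          have hyJ := (Finset.mem_inter.1 hyX).1
          obtain ⟨q, hq⟩ := Finset.card_eq_one.1 (hJ3 _ h3)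
          have m1 : (f v, v) ∈ cut a b J {f v} := (hmemcut J hJE _ _).2 ⟨hvJ, Or.inl rfl⟩
          have m2 : (f v, y) ∈ cut a b J {f v} := (hmemcut J hJE _ _).2 ⟨hyJ, Or.inl rfl⟩
          simp only at hq
          rw [hq, Finset.mem_singleton] at m1 m2
          have h5 : v = y := by
            have := m1.trans m2.symm
            rw [Prod.mk.injEq] at this; exact this.2
          subst h5
          exact (Finset.mem_filter.1 hyB).2 rfl
        · left; exact Finset.mem_sdiff.2 ⟨htree v hv, hvX⟩
      · intro e he
        exact hY (e, false) (by simp only [H, Finset.mem_union, Finset.mem_product]; simp [he]))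
  refine ⟨r, p, hp, ?_⟩
  have e1 := Finset.card_sdiff_add_card_eq_card hXE
  have e2 := Finset.card_sdiff_add_card_inter J R
  have e3 : R.card = B.card + R2.card := Finset.card_union_of_disjoint hBR
  have e4 : X.card = (J ∩ R).card := rfl
  omega

theorem main_two (G : SimpleGraph V) (hn : Fintype.card V = 2) (hconn : G.Connected) :
    ∃ (v : V) (w : G.Walk v v), (∀ u : V, u ∈ w.support) ∧ w.length = 2 := by
  rw [← Finset.card_univ, Finset.card_eq_two] at hn
  obtain ⟨x, y, hxy, huniv⟩ := hn
  have hall : ∀ z, z = x ∨ z = y := fun z => by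
    have := Finset.mem_univ z; rw [huniv] at this; simpa using this
  have hadj : G.Adj x y := by
    obtain ⟨p⟩ := hconn.preconnected x y
    cases p with
    | nil => exact absurd rfl hxy
    | @cons _ z _ h q =>
      rcases hall z with rfl | rfl
      · exact absurd rfl h.ne
      · exact h
  refine ⟨x, Walk.cons hadj (Walk.cons hadj.symm Walk.nil), ?_, by simp⟩
  intro u
  rcases hall u with rfl | rfl <;> simp

end Main
end SubcubicTour

/-- Every 2-vertex-connected subcubic simple graph on `n ≥ 1` vertices
has a spanning closed walk of length at most `4n/3 − 2/3`. -/
theorem spanning_closed_walk_subcubic_two_connected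
    {V : Type*} [Fintype V] [DecidableEq V]
    (G : SimpleGraph V) [DecidableRel G.Adj]
    (hn : 1 ≤ Fintype.card V)
    (hconn : G.Connected)
    (hdeg : ∀ v : V, G.degree v ≤ 3)
    (h2vc : ∀ v : V, (G.induce {u : V | u ≠ v}).Connected) :
    ∃ (v : V) (w : G.Walk v v), (∀ u : V, u ∈ w.support) ∧
      (w.length : ℝ) ≤ 4 * Fintype.card V / 3 - 2 / 3 := by
  have h2 : 2 ≤ Fintype.card V := by
    obtain ⟨v⟩ := hconn.nonempty
    obtain ⟨u, hu⟩ := (h2vc v).nonempty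
    have : 1 < Fintype.card V := Fintype.one_lt_card_iff.2 ⟨u, v, hu⟩
    omega
  rcases Nat.lt_or_ge 2 (Fintype.card V) with h3 | h3
  · obtain ⟨v, w, hw, hlen⟩ := SubcubicTour.main_three G h3 hconn hdeg h2vc
    refine ⟨v, w, hw, ?_⟩
    have : (3 * w.length + 2 : ℝ) ≤ 4 * Fintype.card V := by exact_mod_cast hlen
    linarith
  · have hc : Fintype.card V = 2 := by omega
    obtain ⟨v, w, hw, hlen⟩ := SubcubicTour.main_two G hc hconn
    refine ⟨v, w, hw, ?_⟩
    rw [hlen, hc]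
    norm_num
end

section
/- Let G be a connected claw-free simple graph on n ≥ 1 vertices such that for every vertex v the subgraph induced on the remaining vertices is connected. Then G has a spanning closed walk of length at most 4n/3 − 2/3. -/
open SimpleGraph


section Joins
open scoped Classical
variable {E N : Type*} [Fintype E] [Fintype N]

/-- indicator of a node, as a vector over `ZMod 2` -/
noncomputable def nodeInd (p : N) : N → ZMod 2 := fun v => if p = v then 1 else 0

/-- mod 2 boundary of an edge set -/
noncomputable def bd (l r : E → N) (S : Finset E) : N → ZMod 2 :=
  fun v => ∑ e ∈ S, (nodeInd (l e) v + nodeInd (r e) v)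

/-- weight of an edge set: edges of `J` count `-1`, the others `+1` -/
noncomputable def wt (J S : Finset E) : ℤ := ∑ e ∈ S, (if e ∈ J then -1 else 1)

lemma ind_self_add (p : N) : nodeInd p + nodeInd p = 0 := by
  funext v; exact CharTwo.add_self_eq_zero _

lemma vec_self_add (f : N → ZMod 2) : f + f = 0 := by
  funext v; exact CharTwo.add_self_eq_zero _

lemma ind_add_ne_zero {p q : N} (h : p ≠ q) : nodeInd p + nodeInd q ≠ 0 := by
  intro h0
  have := congrFun h0 p
  simp [nodeInd, h.symm] at this

lemma bd_empty (l r : E → N) : bd l r ∅ = 0 := by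
  funext v; simp [bd]

lemma bd_single (l r : E → N) (e : E) : bd l r {e} = nodeInd (l e) + nodeInd (r e) := by
  funext v; simp [bd]

lemma bd_union (l r : E → N) {S S' : Finset E} (h : Disjoint S S') :
    bd l r (S ∪ S') = bd l r S + bd l r S' := by
  funext v; simp [bd, Finset.sum_union h]

lemma bd_sdiff (l r : E → N) {S Z : Finset E} (h : Z ⊆ S) :
    bd l r (S \ Z) = bd l r S + bd l r Z := by
  have h1 : bd l r S = bd l r (S \ Z) + bd l r Z := by
    rw [← bd_union l r Finset.sdiff_disjoint, Finset.sdiff_union_of_subset h]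
  rw [h1, add_assoc, vec_self_add, add_zero]

lemma wt_union (J : Finset E) {S S' : Finset E} (h : Disjoint S S') :
    wt J (S ∪ S') = wt J S + wt J S' := Finset.sum_union h

lemma wt_sdiff (J : Finset E) {S Z : Finset E} (h : Z ⊆ S) :
    wt J (S \ Z) = wt J S - wt J Z := by
  have := Finset.sum_sdiff (f := fun e => (if e ∈ J then (-1 : ℤ) else 1)) h
  simp only [wt]; linarith

lemma wt_single (J : Finset E) (e : E) : wt J {e} = if e ∈ J then -1 else 1 := by
  simp [wt]

lemma bd_insert (l r : E → N) {S : Finset E} {e : E} (h : e ∉ S) :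
    bd l r (insert e S) = bd l r S + (nodeInd (l e) + nodeInd (r e)) := by
  rw [← bd_single, ← bd_union l r (by simpa using h), Finset.union_comm, Finset.singleton_union]

lemma wt_insert (J : Finset E) {S : Finset E} {e : E} (h : e ∉ S) :
    wt J (insert e S) = wt J S + (if e ∈ J then -1 else 1) := by
  simp only [wt]; rw [Finset.sum_insert h, add_comm]

lemma handshake (l r : E → N) (S : Finset E) : ∑ v, bd l r S v = 0 := by
  simp only [bd]
  rw [Finset.sum_comm]
  apply Finset.sum_eq_zero
  intro e _
  rw [Finset.sum_add_distrib]
  simp [nodeInd]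
  exact CharTwo.add_self_eq_zero _

/-- nodes joined to `p` by a sub-join of `S` -/
def reach (l r : E → N) (S : Finset E) (p : N) : Set N :=
  {v | ∃ Z ⊆ S, bd l r Z = nodeInd p + nodeInd v}

lemma mem_reach_self (l r : E → N) (S : Finset E) (p : N) : p ∈ reach l r S p :=
  ⟨∅, by simp, by rw [bd_empty, ind_self_add]⟩

lemma reach_edge_aux (l r : E → N) (S : Finset E) (p : N) {e : E} (he : e ∈ S) {x y : N}
    (hxy : nodeInd (l e) + nodeInd (r e) = nodeInd x + nodeInd y)
    (h : x ∈ reach l r S p) : y ∈ reach l r S p := by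
  obtain ⟨Z, hZ, hb⟩ := h
  by_cases heZ : e ∈ Z
  · refine ⟨Z \ {e}, (Finset.sdiff_subset).trans hZ, ?_⟩
    rw [bd_sdiff l r (by simpa using heZ), bd_single, hxy, hb]
    calc nodeInd p + nodeInd x + (nodeInd x + nodeInd y)
        = nodeInd p + nodeInd y + (nodeInd x + nodeInd x) := by ring
      _ = _ := by rw [ind_self_add, add_zero]
  · refine ⟨insert e Z, Finset.insert_subset he hZ, ?_⟩
    rw [bd_insert l r heZ, hxy, hb]
    calc nodeInd p + nodeInd x + (nodeInd x + nodeInd y)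
        = nodeInd p + nodeInd y + (nodeInd x + nodeInd x) := by ring
      _ = _ := by rw [ind_self_add, add_zero]

lemma reach_edge (l r : E → N) (S : Finset E) (p : N) {e : E} (he : e ∈ S) :
    l e ∈ reach l r S p ↔ r e ∈ reach l r S p :=
  ⟨reach_edge_aux l r S p he rfl, reach_edge_aux l r S p he (add_comm _ _)⟩

lemma bd_reach (l r : E → N) (S : Finset E) (p : N) (v : N) :
    bd l r (S.filter (fun e => l e ∈ reach l r S p)) v
      = if v ∈ reach l r S p then bd l r S v else 0 := by
  simp only [bd]
  rw [Finset.sum_filter]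
  split_ifs with hv
  · apply Finset.sum_congr rfl
    intro e he
    split_ifs with h
    · rfl
    · have h2 : r e ∉ reach l r S p := fun h' => h ((reach_edge l r S p he).2 h')
      have h3 : l e ≠ v := fun h' => h (h' ▸ hv)
      have h4 : r e ≠ v := fun h' => h2 (h' ▸ hv)
      simp [nodeInd, h3, h4]
  · apply Finset.sum_eq_zero
    intro e he
    split_ifs with h
    · have h2 : r e ∈ reach l r S p := (reach_edge l r S p he).1 h
      have h3 : l e ≠ v := fun h' => hv (h' ▸ h)
      have h4 : r e ≠ v := fun h' => hv (h' ▸ h2)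
      simp [nodeInd, h3, h4]
    · rfl

lemma zmod2_ne_zero {x : ZMod 2} (h : x ≠ 0) : x = 1 := by
  revert x; decide

lemma pair_join (l r : E → N) (S : Finset E) (p : N) (hp : bd l r S p ≠ 0) :
    ∃ q, q ≠ p ∧ bd l r S q ≠ 0 ∧ ∃ Z ⊆ S, bd l r Z = nodeInd p + nodeInd q := by
  by_contra hcon
  push Not at hcon
  have hs := handshake l r (S.filter (fun e => l e ∈ reach l r S p))
  simp only [bd_reach] at hs
  rw [Finset.sum_eq_single p] at hs
  · rw [if_pos (mem_reach_self l r S p)] at hs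
    exact hp hs
  · intro q _ hqp
    split_ifs with hq
    · by_contra h0
      obtain ⟨Z, hZ, hb⟩ := hq
      exact hcon q hqp h0 Z hZ hb
    · rfl
  · simp

/-- coboundary of a node set -/
noncomputable def cut (l r : E → N) (X : N → Prop) : Finset E :=
  Finset.univ.filter (fun e => ¬ (X (l e) ↔ X (r e)))

lemma bd_eq_card_star (l r : E → N) (S : Finset E) (t : N) :
    bd l r S t = ((S ∩ cut l r (fun v => v = t)).card : ZMod 2) := by
  simp only [bd, cut]
  rw [Finset.card_eq_sum_ones, Nat.cast_sum, ← Finset.filter_mem_eq_inter, Finset.sum_filter]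
  apply Finset.sum_congr rfl
  intro e _
  simp only [nodeInd, Finset.mem_filter, Finset.mem_univ, true_and]
  by_cases h1 : l e = t <;> by_cases h2 : r e = t <;> simp [h1, h2]
  decide

end Joins


section Seymour
open scoped Classical
variable {E N : Type*} [Fintype E] [Fintype N]

/-- star neighbours of `t` -/
def starNb (l r : E → N) (t : N) : Set N :=
  {u | u ≠ t ∧ ∃ e, (l e = t ∧ r e = u) ∨ (l e = u ∧ r e = t)}

/-- The key step: there is a node `t` meeting `J` in one edge whose star can be contracted. -/
lemma key_node (l r : E → N) (J : Finset E) (col : N → Bool)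
    (hcol : ∀ e, l e ≠ r e → col (l e) ≠ col (r e))
    (hcons : ∀ S, bd l r S = 0 → 0 ≤ wt J S) (hJ : J.Nonempty) :
    ∃ t, (J ∩ cut l r (fun v => v = t)).card = 1 ∧
      ∀ C : Finset E, Disjoint C (cut l r (fun v => v = t)) →
        (∀ v, bd l r C v ≠ 0 → v ∈ starNb l r t) → 0 ≤ wt J C := by
  -- loops are not in `J`
  have hloop : ∀ e ∈ J, l e ≠ r e := by
    intro e he h
    have := hcons {e} (by rw [bd_single, h, ind_self_add])
    rw [wt_single, if_pos he] at this
    omega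
  obtain ⟨e0, he0⟩ := hJ
  -- the extremal join
  let P : Finset (Finset E) := Finset.univ.filter
    (fun D => ∃ a b, a ≠ b ∧ bd l r D = nodeInd a + nodeInd b)
  have he0P : {e0} ∈ P := by
    simp only [P, Finset.mem_filter, Finset.mem_univ, true_and]
    exact ⟨l e0, r e0, hloop e0 he0, bd_single l r e0⟩
  obtain ⟨D, hDP, hDmin⟩ := Finset.exists_min_image P
    (fun D => toLex (wt J D, D.card)) ⟨_, he0P⟩
  simp only [P, Finset.mem_filter, Finset.mem_univ, true_and] at hDP
  obtain ⟨a, t, hat, hbD⟩ := hDP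
  have hDmin' : ∀ D' ∈ P, wt J D < wt J D' ∨ (wt J D = wt J D' ∧ D.card ≤ D'.card) := by
    intro D' hD'
    have := hDmin D' hD'
    rw [Prod.Lex.toLex_le_toLex] at this
    exact this
  have hDneg : wt J D ≤ -1 := by
    have h1 := hDmin' _ he0P
    rw [wt_single, if_pos he0] at h1
    omega
  have M : ∀ p q D', bd l r D' = nodeInd p + nodeInd q →
      wt J D < wt J D' ∨ (wt J D = wt J D' ∧ D.card ≤ D'.card) := by
    intro p q D' h
    by_cases hpq : p = q
    · subst hpq
      rw [ind_self_add] at h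
      have := hcons D' h
      left; omega
    · exact hDmin' D' (by
        simp only [P, Finset.mem_filter, Finset.mem_univ, true_and]
        exact ⟨p, q, hpq, h⟩)
  -- no even subset
  have hnoeven : ∀ C ⊆ D, bd l r C = 0 → C = ∅ := by
    intro C hC hb
    have h1 := M a t (D \ C) (by rw [bd_sdiff l r hC, hb, add_zero, hbD])
    rw [wt_sdiff J hC] at h1
    have h2 := hcons C hb
    have h3 : D.card ≤ (D \ C).card := by omega
    rw [Finset.card_sdiff_of_subset hC] at h3
    have h4 := Finset.card_le_card hC
    by_contra hne
    have := Finset.card_pos.2 (Finset.nonempty_iff_ne_empty.2 hne)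
    omega
  -- edges at t
  have hstar : ∀ e, e ∈ cut l r (fun v => v = t) →
      ∃ u, u ≠ t ∧ ((l e = t ∧ r e = u) ∨ (l e = u ∧ r e = t)) ∧
        nodeInd (l e) + nodeInd (r e) = nodeInd t + nodeInd u := by
    intro e he
    simp only [cut, Finset.mem_filter, Finset.mem_univ, true_and] at he
    by_cases h1 : l e = t
    · refine ⟨r e, fun h => he (by simp [h1, h]), Or.inl ⟨h1, rfl⟩, by rw [h1]⟩
    · by_cases h2 : r e = t
      · exact ⟨l e, h1, Or.inr ⟨rfl, h2⟩, by rw [h2, add_comm]⟩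
      · exact absurd (by simp [h1, h2]) he
  have hDJ : ∀ e, e ∈ cut l r (fun v => v = t) → (e ∈ D ↔ e ∈ J) := by
    intro e he
    obtain ⟨u, hu, -, hi⟩ := hstar e he
    have key : nodeInd a + nodeInd t + (nodeInd t + nodeInd u) = nodeInd a + nodeInd u := by
      calc nodeInd a + nodeInd t + (nodeInd t + nodeInd u)
          = nodeInd a + nodeInd u + (nodeInd t + nodeInd t) := by ring
        _ = _ := by rw [ind_self_add, add_zero]
    constructor
    · intro hD
      by_contra hJ
      have h1 := M a u (D \ {e}) (by
        rw [bd_sdiff l r (by simpa using hD), bd_single, hi, hbD, key])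
      rw [wt_sdiff J (by simpa using hD), wt_single, if_neg hJ] at h1
      omega
    · intro hJ
      by_contra hD
      have h1 := M a u (insert e D) (by rw [bd_insert l r hD, hi, hbD, key])
      rw [wt_insert J hD, if_pos hJ] at h1
      omega
  have hbDt : bd l r D t = 1 := by
    rw [hbD]; simp [nodeInd, hat]
  refine ⟨t, ?_, ?_⟩
  · -- exactly one edge
    have heq : J ∩ cut l r (fun v => v = t) = D ∩ cut l r (fun v => v = t) := by
      ext e
      simp only [Finset.mem_inter]
      constructor
      · rintro ⟨h1, h2⟩; exact ⟨(hDJ e h2).2 h1, h2⟩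
      · rintro ⟨h1, h2⟩; exact ⟨(hDJ e h2).1 h1, h2⟩
    rw [heq]
    have hne : (D ∩ cut l r (fun v => v = t)).Nonempty := by
      rw [Finset.nonempty_iff_ne_empty]
      intro h
      have := bd_eq_card_star l r D t
      rw [h, hbDt] at this
      simp at this
    obtain ⟨e1, he1⟩ := hne
    rw [Finset.card_eq_one]
    refine ⟨e1, ?_⟩
    ext e2
    simp only [Finset.mem_singleton]
    refine ⟨?_, fun h => h ▸ he1⟩
    intro he2
    by_contra h12
    rw [Finset.mem_inter] at he1 he2
    obtain ⟨u1, hu1, hends1, hi1⟩ := hstar e1 he1.2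
    obtain ⟨u2, hu2, hends2, hi2⟩ := hstar e2 he2.2
    have hsub : ({e1} : Finset E) ⊆ D := by simpa using he1.1
    have hbS : bd l r (D \ {e1}) = nodeInd a + nodeInd u1 := by
      rw [bd_sdiff l r hsub, bd_single, hi1, hbD]
      calc nodeInd a + nodeInd t + (nodeInd t + nodeInd u1)
          = nodeInd a + nodeInd u1 + (nodeInd t + nodeInd t) := by ring
        _ = _ := by rw [ind_self_add, add_zero]
    by_cases hu1R : u1 ∈ reach l r (D \ {e1}) t
    · obtain ⟨Z, hZ, hbZ⟩ := hu1R
      have he1Z : e1 ∉ Z := fun h => by simpa using hZ h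
      have h1 := hnoeven (insert e1 Z)
        (Finset.insert_subset he1.1 (hZ.trans Finset.sdiff_subset))
        (by rw [bd_insert l r he1Z, hbZ, hi1, vec_self_add])
      exact absurd h1 (Finset.insert_ne_empty _ _)
    · have hbR := bd_reach l r (D \ {e1}) t
      have hval : ∀ v, bd l r ((D \ {e1}).filter (fun e => l e ∈ reach l r (D \ {e1}) t)) v
          = if v ∈ reach l r (D \ {e1}) t then nodeInd a v else 0 := by
        intro v
        rw [hbR v]
        split_ifs with hv
        · rw [hbS]
          have : u1 ≠ v := fun h => hu1R (h ▸ hv)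
          simp [nodeInd, this]
        · rfl
      have haR : a ∉ reach l r (D \ {e1}) t := by
        intro haR
        have hs := handshake l r ((D \ {e1}).filter (fun e => l e ∈ reach l r (D \ {e1}) t))
        simp only [hval] at hs
        rw [Finset.sum_eq_single a] at hs
        · simp [haR, nodeInd] at hs
        · intro q _ hq
          simp [nodeInd, hq.symm]
        · simp
      have hz := hnoeven ((D \ {e1}).filter (fun e => l e ∈ reach l r (D \ {e1}) t))
        ((Finset.filter_subset _ _).trans Finset.sdiff_subset) (by
          funext v
          rw [hval v]
          split_ifs with hv
          · have : a ≠ v := fun h => haR (h ▸ hv)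
            simp [nodeInd, this]
          · rfl)
      have hmem : e2 ∈ (D \ {e1}).filter (fun e => l e ∈ reach l r (D \ {e1}) t) := by
        have he2S : e2 ∈ D \ {e1} := by simp [he2.1, h12]
        rw [Finset.mem_filter]
        refine ⟨he2S, ?_⟩
        rcases hends2 with ⟨h, -⟩ | ⟨-, h⟩
        · rw [h]; exact mem_reach_self _ _ _ _
        · rw [reach_edge l r _ t he2S, h]; exact mem_reach_self _ _ _ _
      rw [hz] at hmem
      simp at hmem
  · -- contraction stays conservative
    suffices H : ∀ n, ∀ C : Finset E, C.card = n → Disjoint C (cut l r (fun v => v = t)) →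
        (∀ v, bd l r C v ≠ 0 → v ∈ starNb l r t) → 0 ≤ wt J C from
      fun C => H _ C rfl
    intro n
    induction n using Nat.strong_induction_on with
    | _ n ih =>
    intro C hCn hdis hnb
    by_cases heven : ∃ X ⊆ C, X ≠ ∅ ∧ bd l r X = 0
    · obtain ⟨X, hX, hXne, hbX⟩ := heven
      have hlt : (C \ X).card < n := by
        rw [Finset.card_sdiff_of_subset hX]
        have := Finset.card_pos.2 (Finset.nonempty_iff_ne_empty.2 hXne)
        have := Finset.card_le_card hX
        omega
      have h1 := ih _ hlt (C \ X) rfl (hdis.mono_left Finset.sdiff_subset) (by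
        rw [bd_sdiff l r hX, hbX, add_zero]; exact hnb)
      rw [wt_sdiff J hX] at h1
      have := hcons X hbX
      omega
    have hCe : ∀ X ⊆ C, bd l r X = 0 → X = ∅ := by
      intro X hX hb
      by_contra hne
      exact heven ⟨X, hX, hne, hb⟩
    by_cases hb0 : bd l r C = 0
    · exact hcons C hb0
    obtain ⟨u, hu⟩ : ∃ u, bd l r C u ≠ 0 := by
      by_contra h; push Not at h; exact hb0 (funext h)
    obtain ⟨u', huu', hu', Z, hZ, hbZ⟩ := pair_join l r C u hu
    by_cases hZC : Z = C
    swap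
    · have hZne : Z ≠ ∅ := by
        intro h; rw [h, bd_empty] at hbZ
        exact ind_add_ne_zero huu'.symm hbZ.symm
      have hss : Z ⊂ C := Finset.ssubset_iff_subset_ne.2 ⟨hZ, hZC⟩
      have hZc := Finset.card_lt_card hss
      have hZpos := Finset.card_pos.2 (Finset.nonempty_iff_ne_empty.2 hZne)
      have hnbZ : ∀ v, bd l r Z v ≠ 0 → v ∈ starNb l r t := by
        intro v hv
        rw [hbZ] at hv
        by_cases h1 : u = v
        · exact h1 ▸ hnb u hu
        · by_cases h2 : u' = v
          · exact h2 ▸ hnb u' hu'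
          · simp [nodeInd, h1, h2] at hv
      have h1 := ih Z.card (by omega) Z rfl (hdis.mono_left hZ) hnbZ
      have h2 := ih (C \ Z).card (by rw [Finset.card_sdiff_of_subset hZ]; omega) (C \ Z) rfl
        (hdis.mono_left Finset.sdiff_subset) (by
          intro v hv
          rw [bd_sdiff l r hZ] at hv
          by_contra hvn
          have h3 : bd l r C v = 0 := by by_contra h; exact hvn (hnb v h)
          have h4 : bd l r Z v = 0 := by by_contra h; exact hvn (hnbZ v h)
          simp [h3, h4] at hv)
      rw [wt_sdiff J hZ] at h2
      omega
    subst hZC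
    clear hZ
    rename' Z => C
    by_contra hneg
    push Not at hneg
    -- parity
    have hCloop : ∀ e ∈ C, l e ≠ r e := by
      intro e he h
      have := hCe {e} (by simpa using he) (by rw [bd_single, h, ind_self_add])
      simp at this
    obtain ⟨hut, e, he⟩ := hnb u hu
    obtain ⟨hu't, e', he'⟩ := hnb u' hu'
    have colne : ∀ (f : E) (x : N), x ≠ t → ((l f = t ∧ r f = x) ∨ (l f = x ∧ r f = t)) →
        col x ≠ col t := by
      rintro f x hx (⟨h1, h2⟩ | ⟨h1, h2⟩)
      · have := hcol f (by rw [h1, h2]; exact hx.symm)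
        rw [h1, h2] at this; exact this.symm
      · have := hcol f (by rw [h1, h2]; exact hx)
        rw [h1, h2] at this; exact this
    have hcu := colne e u hut he
    have hcu' := colne e' u' hu't he'
    have hCeven : ((C.card : ℕ) : ZMod 2) = 0 := by
      have h1 : ∑ v ∈ Finset.univ.filter (fun v => col v = col t), bd l r C v = (C.card : ZMod 2) := by
        simp only [bd]
        rw [Finset.sum_comm, Finset.card_eq_sum_ones, Nat.cast_sum]
        apply Finset.sum_congr rfl
        intro f hf
        have := hcol f (hCloop f hf)
        rw [Finset.sum_add_distrib]
        simp only [nodeInd, Finset.sum_ite_eq, Finset.mem_filter, Finset.mem_univ, true_and]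
        revert this
        cases col (l f) <;> cases col (r f) <;> cases col t <;> simp
      rw [← h1]
      apply Finset.sum_eq_zero
      intro v hv
      simp only [Finset.mem_filter, Finset.mem_univ, true_and] at hv
      rw [hbZ]
      have h2 : u ≠ v := fun h => hcu (h ▸ hv)
      have h3 : u' ≠ v := fun h => hcu' (h ▸ hv)
      simp [nodeInd, h2, h3]
    have hwC : wt J C ≤ -2 := by
      have h1 : ((wt J C : ℤ) : ZMod 2) = 0 := by
        rw [← hCeven, Finset.card_eq_sum_ones, wt, Int.cast_sum, Nat.cast_sum]
        apply Finset.sum_congr rfl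
        intro f _
        split_ifs <;> decide
      rw [ZMod.intCast_zmod_eq_zero_iff_dvd] at h1
      omega
    have hecut : ∀ (f : E) (x : N), x ≠ t → ((l f = t ∧ r f = x) ∨ (l f = x ∧ r f = t)) →
        f ∈ cut l r (fun v => v = t) ∧ nodeInd (l f) + nodeInd (r f) = nodeInd t + nodeInd x := by
      rintro f x hx (⟨h1, h2⟩ | ⟨h1, h2⟩)
      · simp [cut, h1, h2, hx]
      · simp [cut, h1, h2, hx, add_comm]
    obtain ⟨hec, hei⟩ := hecut e u hut he
    obtain ⟨he'c, he'i⟩ := hecut e' u' hu't he'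
    have hee' : e ≠ e' := by
      intro h
      rw [h, he'i] at hei
      have h2 : nodeInd u' = nodeInd u := add_left_cancel hei
      have := congrFun h2 u
      simp [nodeInd, huu'] at this
    have heC : e ∉ C := fun h => Finset.disjoint_left.1 hdis h hec
    have he'C : e' ∉ C := fun h => Finset.disjoint_left.1 hdis h he'c
    have heC' : e ∉ insert e' C := by simp [hee', heC]
    have hbC1 : bd l r (insert e' C) = nodeInd t + nodeInd u := by
      rw [bd_insert l r he'C, hbZ, he'i]
      calc nodeInd u + nodeInd u' + (nodeInd t + nodeInd u')
          = nodeInd t + nodeInd u + (nodeInd u' + nodeInd u') := by ring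
        _ = _ := by rw [ind_self_add, add_zero]
    have hbC2 : bd l r (insert e (insert e' C)) = 0 := by
      rw [bd_insert l r heC', hbC1, hei, vec_self_add]
    have hw := hcons _ hbC2
    have hw2 := hw
    rw [wt_insert J heC', wt_insert J he'C] at hw2
    have heJ : e ∉ J := by
      intro h; rw [if_pos h] at hw2; split_ifs at hw2 <;> omega
    have he'J : e' ∉ J := by
      intro h; rw [if_pos h] at hw2; split_ifs at hw2 <;> omega
    rw [if_neg heJ, if_neg he'J] at hw2
    have hwC2 : wt J C = -2 := by omega
    have heD : e ∉ D := fun h => heJ ((hDJ e hec).1 h)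
    have he'D : e' ∉ D := fun h => he'J ((hDJ e' he'c).1 h)
    set Cp := insert e (insert e' C) with hCp
    have hwCp : wt J Cp = 0 := by
      rw [hCp, wt_insert J heC', wt_insert J he'C, if_neg heJ, if_neg he'J]; omega
    -- everything in Cp is reachable from t
    have hCpR : ∀ f ∈ Cp, l f ∈ reach l r Cp t := by
      have hsplit := bd_reach l r Cp t
      have hrest : bd l r (Cp \ Cp.filter (fun f => l f ∈ reach l r Cp t)) = 0 := by
        rw [bd_sdiff l r (Finset.filter_subset _ _), hbC2, zero_add]
        funext v
        rw [hsplit v, hbC2]; simp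
      have htR := mem_reach_self l r Cp t
      have hends : ∀ (f : E) (x : N), f ∈ Cp → ((l f = t ∧ r f = x) ∨ (l f = x ∧ r f = t)) →
          l f ∈ reach l r Cp t := by
        rintro f x hf (⟨h1, h2⟩ | ⟨h1, h2⟩)
        · rw [h1]; exact htR
        · rw [reach_edge l r Cp t hf, h2]; exact htR
      have hempty := hCe (Cp \ Cp.filter (fun f => l f ∈ reach l r Cp t)) (by
        intro f hf
        simp only [Finset.mem_sdiff, Finset.mem_filter, not_and] at hf
        obtain ⟨hf1, hf2⟩ := hf
        have hf1' := hf1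
        rw [hCp, Finset.mem_insert, Finset.mem_insert] at hf1'
        rcases hf1' with h | h | h
        · exact absurd (hends f u hf1 (h ▸ he)) (hf2 hf1)
        · exact absurd (hends f u' hf1 (h ▸ he')) (hf2 hf1)
        · exact h) hrest
      intro f hf
      by_contra hcon
      have : f ∈ Cp \ Cp.filter (fun f => l f ∈ reach l r Cp t) := by
        simp [hf, hcon]
      rw [hempty] at this
      simp at this
    have hCpR' : ∀ f ∈ Cp, r f ∈ reach l r Cp t := fun f hf =>
      (reach_edge l r Cp t hf).1 (hCpR f hf)
    have hDCp : Disjoint (D \ C) Cp := by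
      rw [Finset.disjoint_left]
      intro f hf hf2
      rw [Finset.mem_sdiff] at hf
      rw [hCp, Finset.mem_insert, Finset.mem_insert] at hf2
      rcases hf2 with h | h | h
      · exact heD (h ▸ hf.1)
      · exact he'D (h ▸ hf.1)
      · exact hf.2 h
    -- first case: a final piece of D leads back to Cp
    have case1 : ∀ v ∈ reach l r (D \ C) t, v ∈ reach l r Cp t → v = t := by
      rintro v ⟨D2, hD2, hbD2⟩ ⟨A, hA, hbA⟩
      by_contra hvt
      have hD2D : D2 ⊆ D := hD2.trans Finset.sdiff_subset
      have hw2 : wt J D2 < 0 := by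
        by_contra hge
        push Not at hge
        have h1 := M a v (D \ D2) (by
          rw [bd_sdiff l r hD2D, hbD, hbD2]
          calc nodeInd a + nodeInd t + (nodeInd t + nodeInd v)
              = nodeInd a + nodeInd v + (nodeInd t + nodeInd t) := by ring
            _ = _ := by rw [ind_self_add, add_zero])
        rw [wt_sdiff J hD2D] at h1
        have h3 : D.card ≤ (D \ D2).card := by omega
        rw [Finset.card_sdiff_of_subset hD2D] at h3
        have h4 := Finset.card_le_card hD2D
        have h5 : D2 = ∅ := by
          by_contra hne
          have := Finset.card_pos.2 (Finset.nonempty_iff_ne_empty.2 hne)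
          omega
        rw [h5, bd_empty] at hbD2
        exact ind_add_ne_zero (Ne.symm hvt) hbD2.symm
      have hd1 : Disjoint D2 A := (hDCp.mono_left hD2).mono_right hA
      have hd2 : Disjoint D2 (Cp \ A) := (hDCp.mono_left hD2).mono_right Finset.sdiff_subset
      have h1 := hcons (D2 ∪ A) (by rw [bd_union l r hd1, hbD2, hbA, vec_self_add])
      have h2 := hcons (D2 ∪ (Cp \ A)) (by
        rw [bd_union l r hd2, bd_sdiff l r hA, hbC2, hbD2, hbA, zero_add, vec_self_add])
      rw [wt_union J hd1] at h1
      rw [wt_union J hd2, wt_sdiff J hA, hwCp] at h2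
      omega
    -- second case
    have hval : ∀ v, bd l r ((D \ C).filter (fun f => l f ∈ reach l r (D \ C) t)) v
        = if v ∈ reach l r (D \ C) t then (nodeInd a + nodeInd t) v else 0 := by
      intro v
      rw [bd_reach l r (D \ C) t v]
      split_ifs with hv
      · rw [← hbD]
        have hDC : D \ C = D \ (D ∩ C) := by simp
        rw [hDC, bd_sdiff l r Finset.inter_subset_left]
        have hz : bd l r (D ∩ C) v = 0 := by
          by_cases hvt : v = t
          · subst hvt
            rw [bd_eq_card_star]
            have : D ∩ C ∩ cut l r (fun w => w = v) = ∅ := by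
              rw [Finset.inter_assoc, Finset.disjoint_iff_inter_eq_empty.1 hdis]; simp
            rw [this]; simp
          · apply Finset.sum_eq_zero
            intro f hf
            have hfC : f ∈ Cp := by
              rw [hCp]; simp [(Finset.mem_inter.1 hf).2]
            have h1 : l f ≠ v := fun h => hvt (case1 v hv (h ▸ hCpR f hfC))
            have h2 : r f ≠ v := fun h => hvt (case1 v hv (h ▸ hCpR' f hfC))
            simp [nodeInd, h1, h2]
        simp [hz]
      · rfl
    have htR := mem_reach_self l r (D \ C) t
    have haR : a ∈ reach l r (D \ C) t := by
      by_contra haR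
      have hs := handshake l r ((D \ C).filter (fun f => l f ∈ reach l r (D \ C) t))
      simp only [hval] at hs
      rw [Finset.sum_eq_single t] at hs
      · simp [htR, nodeInd, hat] at hs
      · intro q _ hq
        split_ifs with hqR
        · have : a ≠ q := fun h => haR (h ▸ hqR)
          simp [nodeInd, hq.symm, this]
        · rfl
      · simp
    have hbF : bd l r ((D \ C).filter (fun f => l f ∈ reach l r (D \ C) t))
        = nodeInd a + nodeInd t := by
      funext v
      rw [hval v]
      split_ifs with hv
      · rfl
      · have h1 : a ≠ v := fun h => hv (h ▸ haR)
        have h2 : t ≠ v := fun h => hv (h ▸ htR)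
        simp [nodeInd, h1, h2]
    have hFD : (D \ C).filter (fun f => l f ∈ reach l r (D \ C) t) ⊆ D :=
      (Finset.filter_subset _ _).trans Finset.sdiff_subset
    have hempty := hnoeven (D \ (D \ C).filter (fun f => l f ∈ reach l r (D \ C) t))
      Finset.sdiff_subset (by rw [bd_sdiff l r hFD, hbF, hbD, vec_self_add])
    have hDCd : Disjoint D C := by
      rw [Finset.disjoint_left]
      intro f hf hfC
      have : f ∈ D \ (D \ C).filter (fun f => l f ∈ reach l r (D \ C) t) := by
        simp [hf, hfC]
      rw [hempty] at this
      simp at this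
    have hdfin : Disjoint D (insert e' C) := by
      rw [Finset.disjoint_insert_right]
      exact ⟨he'D, hDCd⟩
    have hfin := M a u (D ∪ insert e' C) (by
      rw [bd_union l r hdfin, hbC1, hbD]
      calc nodeInd a + nodeInd t + (nodeInd t + nodeInd u)
          = nodeInd a + nodeInd u + (nodeInd t + nodeInd t) := by ring
        _ = _ := by rw [ind_self_add, add_zero])
    rw [wt_union J hdfin, wt_insert J he'C, if_neg he'J] at hfin
    omega

end Seymour


section SeymourCount
open scoped Classical
variable {E N : Type*} [Fintype E] [Fintype N]

/-- If every cut meeting `J` oddly has at least three edges, then a minimum join is small. -/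
lemma seymour_count (n : ℕ) : ∀ (l r : E → N) (J : Finset E) (col : N → Bool), J.card = n →
    (∀ e, l e ≠ r e → col (l e) ≠ col (r e)) →
    (∀ S, bd l r S = 0 → 0 ≤ wt J S) →
    (∀ X : N → Prop, Odd (J ∩ cut l r X).card → 3 ≤ (cut l r X).card) →
    3 * n ≤ (Finset.univ.filter (fun e => l e ≠ r e)).card := by
  induction n with
  | zero => intros; simp
  | succ n ih =>
  intro l r J col hJn hcol hcons hcut
  have hJ : J.Nonempty := Finset.card_pos.1 (by omega)
  obtain ⟨t, ht1, htC⟩ := key_node l r J col hcol hcons hJ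
  set st := cut l r (fun v => v = t) with hst
  have hst3 : 3 ≤ st.card := hcut _ (by rw [← hst, ht1]; exact odd_one)
  let c : N → N := fun v => if v = t ∨ v ∈ starNb l r t then t else v
  have hcst : ∀ e ∈ st, c (l e) = t ∧ c (r e) = t := by
    intro e he
    simp only [hst, cut, Finset.mem_filter, Finset.mem_univ, true_and] at he
    by_cases h1 : l e = t
    · have h2 : r e ≠ t := fun h => he (by simp [h1, h])
      have h3 : r e ∈ starNb l r t := ⟨h2, e, Or.inl ⟨h1, rfl⟩⟩
      simp [c, h1, h3]
    · by_cases h2 : r e = t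
      · have h3 : l e ∈ starNb l r t := ⟨h1, e, Or.inr ⟨rfl, h2⟩⟩
        simp [c, h2, h3]
      · exact absurd (by simp [h1, h2]) he
  have hcolnb : ∀ v ∈ starNb l r t, col v = !col t := by
    rintro v ⟨hv, e, ⟨h1, h2⟩ | ⟨h1, h2⟩⟩
    · have := hcol e (by rw [h1, h2]; exact hv.symm)
      rw [h1, h2] at this
      revert this; cases col t <;> cases col v <;> simp
    · have := hcol e (by rw [h1, h2]; exact hv)
      rw [h1, h2] at this
      revert this; cases col t <;> cases col v <;> simp
  have hcol' : ∀ v, v ≠ t → Function.update col t (!col t) (c v) = col v := by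
    intro v hv
    by_cases h : v ∈ starNb l r t
    · simp [c, h, hcolnb v h]
    · simp [c, h, hv]
  have hcut' : ∀ X, cut (c ∘ l) (c ∘ r) X = cut l r (fun v => X (c v)) := fun X => rfl
  have hsubJ : J ∩ st ⊆ J := Finset.inter_subset_left
  have hmain := ih (c ∘ l) (c ∘ r) (J \ (J ∩ st)) (Function.update col t (!col t))
    (by rw [Finset.card_sdiff_of_subset hsubJ]; omega)
    (by
      intro e he
      have h1 : e ∉ st := by
        intro h
        have := hcst e h
        exact he (by simp [this.1, this.2])
      have h0 : l e ≠ r e := fun h => he (by simp [h])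
      have hl : l e ≠ t := by
        intro h
        apply h1
        simp only [hst, cut, Finset.mem_filter, Finset.mem_univ, true_and]
        intro h'
        exact h0 (h.trans (h'.1 h).symm)
      have hr : r e ≠ t := by
        intro h
        apply h1
        simp only [hst, cut, Finset.mem_filter, Finset.mem_univ, true_and]
        intro h'
        exact h0 ((h'.2 h).trans h.symm)
      simp only [Function.comp]
      rw [hcol' _ hl, hcol' _ hr]
      exact hcol e h0)
    (by
      intro S hS
      have hC := htC (S \ (S ∩ st)) (by
        rw [Finset.disjoint_left]
        intro f hf hf2
        simp only [Finset.mem_sdiff, Finset.mem_inter, not_and] at hf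
        exact hf.2 hf.1 hf2) (by
        intro v hv
        by_contra hvn
        apply hv
        by_cases hvt : v = t
        · subst hvt
          rw [bd_eq_card_star]
          have : S \ (S ∩ st) ∩ cut l r (fun w => w = v) = ∅ := by
            rw [← hst]; ext f; simp
          rw [this]; simp
        · have hcv : ∀ w, (c w = v ↔ w = v) := by
            intro w
            simp only [c]
            split_ifs with h
            · constructor
              · intro h'; exact absurd h'.symm hvt
              · intro h'
                subst h'
                rcases h with h | h
                · exact absurd h hvt
                · exact absurd h hvn
            · rfl
          have h1 := congrFun hS v
          rw [bd_sdiff l r Finset.inter_subset_left]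
          have h2 : bd l r S v = 0 := by
            rw [← show bd (c ∘ l) (c ∘ r) S v = 0 from h1]
            simp only [bd, nodeInd, Function.comp, hcv]
          have h3 : bd l r (S ∩ st) v = 0 := by
            apply Finset.sum_eq_zero
            intro f hf
            have hf := hcst f (Finset.mem_inter.1 hf).2
            have h4 : l f ≠ v := fun h => hvt (by rw [← hf.1, h, (hcv v).2 rfl])
            have h5 : r f ≠ v := fun h => hvt (by rw [← hf.2, h, (hcv v).2 rfl])
            simp [nodeInd, h4, h5]
          simp [h2, h3])
      have h1 : wt (J \ (J ∩ st)) S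
          = wt (J \ (J ∩ st)) (S \ (S ∩ st)) + wt (J \ (J ∩ st)) (S ∩ st) := by
        rw [wt_sdiff _ Finset.inter_subset_left]; ring
      have h2 : wt (J \ (J ∩ st)) (S \ (S ∩ st)) = wt J (S \ (S ∩ st)) := by
        apply Finset.sum_congr rfl
        intro f hf
        simp only [Finset.mem_sdiff, Finset.mem_inter, not_and] at hf
        have := hf.2 hf.1
        simp [this]
      have h3 : 0 ≤ wt (J \ (J ∩ st)) (S ∩ st) := by
        apply Finset.sum_nonneg
        intro f hf
        have := (Finset.mem_inter.1 hf).2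
        simp [this]
      rw [h1, h2]; omega)
    (by
      intro X hX
      rw [hcut'] at hX ⊢
      apply hcut
      have : J ∩ cut l r (fun v => X (c v)) = (J \ (J ∩ st)) ∩ cut l r (fun v => X (c v)) := by
        ext f
        simp only [Finset.mem_inter, Finset.mem_sdiff, not_and]
        constructor
        · rintro ⟨h1, h2⟩
          refine ⟨⟨h1, fun _ h3 => ?_⟩, h2⟩
          have := hcst f h3
          simp [cut, this.1, this.2] at h2
        · rintro ⟨h1, h2⟩
          exact ⟨h1.1, h2⟩
      rw [this]; exact hX)
  have hsub : Finset.univ.filter (fun e => (c ∘ l) e ≠ (c ∘ r) e)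
      ⊆ (Finset.univ.filter (fun e => l e ≠ r e)) \ st := by
    intro e he
    simp only [Finset.mem_filter, Finset.mem_univ, true_and, Finset.mem_sdiff, Function.comp] at he ⊢
    refine ⟨fun h => he (by rw [h]), fun h => ?_⟩
    have := hcst e h
    exact he (by rw [this.1, this.2])
  have hst2 : st ⊆ Finset.univ.filter (fun e => l e ≠ r e) := by
    intro e he
    simp only [hst, cut, Finset.mem_filter, Finset.mem_univ, true_and] at he ⊢
    intro h
    exact he (by rw [h])
  have h1 := Finset.card_le_card hsub
  rw [Finset.card_sdiff_of_subset hst2] at h1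
  have h2 := Finset.card_le_card hst2
  omega

end SeymourCount


/-- rotating a cyclic chain -/
lemma chain_rot {α : Type*} {R : α → α → Prop} {A B : List α}
    (h : List.IsChain R ((A ++ B) ++ (A ++ B))) : List.IsChain R ((B ++ A) ++ (B ++ A)) := by
  rcases A.eq_nil_or_concat with rfl | ⟨A', a, rfl⟩
  · simpa using h
  rcases B.eq_nil_or_concat with rfl | ⟨B', b, rfl⟩
  · simpa using h
  simp only [List.isChain_append] at h ⊢
  obtain ⟨⟨h1, h2, h3⟩, -, h4⟩ := h
  refine ⟨⟨h2, h1, ?_⟩, ⟨h2, h1, ?_⟩, ?_⟩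
  · intro x hx y hy
    apply h4 x _ y _
    · simpa [List.getLast?_cons, List.getLast?_append] using hx
    · cases A' <;> simpa using hy
  · intro x hx y hy
    apply h4 x _ y _
    · simpa [List.getLast?_cons, List.getLast?_append] using hx
    · cases A' <;> simpa using hy
  · intro x hx y hy
    apply h3 x _ y _
    · simpa [List.getLast?_cons, List.getLast?_append] using hx
    · cases B' <;> simpa using hy

section Euler
open scoped Classical
variable {E N : Type*} [Fintype E] [Fintype N]

/-- source of a directed edge -/
def dsrc (l r : E → N) (d : E × Bool) : N := if d.2 then l d.1 else r d.1
/-- target of a directed edge -/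
def dtgt (l r : E → N) (d : E × Bool) : N := if d.2 then r d.1 else l d.1

lemma trail_bd (l r : E → N) (L : List (E × Bool)) (d : E × Bool)
    (h : List.IsChain (fun x y => dtgt l r x = dsrc l r y) (d :: L)) :
    ((d :: L).map (fun x => nodeInd (l x.1) + nodeInd (r x.1))).sum
      = nodeInd (dsrc l r d) + nodeInd (dtgt l r ((d :: L).getLast (by simp))) := by
  have hd : ∀ d : E × Bool, nodeInd (l d.1) + nodeInd (r d.1)
      = nodeInd (dsrc l r d) + nodeInd (dtgt l r d) := by
    rintro ⟨e, b⟩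
    cases b <;> simp [dsrc, dtgt, add_comm]
  induction L generalizing d with
  | nil => simp [hd]
  | cons d' L ih =>
    rw [List.isChain_cons_cons] at h
    rw [List.map_cons, List.sum_cons, ih d' h.2, hd, h.1]
    have hl : (d :: d' :: L).getLast (by simp) = (d' :: L).getLast (by simp) :=
      List.getLast_cons _
    rw [hl]
    calc _ = nodeInd (dsrc l r d) + nodeInd (dtgt l r ((d' :: L).getLast (by simp)))
          + (nodeInd (dsrc l r d') + nodeInd (dsrc l r d')) := by ring
      _ = _ := by rw [ind_self_add, add_zero]

lemma euler (l r : E → N) [Nonempty E] (heven : bd l r Finset.univ = 0)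
    (hconn : ∀ P : E → Prop, (∃ e, P e) → (∃ e, ¬ P e) →
      ∃ e f, P e ∧ ¬ P f ∧ (l e = l f ∨ l e = r f ∨ r e = l f ∨ r e = r f)) :
    ∃ L : List (E × Bool), List.IsChain (fun x y => dtgt l r x = dsrc l r y) (L ++ L) ∧
      (∀ e, ∃ b, (e, b) ∈ L) ∧ L.length ≤ Fintype.card E := by
  have hlen : ∀ L : List (E × Bool), (L.map Prod.fst).Nodup → L.length ≤ Fintype.card E := by
    intro L hL
    simpa using hL.length_le_card
  by_contra hcon
  have main : ∀ k : ℕ, ∃ L : List (E × Bool), L ≠ [] ∧ (L.map Prod.fst).Nodup ∧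
      List.IsChain (fun x y => dtgt l r x = dsrc l r y) L ∧ k + 1 ≤ L.length := by
    intro k
    induction k with
    | zero =>
      obtain ⟨e⟩ := ‹Nonempty E›
      exact ⟨[(e, true)], by simp, by simp, by simp, by simp⟩
    | succ k ih =>
      obtain ⟨L, hne, hnd, hch, hk⟩ := ih
      -- how to extend
      have ext : ∀ (L' : List (E × Bool)) (f : E) (Q : N), (L'.map Prod.fst).Nodup →
          List.IsChain (fun x y => dtgt l r x = dsrc l r y) L' → L'.length = L.length →
          (∀ x ∈ L'.getLast?, dtgt l r x = Q) → f ∉ L'.map Prod.fst → (l f = Q ∨ r f = Q) →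
          ∃ L : List (E × Bool), L ≠ [] ∧ (L.map Prod.fst).Nodup ∧
          List.IsChain (fun x y => dtgt l r x = dsrc l r y) L ∧ k + 1 + 1 ≤ L.length := by
        intro L' f Q h1 h2 h3 h4 h5 h6
        obtain ⟨b, hb⟩ : ∃ b, dsrc l r (f, b) = Q := by
          rcases h6 with h | h
          · exact ⟨true, by simpa [dsrc] using h⟩
          · exact ⟨false, by simpa [dsrc] using h⟩
        refine ⟨L' ++ [(f, b)], by simp, ?_, ?_, ?_⟩
        · rw [List.map_append, List.nodup_append]
          refine ⟨h1, by simp, ?_⟩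
          intro x hx y hy hxy
          simp only [List.map_cons, List.map_nil, List.mem_singleton] at hy
          exact h5 (hy ▸ hxy ▸ hx)
        · rw [List.isChain_append]
          refine ⟨h2, by simp, ?_⟩
          intro x hx y hy
          simp only [List.head?_cons, Option.mem_def, Option.some.injEq] at hy
          rw [← hy, hb]
          exact h4 x hx
        · simp; omega
      obtain ⟨d, L0, rfl⟩ := List.exists_cons_of_ne_nil hne
      have hb := trail_bd l r L0 d hch
      set lst := (d :: L0).getLast (by simp) with hlst
      have hlast : (d :: L0).getLast? = some lst := List.getLast?_eq_getLast_of_ne_nil _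
      by_cases hXY : dsrc l r d = dtgt l r lst
      · -- closed trail
        have hcl : List.IsChain (fun x y => dtgt l r x = dsrc l r y) ((d :: L0) ++ (d :: L0)) := by
          rw [List.isChain_append]
          refine ⟨hch, hch, ?_⟩
          intro x hx y hy
          rw [hlast] at hx
          simp only [List.head?_cons, Option.mem_def, Option.some.injEq] at hx hy
          rw [← hx, ← hy, hXY]
        by_cases hall : ∀ e, e ∈ (d :: L0).map Prod.fst
        · exfalso
          apply hcon
          refine ⟨d :: L0, hcl, ?_, hlen _ hnd⟩
          intro e
          obtain ⟨⟨e', b⟩, h1, h2⟩ := List.mem_map.1 (hall e)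
          simp only at h2
          subst h2
          exact ⟨b, h1⟩
        · push Not at hall
          obtain ⟨e, f, he, hf, hsh⟩ := hconn (fun e => e ∈ (d :: L0).map Prod.fst)
            ⟨d.1, by simp⟩ hall
          obtain ⟨⟨e', b⟩, h1, h2⟩ := List.mem_map.1 he
          simp only at h2
          subst h2
          obtain ⟨Q, hQ, hfQ⟩ : ∃ Q, (dsrc l r (e', b) = Q ∨ dtgt l r (e', b) = Q) ∧
              (l f = Q ∨ r f = Q) := by
            cases b <;> simp only [dsrc, dtgt] <;> rcases hsh with h | h | h | h
            all_goals first
              | exact ⟨l e', by simp, by simp [h]⟩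
              | exact ⟨r e', by simp, by simp [h]⟩
          obtain ⟨A, B, hAB⟩ := List.append_of_mem h1
          have rotgen : ∀ A B : List (E × Bool), d :: L0 = A ++ B →
              (∀ x ∈ (B ++ A).getLast?, dtgt l r x = Q) → _ := fun A B hAB hlastQ =>
            ext (B ++ A) f Q (by
                have : ((B ++ A).map Prod.fst).Perm ((A ++ B).map Prod.fst) :=
                  List.perm_append_comm.map _
                rw [this.nodup_iff, ← hAB]; exact hnd)
              (by
                rw [hAB] at hcl
                exact (List.isChain_append.1 (chain_rot hcl)).1)
              (by rw [hAB]; simp [add_comm]) hlastQ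
              (by
                rw [hAB] at hf
                simp only [List.map_append, List.mem_append] at hf ⊢
                tauto) hfQ
          rcases hQ with hQ | hQ
          · apply rotgen A ((e', b) :: B) hAB
            intro x hx
            rw [hAB] at hcl
            have := (List.isChain_append.1 (chain_rot hcl)).2.2 x hx (e', b) (by simp)
            rw [this, hQ]
          · apply rotgen (A ++ [(e', b)]) B (by rw [hAB]; simp)
            intro x hx
            rw [← List.append_assoc, List.getLast?_concat] at hx
            simp only [Option.mem_def, Option.some.injEq] at hx
            rw [← hx, hQ]
      · -- open trail
        have hsum : bd l r ((d :: L0).map Prod.fst).toFinset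
            = nodeInd (dsrc l r d) + nodeInd (dtgt l r lst) := by
          rw [← hb]
          funext v
          simp only [bd]
          rw [List.sum_toFinset _ hnd, List.map_map]
          induction (d :: L0) with
          | nil => simp
          | cons x M ihM => simp [ihM]
        have hrest : bd l r (Finset.univ \ ((d :: L0).map Prod.fst).toFinset) (dtgt l r lst) ≠ 0 := by
          rw [bd_sdiff l r (Finset.subset_univ _), heven, zero_add, hsum]
          simp [nodeInd, hXY]
        obtain ⟨f, hf, hf2⟩ := Finset.exists_ne_zero_of_sum_ne_zero hrest
        refine ext (d :: L0) f (dtgt l r lst) hnd hch rfl ?_ ?_ ?_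
        · intro x hx
          rw [hlast] at hx
          simp only [Option.mem_def, Option.some.injEq] at hx
          rw [hx]
        · simpa using hf
        · by_contra hno
          push Not at hno
          simp [nodeInd, hno.1, hno.2] at hf2
  obtain ⟨L, -, hnd, -, hk⟩ := main (Fintype.card E)
  have := hlen L hnd
  omega

end Euler


section Seg
variable {V : Type*} (R : V → V → Prop) (K : V → Prop)

/-- segment can be broken at y -/
def Brk (S : List V) (y : V) : Prop :=
  ∃ A B, S = A ++ B ∧ (y ∈ A.getLast? ∨ y ∈ B.head?) ∧
    (∀ z ∈ A.getLast?, K z) ∧ (∀ z ∈ B.head?, K z)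

/-- good segments -/
structure Good (S : List V) : Prop where
  ne : S ≠ []
  chain : List.IsChain R S
  hd : ∀ z ∈ S.head?, K z
  lst : ∀ z ∈ S.getLast?, K z
  brk : ∀ y ∈ S, K y → Brk K S y

variable {R K}

lemma Good.reverse (hs : ∀ u v, R u v → R v u) {S : List V} (h : Good R K S) :
    Good R K S.reverse where
  ne := by simpa using h.ne
  chain := by
    rw [List.isChain_reverse]
    exact h.chain.imp (fun a b hab => hs _ _ hab)
  hd := by simpa using h.lst
  lst := by simpa using h.hd
  brk := by
    intro y hy hK
    obtain ⟨A, B, rfl, h1, h2, h3⟩ := h.brk y (by simpa using hy) hK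
    exact ⟨B.reverse, A.reverse, by simp, by simpa using h1.symm, by simpa using h3,
      by simpa using h2⟩

lemma Good.append {S T : List V} (h : Good R K S) (h' : Good R K T)
    (hR : ∀ u ∈ S.getLast?, ∀ v ∈ T.head?, R u v) : Good R K (S ++ T) where
  ne := by simp [h.ne]
  chain := List.isChain_append.2 ⟨h.chain, h'.chain, hR⟩
  hd := by
    have := h.hd
    have := h.ne
    cases S <;> simp_all
  lst := by
    have h1 := h'.lst
    have h2 := h'.ne
    rcases T.eq_nil_or_concat' with rfl | ⟨T, t, rfl⟩
    · simp_all
    · rw [← List.append_assoc]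
      simpa using h1
  brk := by
    intro y hy hK
    rcases List.mem_append.1 hy with hy | hy
    · obtain ⟨A, B, rfl, h1, h2, h3⟩ := h.brk y hy hK
      refine ⟨A, B ++ T, by simp, ?_, h2, ?_⟩
      · rcases h1 with h1 | h1
        · exact Or.inl h1
        · right; cases B <;> simp_all
      · have := h'.hd
        cases B <;> simp_all
    · obtain ⟨A, B, rfl, h1, h2, h3⟩ := h'.brk y hy hK
      refine ⟨S ++ A, B, by simp, ?_, ?_, h3⟩
      · rcases h1 with h1 | h1
        · left
          rcases A.eq_nil_or_concat' with rfl | ⟨A, t, rfl⟩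
          · simp_all
          · rw [← List.append_assoc]; simpa using h1
        · exact Or.inr h1
      · have := h.lst
        rcases A.eq_nil_or_concat' with rfl | ⟨A, t, rfl⟩
        · simpa using this
        · rw [← List.append_assoc]; simpa using h2

/-- Rotate closed good segment. -/
lemma Good.rot (hs : ∀ u v, R u v → R v u) {S : List V} (h : Good R K S)
    (hc : ∀ u ∈ S.getLast?, ∀ v ∈ S.head?, R u v) {y : V} (hy : y ∈ S) (hK : K y) :
    ∃ T : List V, (∀ v, v ∈ S → v ∈ T) ∧ T.length = S.length ∧ List.IsChain R T ∧
      T.head? = some y ∧ (∀ z ∈ T.getLast?, K z) := by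
  obtain ⟨A, B, rfl, h1, h2, h3⟩ := h.brk y hy hK
  have hch : List.IsChain R ((A ++ B) ++ (A ++ B)) :=
    List.isChain_append.2 ⟨h.chain, h.chain, hc⟩
  have hch := (List.isChain_append.1 (chain_rot hch)).1
  have hh := h.hd
  have hl := h.lst
  rcases h1 with h1 | h1
  · refine ⟨(B ++ A).reverse, by simp, by simp, ?_, ?_, ?_⟩
    · rw [List.isChain_reverse]
      exact hch.imp (fun a b hab => hs _ _ hab)
    · rcases A.eq_nil_or_concat' with rfl | ⟨A, t, rfl⟩
      · simp at h1
      · simpa using h1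
    · rw [List.getLast?_reverse]
      cases B <;> simp_all
  · refine ⟨B ++ A, by simp; tauto, by simp; omega, hch, ?_, ?_⟩
    · cases B <;> simp_all
    · rcases A.eq_nil_or_concat' with rfl | ⟨A, t, rfl⟩
      · simpa using hl
      · rw [← List.append_assoc]; simpa using h2

lemma claimA (hs : ∀ u v, R u v → R v u)
    (hcf : ∀ v a b c, R v a → R v b → R v c → R a b ∨ R a c ∨ R b c) (x : V) (hr : R x x) (n : ℕ) :
    ∀ M : List V, M.length ≤ n →
    List.IsChain (fun u v => R u v ∨ (R x u ∧ R x v)) (M ++ [x]) →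
    ∃ (P : List V) (F : List (List V)), (∀ S ∈ F, Good R (R x) S) ∧
      P.length + F.flatten.length ≤ M.length ∧ (∀ v ∈ M, v ∈ P ∨ v ∈ F.flatten) ∧
      ((P = [] ∧ ∀ z ∈ M.head?, R x z) ∨
       (∃ h P0 q, M.head? = some h ∧ ¬ R x h ∧ P = P0 ++ [q] ∧ P.head? = some h ∧
          List.IsChain R P ∧ (∀ z ∈ P0, ¬ R x z) ∧ R x q)) := by
  induction n with
  | zero =>
    intro M hM _
    have : M = [] := by simpa using hM
    subst this
    exact ⟨[], [], by simp, by simp, by simp, by simp⟩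
  | succ n ih =>
    intro M hM hch
    rcases M with _ | ⟨h, M1⟩
    · exact ⟨[], [], by simp, by simp, by simp, by simp⟩
    have hM1 : M1.length ≤ n := by simpa using hM
    have hch1 : List.IsChain (fun u v => R u v ∨ (R x u ∧ R x v)) (M1 ++ [x]) := by
      simpa using (List.isChain_cons.1 hch).2
    by_cases hK : R x h
    · obtain ⟨P, F, hF, hlen, hcov, hP⟩ := ih M1 hM1 hch1
      refine ⟨[], (h :: P) :: F, ?_, ?_, ?_, Or.inl ⟨rfl, by simpa using hK⟩⟩
      · intro S hS
        rcases List.mem_cons.1 hS with rfl | hS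
        swap
        · exact hF S hS
        rcases hP with ⟨rfl, -⟩ | ⟨w, P0, q, hw, hKw, rfl, hhd, hc, hP0, hq⟩
        · exact ⟨by simp, by simp, by simpa using hK, by simpa using hK, by
            intro y hy hy2
            simp only [List.mem_singleton] at hy
            subst hy
            exact ⟨[], [y], by simp, by simp, by simp, by simpa using hK⟩⟩
        · have hl : (h :: (P0 ++ [q])).getLast? = some q := by
            rw [← List.cons_append, List.getLast?_concat]
          refine ⟨by simp, ?_, by simpa using hK, ?_, ?_⟩
          · rw [List.isChain_cons]
            refine ⟨?_, hc⟩
            intro y hy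
            rw [hhd] at hy
            simp only [Option.mem_def, Option.some.injEq] at hy
            subst hy
            have := (List.isChain_cons.1 hch).1 w (by cases M1 <;> simp_all)
            tauto
          · rw [hl]; simpa using hq
          · intro y hy hy2
            simp only [List.mem_cons, List.mem_append, List.not_mem_nil, or_false] at hy
            rcases hy with rfl | hy | rfl
            · exact ⟨[], y :: (P0 ++ [q]), by simp, by simp, by simp, by simpa using hK⟩
            · exact absurd hy2 (hP0 y hy)
            · refine ⟨h :: (P0 ++ [y]), [], by simp, ?_, ?_, by simp⟩
              · rw [hl]; simp
              · rw [hl]; simpa using hq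
      · simp at hlen ⊢; omega
      · intro v hv
        rcases List.mem_cons.1 hv with rfl | hv
        · simp
        · have := hcov v hv
          simp at this ⊢; tauto
    · rcases M1 with _ | ⟨h', M2⟩
      · simp at hch
        exact absurd (by rcases hch with h | h; exact hs _ _ h; exact h.1) hK
      have hhh : R h h' := by
        have := (List.isChain_cons.1 hch).1 h' (by simp)
        tauto
      by_cases hK' : R x h'
      · have hch2 : List.IsChain (fun u v => R u v ∨ (R x u ∧ R x v)) (M2 ++ [x]) := by
          simpa using (List.isChain_cons.1 hch1).2
        obtain ⟨P, F, hF, hlen, hcov, hP⟩ := ih M2 (by simp at hM1; omega) hch2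
        rcases hP with ⟨rfl, -⟩ | ⟨w, P0, q, hw, hKw, rfl, hhd, hc, hP0, hq⟩
        · refine ⟨[h, h'], F, hF, ?_, ?_, Or.inr ⟨h, [h], h', by simp, hK, by simp, by simp,
            by simpa using hhh, by simpa using hK, hK'⟩⟩
          · simp at hlen ⊢; omega
          · intro v hv
            simp only [List.mem_cons] at hv
            rcases hv with rfl | rfl | hv
            · simp
            · simp
            · have := hcov v hv
              simp at this ⊢; tauto
        · have hw2 : R h w := by
            have h1 : R h' w := by
              have := (List.isChain_cons.1 hch1).1 w (by cases M2 <;> simp_all)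
              tauto
            have := hcf h' x h w (hs _ _ hK') (hs _ _ hhh) h1
            tauto
          refine ⟨h :: (P0 ++ [q]), [h'] :: F, ?_, ?_, ?_, Or.inr ⟨h, h :: P0, q, by simp, hK,
            by simp, by simp, ?_, ?_, hq⟩⟩
          · intro S hS
            rcases List.mem_cons.1 hS with rfl | hS
            swap
            · exact hF S hS
            exact ⟨by simp, by simp, by simpa using hK', by simpa using hK', by
              intro y hy hy2
              simp only [List.mem_singleton] at hy
              subst hy
              exact ⟨[], [y], by simp, by simp, by simp, by simpa using hK'⟩⟩
          · simp at hlen ⊢; omega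
          · intro v hv
            simp only [List.mem_cons] at hv
            rcases hv with rfl | rfl | hv
            · simp
            · simp
            · have := hcov v hv
              simp at this ⊢; tauto
          · rw [List.isChain_cons]
            refine ⟨?_, hc⟩
            intro y hy
            rw [hhd] at hy
            simp only [Option.mem_def, Option.some.injEq] at hy
            exact hy ▸ hw2
          · intro z hz
            rcases List.mem_cons.1 hz with rfl | hz
            · exact hK
            · exact hP0 z hz
      · obtain ⟨P, F, hF, hlen, hcov, hP⟩ := ih (h' :: M2) hM1 hch1
        rcases hP with ⟨rfl, h0⟩ | ⟨w, P0, q, hw, hKw, rfl, hhd, hc, hP0, hq⟩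
        · exact absurd (h0 h' (by simp)) hK'
        · simp only [List.head?_cons, Option.some.injEq] at hw
          subst hw
          refine ⟨h :: (P0 ++ [q]), F, hF, ?_, ?_, Or.inr ⟨h, h :: P0, q, by simp, hK,
            by simp, by simp, ?_, ?_, hq⟩⟩
          · simp at hlen ⊢; omega
          · intro v hv
            rcases List.mem_cons.1 hv with rfl | hv
            · simp
            · have := hcov v hv
              simp at this ⊢; tauto
          · rw [List.isChain_cons]
            refine ⟨?_, hc⟩
            intro y hy
            rw [hhd] at hy
            simp only [Option.mem_def, Option.some.injEq] at hy
            exact hy ▸ hhh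
          · intro z hz
            rcases List.mem_cons.1 hz with rfl | hz
            · exact hK
            · exact hP0 z hz

lemma close_x (x : V) (hr : R x x) (S : List V) (hS : List.IsChain R S)
    (h1 : ∀ z ∈ S.head?, R x z) (h2 : ∀ z ∈ S.getLast?, R z x) :
    List.IsChain R ((x :: S) ++ (x :: S)) := by
  have h3 : List.IsChain R (x :: S) := List.isChain_cons.2 ⟨h1, hS⟩
  refine List.isChain_append.2 ⟨h3, h3, ?_⟩
  intro u hu v hv
  simp only [List.head?_cons, Option.mem_def, Option.some.injEq] at hv
  subst hv
  rcases S.eq_nil_or_concat' with rfl | ⟨S, t, rfl⟩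
  · simp at hu; exact hu ▸ hr
  · rw [← List.cons_append, List.getLast?_concat] at hu
    exact h2 u (by simpa using hu)

lemma claimB2 (hs : ∀ u v, R u v → R v u)
    (hcf : ∀ v a b c, R v a → R v b → R v c → R a b ∨ R a c ∨ R b c) (x : V) (hr : R x x)
    (a b c : V) (ha : R x a) (hb : R x b) (hc : R x c) (hab : R a b) (hbc : R b c)
    (hac : ¬ R a c) (S T : List V) (hS : Good R (R x) S) (hT : Good R (R x) T)
    (hSc : ∀ u ∈ S.getLast?, ∀ v ∈ S.head?, R u v)
    (hTc : ∀ u ∈ T.getLast?, ∀ v ∈ T.head?, R u v)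
    (hbS : b ∈ S) (haST : a ∈ S ∨ a ∈ T) (hcST : c ∈ S ∨ c ∈ T) :
    ∃ L : List V, List.IsChain R (L ++ L) ∧ (∀ v, v ∈ S ∨ v ∈ T → v ∈ L) ∧ x ∈ L ∧
      L.length ≤ S.length + T.length + 1 := by
  by_cases hyz : ∃ y z, y ∈ S ∧ R x y ∧ z ∈ T ∧ R x z ∧ R y z
  · obtain ⟨y, z, hy, hy2, hz, hz2, hR⟩ := hyz
    obtain ⟨S', h1, h2, h3, h4, h5⟩ := hS.rot hs hSc hy hy2
    obtain ⟨T', g1, g2, g3, g4, g5⟩ := hT.rot hs hTc hz hz2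
    refine ⟨x :: (S'.reverse ++ T'), close_x x hr _ ?_ ?_ ?_, ?_, by simp, by simp; omega⟩
    · refine List.isChain_append.2 ⟨?_, g3, ?_⟩
      · rw [List.isChain_reverse]
        exact h3.imp (fun a b hab => hs _ _ hab)
      · intro u hu v hv
        simp only [List.getLast?_reverse, h4, g4, Option.mem_def, Option.some.injEq] at hu hv
        exact hu ▸ hv ▸ hR
    · have hne : S'.reverse ≠ [] := by rintro h; simp at h; simp [h] at h4
      intro w hw
      apply h5
      rw [List.head?_append_of_ne_nil _ hne] at hw
      simpa using hw
    · have hne : T' ≠ [] := by rintro h; simp [h] at g4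
      intro w hw
      apply hs
      apply g5
      rw [List.getLast?_append_of_ne_nil _ hne] at hw
      simpa using hw
    · intro v hv
      simp only [List.mem_cons, List.mem_append, List.mem_reverse]
      rcases hv with hv | hv
      · exact Or.inr (Or.inl (h1 v hv))
      · exact Or.inr (Or.inr (g1 v hv))
  · push Not at hyz
    exfalso
    have haS : a ∈ S := by
      rcases haST with h | h
      · exact h
      · exact absurd (hs _ _ hab) (hyz b a hbS hb h ha)
    have hcS : c ∈ S := by
      rcases hcST with h | h
      · exact h
      · exact absurd hbc (hyz b c hbS hb h hc)
    obtain ⟨t, T', rfl⟩ := List.exists_cons_of_ne_nil hT.ne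
    have ht : R x t := hT.hd t (by simp)
    rcases hcf x a c t ha hc ht with h | h | h
    · exact hac h
    · exact hyz a t haS ha (by simp) ht h
    · exact hyz c t hcS hc (by simp) ht h

lemma claimB (hs : ∀ u v, R u v → R v u)
    (hcf : ∀ v a b c, R v a → R v b → R v c → R a b ∨ R a c ∨ R b c) (x : V) (hr : R x x)
    (a b c : V) (ha : R x a) (hb : R x b) (hc : R x c) (hab : R a b) (hbc : R b c)
    (hac : ¬ R a c) (n : ℕ) : ∀ (F : List (List V)), F.length = n →
    (∀ S ∈ F, Good R (R x) S) → a ∈ F.flatten → b ∈ F.flatten → c ∈ F.flatten →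
    ∃ L : List V, List.IsChain R (L ++ L) ∧ (∀ v, v ∈ F.flatten → v ∈ L) ∧ x ∈ L ∧
      L.length ≤ F.flatten.length + 1 := by
  induction n with
  | zero =>
    intro F hF _ h
    have : F = [] := by simpa using hF
    subst this
    simp at h
  | succ n ih =>
    -- merging two segments
    have merge : ∀ (S T : List V) (F0 F : List (List V)), F.length = n + 1 →
        List.Perm F (S :: T :: F0) → (∀ S ∈ F, Good R (R x) S) → a ∈ F.flatten →
        b ∈ F.flatten → c ∈ F.flatten →
        (∀ u ∈ S.getLast?, ∀ v ∈ T.head?, R u v) →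
        ∃ L : List V, List.IsChain R (L ++ L) ∧ (∀ v, v ∈ F.flatten → v ∈ L) ∧ x ∈ L ∧
          L.length ≤ F.flatten.length + 1 := by
      intro S T F0 F hlen hperm hF h1 h2 h3 hST
      have hfl : ∀ v, v ∈ F.flatten ↔ v ∈ ((S ++ T) :: F0).flatten := by
        intro v
        rw [hperm.flatten.mem_iff]
        simp
      have hl := hperm.length_eq
      have hl2 := hperm.flatten.length_eq
      obtain ⟨L, g1, g2, g3, g4⟩ := ih ((S ++ T) :: F0) (by simp at hl ⊢; omega) (by
          intro U hU
          rcases List.mem_cons.1 hU with rfl | hU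
          · exact (hF S (hperm.mem_iff.2 (by simp))).append (hF T (hperm.mem_iff.2 (by simp))) hST
          · exact hF U (hperm.mem_iff.2 (by simp [hU]))) ((hfl a).1 h1) ((hfl b).1 h2)
            ((hfl c).1 h3)
      refine ⟨L, g1, fun v hv => g2 v ((hfl v).1 hv), g3, ?_⟩
      simp at hl2 g4 ⊢
      omega
    intro F hlen hF h1 h2 h3
    -- merging after reversing the first
    have mergeR : ∀ (S T : List V) (F0 : List (List V)),
        List.Perm F (S :: T :: F0) →
        (∀ u ∈ S.head?, ∀ v ∈ T.head?, R u v) →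
        ∃ L : List V, List.IsChain R (L ++ L) ∧ (∀ v, v ∈ F.flatten → v ∈ L) ∧ x ∈ L ∧
          L.length ≤ F.flatten.length + 1 := by
      intro S T F0 hperm hST
      have hl := hperm.length_eq
      have hl2 := hperm.flatten.length_eq
      have hfl : ∀ v, v ∈ F.flatten ↔ v ∈ (S.reverse :: T :: F0).flatten := by
        intro v
        rw [hperm.flatten.mem_iff]
        simp
      obtain ⟨L, g1, g2, g3, g4⟩ := merge S.reverse T F0 (S.reverse :: T :: F0)
        (by simp at hl ⊢; omega) (List.Perm.refl _) (by
          intro U hU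
          rcases List.mem_cons.1 hU with rfl | hU
          · exact (hF S (hperm.mem_iff.2 (by simp))).reverse hs
          · exact hF U (hperm.mem_iff.2 (List.mem_cons_of_mem _ hU)))
        ((hfl a).1 h1) ((hfl b).1 h2) ((hfl c).1 h3) (by simpa using hST)
      refine ⟨L, g1, fun v hv => g2 v ((hfl v).1 hv), g3, ?_⟩
      simp at hl2 g4 ⊢
      omega
    rcases F with _ | ⟨S, _ | ⟨T, _ | ⟨U, F0⟩⟩⟩
    · simp at hlen
    · have hS := hF S (by simp)
      exact ⟨x :: S, close_x x hr S hS.chain hS.hd (fun z hz => hs _ _ (hS.lst z hz)),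
        by simp; tauto, by simp, by simp⟩
    · have hS := hF S (by simp)
      have hT := hF T (by simp)
      obtain ⟨s, S', hS'⟩ := List.exists_cons_of_ne_nil hS.ne
      obtain ⟨t, T', hT'⟩ := List.exists_cons_of_ne_nil hT.ne
      have hhS : S.head? = some s := by simp [hS']
      have hhT : T.head? = some t := by simp [hT']
      obtain ⟨s', hlS⟩ : ∃ s', S.getLast? = some s' := ⟨_, List.getLast?_eq_getLast_of_ne_nil hS.ne⟩
      obtain ⟨t', hlT⟩ : ∃ t', T.getLast? = some t' := ⟨_, List.getLast?_eq_getLast_of_ne_nil hT.ne⟩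
      have e1 : R x s := hS.hd s (by simp [hhS])
      have e2 : R x t := hT.hd t (by simp [hhT])
      have e3 : R x s' := hS.lst s' (by simp [hlS])
      have e4 : R x t' := hT.lst t' (by simp [hlT])
      by_cases c1 : R s t
      · exact mergeR S T [] (List.Perm.refl _) (by simpa [hhS, hhT] using c1)
      by_cases c2 : R s' t
      · exact merge S T [] _ hlen (List.Perm.refl _) hF h1 h2 h3 (by simpa [hlS, hhT] using c2)
      by_cases c3 : R t' s
      · exact merge T S [] _ hlen (List.Perm.swap _ _ _) hF h1 h2 h3
          (by simpa [hlT, hhS] using c3)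
      have d1 : R s' s := by
        rcases hcf x s' s t e3 e1 e2 with h | h | h
        · exact h
        · exact absurd h c2
        · exact absurd h c1
      have d2 : R t' t := by
        rcases hcf x t' t s e4 e2 e1 with h | h | h
        · exact h
        · exact absurd h c3
        · exact absurd (hs _ _ h) c1
      simp only [List.flatten_cons, List.flatten_nil, List.append_nil, List.mem_append] at h1 h2 h3
      rcases h2 with h2 | h2
      · obtain ⟨L, g1, g2, g3, g4⟩ := claimB2 hs hcf x hr a b c ha hb hc hab hbc hac S T hS hT
          (by simpa [hlS, hhS] using d1) (by simpa [hlT, hhT] using d2) h2 h1 h3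
        exact ⟨L, g1, by simpa using g2, g3, by simpa using g4⟩
      · obtain ⟨L, g1, g2, g3, g4⟩ := claimB2 hs hcf x hr a b c ha hb hc hab hbc hac T S hT hS
          (by simpa [hlT, hhT] using d2) (by simpa [hlS, hhS] using d1) h2 h1.symm h3.symm
        refine ⟨L, g1, ?_, g3, by simp; omega⟩
        intro v hv
        apply g2
        simpa [or_comm] using hv
    · have hS := hF S (by simp)
      have hT := hF T (by simp)
      have hU := hF U (by simp)
      obtain ⟨s, S', hS'⟩ := List.exists_cons_of_ne_nil hS.ne
      obtain ⟨t, T', hT'⟩ := List.exists_cons_of_ne_nil hT.ne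
      obtain ⟨u, U', hU'⟩ := List.exists_cons_of_ne_nil hU.ne
      have hhS : S.head? = some s := by simp [hS']
      have hhT : T.head? = some t := by simp [hT']
      have hhU : U.head? = some u := by simp [hU']
      rcases hcf x s t u (hS.hd s (by simp [hhS])) (hT.hd t (by simp [hhT]))
        (hU.hd u (by simp [hhU])) with h | h | h
      · exact mergeR S T (U :: F0) (List.Perm.refl _) (by simpa [hhS, hhT] using h)
      · exact mergeR S U (T :: F0) ((List.Perm.swap _ _ _).cons _) (by simpa [hhS, hhU] using h)
      · refine mergeR T U (S :: F0) ?_ (by simpa [hhT, hhU] using h)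
        exact (List.Perm.swap _ _ _).trans ((List.Perm.swap _ _ _).cons _)

/-- The closure step on closed covers. -/
lemma closure_step (hs : ∀ u v, R u v → R v u) (hrefl : ∀ u, R u u)
    (hcf : ∀ v a b c, R v a → R v b → R v c → R a b ∨ R a c ∨ R b c) (x : V)
    (a b c : V) (ha : R x a) (hb : R x b) (hc : R x c) (hab : R a b) (hbc : R b c)
    (hac : ¬ R a c) (hbx : b ≠ x) (L : List V) (hL : ∀ v, v ∈ L)
    (hch : List.IsChain (fun u v => R u v ∨ (R x u ∧ R x v)) (L ++ L)) :
    ∃ L' : List V, (∀ v, v ∈ L') ∧ List.IsChain R (L' ++ L') ∧ L'.length ≤ L.length := by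
  obtain ⟨A, B, rfl⟩ := List.append_of_mem (hL x)
  have h1 := chain_rot hch
  have h2 : List.IsChain (fun u v => R u v ∨ (R x u ∧ R x v)) (x :: ((B ++ A) ++ [x])) := by
    refine List.IsChain.prefix h1 ⟨B ++ A, ?_⟩
    simp
  obtain ⟨h3, h4⟩ := List.isChain_cons.1 h2
  obtain ⟨P, F, hF, hlen, hcov, hP⟩ := claimA hs hcf x (hrefl x) _ (B ++ A) le_rfl h4
  have hP0 : P = [] := by
    rcases hP with ⟨h, -⟩ | ⟨h, P0, q, hw, hKw, -⟩
    · exact h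
    · exfalso
      have := h3 h (by simp only [List.head?_append, hw]; simp)
      tauto
  subst hP0
  have hne : ∀ v, v ≠ x → v ∈ F.flatten := by
    intro v hv
    have h5 := hL v
    have := hcov v (by simp at h5 ⊢; tauto)
    simpa using this
  obtain ⟨L', g1, g2, g3, g4⟩ := claimB hs hcf x (hrefl x) a b c ha hb hc hab hbc hac _ F rfl hF
    (hne a (by rintro rfl; exact hac hc)) (hne b hbx)
    (hne c (by rintro rfl; exact hac (hs _ _ ha)))
  refine ⟨L', ?_, g1, ?_⟩
  · intro v
    by_cases hv : v = x
    · exact hv ▸ g3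
    · exact g2 v (hne v hv)
  · simp at hlen g4 ⊢
    omega

end Seg


section CutParity
open scoped Classical
variable {E N : Type*} [Fintype E] [Fintype N]

lemma mem_cut (l r : E → N) (X : N → Prop) (e : E) :
    e ∈ cut l r X ↔ ¬ (X (l e) ↔ X (r e)) := by
  simp [cut]

lemma even_cut (l r : E → N) (S : Finset E) (h : bd l r S = 0) (X : N → Prop) :
    Even (S ∩ cut l r X).card := by
  have h1 : ∑ v ∈ Finset.univ.filter X, bd l r S v = ((S ∩ cut l r X).card : ZMod 2) := by
    simp only [bd, cut]
    rw [Finset.sum_comm, Finset.card_eq_sum_ones, Nat.cast_sum, ← Finset.filter_mem_eq_inter,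
      Finset.sum_filter]
    apply Finset.sum_congr rfl
    intro e he
    rw [Finset.sum_add_distrib]
    simp only [nodeInd, Finset.sum_ite_eq, Finset.mem_filter, Finset.mem_univ, true_and]
    by_cases h1 : X (l e) <;> by_cases h2 : X (r e) <;> simp [h1, h2]
    decide
  rw [h] at h1
  simp only [Pi.zero_apply, Finset.sum_const_zero] at h1
  exact (ZMod.natCast_eq_zero_iff_even).1 h1.symm

lemma odd_cut (l r : E → N) (J : Finset E) (h : bd l r (Finset.univ \ J) = 0) (X : N → Prop)
    (ho : Odd (J ∩ cut l r X).card) : Odd (cut l r X).card := by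
  have h1 := even_cut l r _ h X
  have h2 : (cut l r X).card = (J ∩ cut l r X).card + ((Finset.univ \ J) ∩ cut l r X).card := by
    rw [← Finset.card_union_of_disjoint]
    · congr 1
      ext e
      simp; tauto
    · rw [Finset.disjoint_left]
      intro e he
      simp at he ⊢; tauto
  rw [h2]
  exact ho.add_even h1

/-- exchanging a minimum join with a cycle -/
lemma min_join_cons (l r : E → N) (J : Finset E) (h : bd l r (Finset.univ \ J) = 0)
    (hmin : ∀ J', bd l r (Finset.univ \ J') = 0 → J.card ≤ J'.card) (S : Finset E)
    (hS : bd l r S = 0) : 0 ≤ wt J S := by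
  have hJ : bd l r J = bd l r Finset.univ := by
    rw [bd_sdiff l r (Finset.subset_univ _)] at h
    have h0 : bd l r Finset.univ + bd l r J + bd l r J = 0 + bd l r J := by rw [h]
    rw [add_assoc, vec_self_add, add_zero, zero_add] at h0
    exact h0.symm
  have h1 : bd l r ((J \ (J ∩ S)) ∪ (S \ (J ∩ S))) = bd l r Finset.univ := by
    rw [bd_union, bd_sdiff l r Finset.inter_subset_left, bd_sdiff l r Finset.inter_subset_right,
      hS, zero_add, add_assoc, vec_self_add, add_zero, hJ]
    rw [Finset.disjoint_left]
    intro e he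
    simp at he ⊢; tauto
  have h2 := hmin ((J \ (J ∩ S)) ∪ (S \ (J ∩ S))) (by
    rw [bd_sdiff l r (Finset.subset_univ _), h1, vec_self_add])
  rw [Finset.card_union_of_disjoint (by
    rw [Finset.disjoint_left]
    intro e he
    simp at he ⊢; tauto), Finset.card_sdiff_of_subset Finset.inter_subset_left,
    Finset.card_sdiff_of_subset Finset.inter_subset_right] at h2
  have h3 : wt J S = (S.card : ℤ) - 2 * (J ∩ S).card := by
    have : ∀ e, (if e ∈ J then (-1 : ℤ) else 1) = 1 - 2 * (if e ∈ J then 1 else 0) := by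
      intro e; split_ifs <;> norm_num
    simp only [wt, this, Finset.sum_sub_distrib, ← Finset.mul_sum]
    rw [Finset.sum_ite_mem, Finset.inter_comm J S]
    simp
  have h4 := Finset.card_le_card (Finset.inter_subset_left : J ∩ S ⊆ J)
  have h5 := Finset.card_le_card (Finset.inter_subset_right : J ∩ S ⊆ S)
  rw [h3]
  omega

end CutParity

section Nodes
variable {V : Type*} (R : V → V → Prop)

/-- common closed neighbourhood -/
def Qs (v u : V) : Set V := {w | R v w ∧ R u w}

variable {R}

lemma Qs_comm (v u : V) : Qs R v u = Qs R u v := by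
  ext w; simp [Qs, and_comm]

lemma Qs_clique (hs : ∀ u v, R u v → R v u)
    (hdf : ∀ x a b c, R x a → R x b → R x c → R a b → R b c → b ≠ x → R a c)
    {v u : V} (hne : u ≠ v) (h : R v u) {y z : V} (hy : y ∈ Qs R v u) (hz : z ∈ Qs R v u) :
    R y z :=
  hdf v y u z hy.1 h hz.1 (hs _ _ hy.2) hz.2 hne

lemma Qs_eq (hs : ∀ u v, R u v → R v u) (hr : ∀ u, R u u)
    (hdf : ∀ x a b c, R x a → R x b → R x c → R a b → R b c → b ≠ x → R a c)
    {v u : V} (hne : u ≠ v) (h : R v u) {y z : V} (hy : y ∈ Qs R v u) (hz : z ∈ Qs R v u)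
    (hyz : z ≠ y) : Qs R y z = Qs R v u := by
  have hR : R y z := Qs_clique hs hdf hne h hy hz
  have h1 : Qs R v u ⊆ Qs R y z := fun w hw =>
    ⟨Qs_clique hs hdf hne h hy hw, Qs_clique hs hdf hne h hz hw⟩
  refine Set.Subset.antisymm ?_ h1
  intro w hw
  have hv : v ∈ Qs R v u := ⟨hr v, hs _ _ h⟩
  have hu : u ∈ Qs R v u := ⟨h, hr u⟩
  exact ⟨Qs_clique hs hdf hyz hR (h1 hv) hw, Qs_clique hs hdf hyz hR (h1 hu) hw⟩

lemma nodes (hs : ∀ u v, R u v → R v u) (hr : ∀ u, R u u)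
    (hcf : ∀ v a b c, R v a → R v b → R v c → R a b ∨ R a c ∨ R b c)
    (hdf : ∀ x a b c, R x a → R x b → R x c → R a b → R b c → b ≠ x → R a c)
    (hnb : ∀ v, ∃ u, u ≠ v ∧ R v u) :
    ∃ a b : V → Set V, (∀ v, ∃ u, u ≠ v ∧ R v u ∧ a v = Qs R v u) ∧
      (∀ v, ∃ u, u ≠ v ∧ R v u ∧ b v = Qs R v u) ∧
      (∀ v w, w ≠ v → R v w → Qs R v w = a v ∨ Qs R v w = b v) := by
  have : ∀ v, ∃ p : Set V × Set V, (∃ u, u ≠ v ∧ R v u ∧ p.1 = Qs R v u) ∧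
      (∃ u, u ≠ v ∧ R v u ∧ p.2 = Qs R v u) ∧
      (∀ w, w ≠ v → R v w → Qs R v w = p.1 ∨ Qs R v w = p.2) := by
    intro v
    obtain ⟨u0, h1, h2⟩ := hnb v
    have key : ∀ u w, u ≠ v → R v u → w ≠ v → R v w → R u w → Qs R v w = Qs R v u := by
      intro u w hu1 hu2 hw1 hw2 huw
      exact Qs_eq hs hr hdf hu1 hu2 ⟨hr v, hs _ _ hu2⟩ ⟨hw2, huw⟩ hw1
    by_cases hall : ∀ w, R v w → R u0 w
    · exact ⟨(Qs R v u0, Qs R v u0), ⟨u0, h1, h2, rfl⟩, ⟨u0, h1, h2, rfl⟩, fun w hw1 hw2 =>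
        Or.inl (key u0 w h1 h2 hw1 hw2 (hall w hw2))⟩
    · push Not at hall
      obtain ⟨u1, h3, h4⟩ := hall
      have h5 : u1 ≠ v := by rintro rfl; exact h4 (hs _ _ h2)
      refine ⟨(Qs R v u0, Qs R v u1), ⟨u0, h1, h2, rfl⟩, ⟨u1, h5, h3, rfl⟩, ?_⟩
      intro w hw1 hw2
      rcases hcf v u0 u1 w h2 h3 hw2 with h | h | h
      · exact absurd h h4
      · exact Or.inl (key u0 w h1 h2 hw1 hw2 h)
      · exact Or.inr (key u1 w h5 h3 hw1 hw2 h)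
  choose p hp using this
  exact ⟨fun v => (p v).1, fun v => (p v).2, fun v => (hp v).1, fun v => (hp v).2.1,
    fun v => (hp v).2.2⟩

end Nodes

section Preimage
open scoped Classical
variable {V N : Type*} [Fintype V] [Fintype N]

/-- left end in the subdivided graph -/
def sl (_a _b : V → N) (e : V × Bool) : V ⊕ N := Sum.inl e.1
/-- right end in the subdivided graph -/
def sr (a b : V → N) (e : V × Bool) : V ⊕ N := Sum.inr (if e.2 then b e.1 else a e.1)

lemma bd_sub_inr (a b : V → N) (S : Finset V) (Q : N) :
    bd (sl a b) (sr a b) (S ×ˢ (Finset.univ : Finset Bool)) (Sum.inr Q) = bd a b S Q := by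
  simp only [bd, Finset.sum_product]
  apply Finset.sum_congr rfl
  intro v _
  rw [Fintype.sum_bool]
  simp [sl, sr, nodeInd, add_comm]

lemma bd_sub (a b : V → N) (S : Finset V) (h : bd a b S = 0) :
    bd (sl a b) (sr a b) (S ×ˢ (Finset.univ : Finset Bool)) = 0 := by
  funext q
  rcases q with v | Q
  · simp only [bd, Finset.sum_product]
    apply Finset.sum_eq_zero
    intro u _
    rw [Fintype.sum_bool]
    simp only [sl, sr, nodeInd, reduceCtorEq, if_false, add_zero]
    exact CharTwo.add_self_eq_zero _
  · rw [bd_sub_inr, h]; rfl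

lemma sub_form (a b : V → N) (S : Finset (V × Bool)) (h : bd (sl a b) (sr a b) S = 0) (v : V) :
    (v, false) ∈ S ↔ (v, true) ∈ S := by
  have h1 := congrFun h (Sum.inl v)
  simp only [bd, sl, sr, nodeInd, Pi.zero_apply, reduceCtorEq, if_false, add_zero,
    Sum.inl.injEq] at h1
  rw [← Finset.sum_filter, Finset.sum_const, nsmul_eq_mul, mul_one,
    ZMod.natCast_eq_zero_iff_even] at h1
  by_cases c1 : (v, false) ∈ S <;> by_cases c2 : (v, true) ∈ S
  · tauto
  · exfalso
    have : S.filter (fun e => e.1 = v) = {(v, false)} := by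
      ext ⟨u, i⟩
      cases i <;> simp <;> grind
    rw [this] at h1
    simp at h1
  · exfalso
    have : S.filter (fun e => e.1 = v) = {(v, true)} := by
      ext ⟨u, i⟩
      cases i <;> simp <;> grind
    rw [this] at h1
    simp at h1
  · tauto

/-- minimum joins are small -/
lemma join_small (a b : V → N) (J : Finset V) (hJ : bd a b (Finset.univ \ J) = 0)
    (hmin : ∀ J', bd a b (Finset.univ \ J') = 0 → J.card ≤ J'.card)
    (ha : ∀ v, ∃ y, y ≠ v ∧ (a v = a y ∨ a v = b y))
    (hb : ∀ v, ∃ y, y ≠ v ∧ (b v = a y ∨ b v = b y))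
    (h2 : ∀ v, ∀ P : V → Prop, (∃ u, u ≠ v ∧ P u) → (∃ u, u ≠ v ∧ ¬ P u) →
      ∃ u w, u ≠ v ∧ w ≠ v ∧ P u ∧ ¬ P w ∧ (a u = a w ∨ a u = b w ∨ b u = a w ∨ b u = b w)) :
    3 * J.card ≤ Fintype.card V := by
  have main := seymour_count (2 * J.card) (sl a b) (sr a b) (J ×ˢ (Finset.univ : Finset Bool))
    (fun q => q.isLeft) (by simp [mul_comm]) (by intro e _; simp [sl, sr]) ?_ ?_
  · have h3 : (Finset.univ.filter (fun e : V × Bool => sl a b e ≠ sr a b e)).card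
        ≤ Fintype.card (V × Bool) := Finset.card_le_univ _
    rw [Fintype.card_prod, Fintype.card_bool] at h3
    have h4 : 3 * (2 * J.card) ≤ Fintype.card V * 2 := by
      refine le_trans (le_of_le_of_eq main ?_) h3
      congr!
    omega
  · intro S hS
    have hform := sub_form a b S hS
    set S0 : Finset V := Finset.univ.filter (fun v => (v, true) ∈ S) with hS0
    have hSS : S = S0 ×ˢ (Finset.univ : Finset Bool) := by
      ext ⟨v, i⟩
      cases i <;> simp [hS0, hform]
    have h0 : bd a b S0 = 0 := by
      funext Q
      rw [← bd_sub_inr, ← hSS, hS]; rfl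
    have h1 := min_join_cons a b J hJ hmin S0 h0
    have h3 : wt (J ×ˢ (Finset.univ : Finset Bool)) S = 2 * wt J S0 := by
      rw [hSS]
      simp only [wt, Finset.sum_product, Finset.mul_sum]
      apply Finset.sum_congr rfl
      intro v _
      simp
    rw [h3]; omega
  · intro X hodd
    have ho : Odd (cut (sl a b) (sr a b) X).card := by
      refine odd_cut (sl a b) (sr a b) (J ×ˢ (Finset.univ : Finset Bool)) ?_ X (by convert hodd)
      have := bd_sub a b _ hJ
      rw [← this]
      congr 1
      ext ⟨v, i⟩
      simp only [Finset.mem_sdiff, Finset.mem_product, Finset.mem_univ, true_and, and_true]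
    by_contra hlt
    have hone : (cut (sl a b) (sr a b) X).card = 1 := by
      obtain ⟨k, hk⟩ := ho
      omega
    obtain ⟨⟨v, i⟩, hvi⟩ := Finset.card_eq_one.1 hone
    have hmem : ∀ u j, (¬ (X (Sum.inl u) ↔ X (Sum.inr (if j then b u else a u)))) ↔
        (u = v ∧ j = i) := by
      intro u j
      have : (u, j) ∈ cut (sl a b) (sr a b) X ↔ (u, j) ∈ ({(v, i)} : Finset (V × Bool)) := by
        rw [hvi]
      rw [mem_cut] at this
      simp only [Finset.mem_singleton, Prod.mk.injEq, sl, sr] at this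
      exact this
    have hA : ∀ u, u ≠ v → (X (Sum.inl u) ↔ X (Sum.inr (a u))) := by
      intro u hu
      have := hmem u false
      simp [hu] at this
      exact this
    have hB : ∀ u, u ≠ v → (X (Sum.inl u) ↔ X (Sum.inr (b u))) := by
      intro u hu
      have := hmem u true
      simp [hu] at this
      exact this
    have hshare : ∀ u w, u ≠ v → w ≠ v → (X (Sum.inl u) ↔ X (Sum.inl w)) := by
      intro u w hu hw
      by_contra hne
      by_cases hXu : X (Sum.inl u)
      · obtain ⟨p, q, hp, hq, h3, h4, h5⟩ := h2 v (fun u => X (Sum.inl u)) ⟨u, hu, hXu⟩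
          ⟨w, hw, by tauto⟩
        have e1 := hA p hp
        have e2 := hB p hp
        have e3 := hA q hq
        have e4 := hB q hq
        rcases h5 with h5 | h5 | h5 | h5 <;> simp_all
      · obtain ⟨p, q, hp, hq, h3, h4, h5⟩ := h2 v (fun u => X (Sum.inl u)) ⟨w, hw, by tauto⟩
          ⟨u, hu, hXu⟩
        have e1 := hA p hp
        have e2 := hB p hp
        have e3 := hA q hq
        have e4 := hB q hq
        rcases h5 with h5 | h5 | h5 | h5 <;> simp_all
    obtain ⟨y, hy, hy2⟩ := ha v
    obtain ⟨z, hz, hz2⟩ := hb v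
    have hyz := hshare y z hy hz
    have f1 : X (Sum.inr (a v)) ↔ X (Sum.inl y) := by
      rcases hy2 with h | h
      · rw [h]; exact (hA y hy).symm
      · rw [h]; exact (hB y hy).symm
    have f2 : X (Sum.inr (b v)) ↔ X (Sum.inl z) := by
      rcases hz2 with h | h
      · rw [h]; exact (hA z hz).symm
      · rw [h]; exact (hB z hz).symm
    have g1 := hmem v false
    have g2 := hmem v true
    cases i <;> simp at g1 g2 <;> tauto

end Preimage


section DF
open scoped Classical
variable {V : Type*} [Fintype V] {R : V → V → Prop}

lemma chain_of_euler {E N : Type*} (l r : E → N) (f : E → V)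
    (hR : ∀ e e', (l e = l e' ∨ l e = r e' ∨ r e = l e' ∨ r e = r e') → R (f e) (f e'))
    (L : List (E × Bool)) (h : List.IsChain (fun x y => dtgt l r x = dsrc l r y) (L ++ L)) :
    List.IsChain R ((L.map (fun d => f d.1)) ++ (L.map (fun d => f d.1))) := by
  rw [← List.map_append, List.isChain_map]
  refine h.imp ?_
  rintro ⟨e, i⟩ ⟨e', i'⟩ hee
  apply hR
  cases i <;> cases i' <;> simp [dtgt, dsrc] at hee <;> tauto

lemma df_case (hs : ∀ u v, R u v → R v u) (hr : ∀ u, R u u)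
    (hcf : ∀ v a b c, R v a → R v b → R v c → R a b ∨ R a c ∨ R b c)
    (hdf : ∀ x a b c, R x a → R x b → R x c → R a b → R b c → b ≠ x → R a c)
    (hn : 2 ≤ Fintype.card V)
    (hcon : ∀ P : V → Prop, (∃ u, P u) → (∃ u, ¬ P u) → ∃ u w, P u ∧ ¬ P w ∧ R u w)
    (h2c : ∀ v, ∀ P : V → Prop, (∃ u, u ≠ v ∧ P u) → (∃ u, u ≠ v ∧ ¬ P u) →
      ∃ u w, u ≠ v ∧ w ≠ v ∧ P u ∧ ¬ P w ∧ R u w) :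
    ∃ L : List V, (∀ v, v ∈ L) ∧ List.IsChain R (L ++ L) ∧ 3 * L.length + 2 ≤ 4 * Fintype.card V := by
  have hnt : Nontrivial V := Fintype.one_lt_card_iff_nontrivial.1 (by omega)
  have hnb : ∀ v, ∃ u, u ≠ v ∧ R v u := by
    intro v
    obtain ⟨u0, hu0⟩ := exists_ne v
    obtain ⟨u, w, h1, h2, h3⟩ := hcon (fun u => u = v) ⟨v, rfl⟩ ⟨u0, hu0⟩
    exact ⟨w, h2, h1 ▸ h3⟩
  obtain ⟨a, b, ha, hb, hab⟩ := nodes hs hr hcf hdf hnb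
  -- basic facts
  have hmemQ : ∀ v u, u ≠ v → R v u → (Qs R v u = a u ∨ Qs R v u = b u) := by
    intro v u h1 h2
    rw [Qs_comm]
    exact hab u v h1.symm (hs _ _ h2)
  have hshare : ∀ u w, w ≠ u → R u w → (a u = a w ∨ a u = b w ∨ b u = a w ∨ b u = b w) := by
    intro u w h1 h2
    have h3 := hab u w h1 h2
    have h4 := hmemQ u w h1 h2
    rcases h3 with h3 | h3 <;> rcases h4 with h4 | h4 <;> rw [← h3, ← h4] <;> simp
  have hva : ∀ v, v ∈ a v := by
    intro v
    obtain ⟨u, h1, h2, h3⟩ := ha v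
    rw [h3]; exact ⟨hr v, hs _ _ h2⟩
  have hvb : ∀ v, v ∈ b v := by
    intro v
    obtain ⟨u, h1, h2, h3⟩ := hb v
    rw [h3]; exact ⟨hr v, hs _ _ h2⟩
  have hca : ∀ v y z, y ∈ a v → z ∈ a v → R y z := by
    intro v y z hy hz
    obtain ⟨u, h1, h2, h3⟩ := ha v
    rw [h3] at hy hz
    exact Qs_clique hs hdf h1 h2 hy hz
  have hcb : ∀ v y z, y ∈ b v → z ∈ b v → R y z := by
    intro v y z hy hz
    obtain ⟨u, h1, h2, h3⟩ := hb v
    rw [h3] at hy hz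
    exact Qs_clique hs hdf h1 h2 hy hz
  have hR : ∀ u w, (a u = a w ∨ a u = b w ∨ b u = a w ∨ b u = b w) → R u w := by
    intro u w h
    rcases h with h | h | h | h
    · exact hca u _ _ (hva u) (h ▸ hva w)
    · exact hca u _ _ (hva u) (h ▸ hvb w)
    · exact hcb u _ _ (hvb u) (h ▸ hva w)
    · exact hcb u _ _ (hvb u) (h ▸ hvb w)
  have ha' : ∀ v, ∃ y, y ≠ v ∧ (a v = a y ∨ a v = b y) := by
    intro v
    obtain ⟨u, h1, h2, h3⟩ := ha v
    exact ⟨u, h1, by rw [h3]; exact hmemQ v u h1 h2⟩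
  have hb' : ∀ v, ∃ y, y ≠ v ∧ (b v = a y ∨ b v = b y) := by
    intro v
    obtain ⟨u, h1, h2, h3⟩ := hb v
    exact ⟨u, h1, by rw [h3]; exact hmemQ v u h1 h2⟩
  have h2 : ∀ v, ∀ P : V → Prop, (∃ u, u ≠ v ∧ P u) → (∃ u, u ≠ v ∧ ¬ P u) →
      ∃ u w, u ≠ v ∧ w ≠ v ∧ P u ∧ ¬ P w ∧ (a u = a w ∨ a u = b w ∨ b u = a w ∨ b u = b w) := by
    intro v P h3 h4
    obtain ⟨u, w, g1, g2, g3, g4, g5⟩ := h2c v P h3 h4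
    exact ⟨u, w, g1, g2, g3, g4, hshare u w (by rintro rfl; exact g4 g3) g5⟩
  -- minimum join
  obtain ⟨J, hJmem, hJmin⟩ := Finset.exists_min_image
    (Finset.univ.filter (fun J : Finset V => bd a b (Finset.univ \ J) = 0)) Finset.card
    ⟨Finset.univ, by simp [bd_empty]⟩
  have hJ : bd a b (Finset.univ \ J) = 0 := by simpa using hJmem
  have hmin : ∀ J', bd a b (Finset.univ \ J') = 0 → J.card ≤ J'.card := by
    intro J' h; exact hJmin J' (by simpa using h)
  have h3J := join_small a b J hJ hmin ha' hb' h2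
  rcases J.eq_empty_or_nonempty with rfl | ⟨j0, hj0⟩
  · obtain ⟨L, g1, g2, g3⟩ := euler a b (by simpa using hJ) (by
      intro P h3 h4
      obtain ⟨u, w, g1, g2, g3⟩ := hcon P h3 h4
      exact ⟨u, w, g1, g2, hshare u w (by rintro rfl; exact g2 g1) g3⟩)
    refine ⟨L.map (fun d => d.1), ?_, chain_of_euler a b id hR L g1, ?_⟩
    · intro v
      obtain ⟨i, hi⟩ := g2 v
      exact List.mem_map.2 ⟨_, hi, rfl⟩
    · simp; omega
  · let J1 := J \ {j0}
    let l : V ⊕ {j // j ∈ J1} → Set V := Sum.elim a (fun j => a j.1)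
    let r : V ⊕ {j // j ∈ J1} → Set V :=
      Sum.elim (fun v => if v = j0 then a v else b v) (fun j => b j.1)
    let f : V ⊕ {j // j ∈ J1} → V := Sum.elim id (fun j => j.1)
    have hJ1 : J1.card + 1 = J.card := by
      have : J1.card = J.card - ({j0} : Finset V).card :=
        Finset.card_sdiff_of_subset (by simpa using hj0)
      have h5 : 0 < J.card := Finset.card_pos.2 ⟨j0, hj0⟩
      simp at this; omega
    have heven : bd l r Finset.univ = 0 := by
      have e1 : bd l r Finset.univ = bd a b (Finset.univ \ {j0}) + bd a b J1 := by
        funext Q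
        simp only [bd, Fintype.sum_sum_type, Pi.add_apply]
        congr 1
        · rw [← Finset.sum_sdiff (Finset.subset_univ ({j0} : Finset V)), Finset.sum_singleton]
          have : nodeInd (l (Sum.inl j0)) Q + nodeInd (r (Sum.inl j0)) Q = 0 := by
            simp only [l, r, Sum.elim_inl, if_true]
            exact CharTwo.add_self_eq_zero _
          rw [this, add_zero]
          apply Finset.sum_congr rfl
          intro v hv
          have : v ≠ j0 := by simpa using hv
          simp [l, r, this]
        · exact Finset.sum_coe_sort J1 (fun j => nodeInd (a j) Q + nodeInd (b j) Q)
      rw [e1, bd_sdiff a b (Finset.subset_univ _), bd_sdiff a b (by simpa using hj0)]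
      rw [bd_sdiff a b (Finset.subset_univ _)] at hJ
      calc _ = (bd a b Finset.univ + bd a b J) + (bd a b {j0} + bd a b {j0}) := by ring
        _ = 0 := by rw [hJ, vec_self_add, add_zero]
    have hconn : ∀ P : V ⊕ {j // j ∈ J1} → Prop, (∃ e, P e) → (∃ e, ¬ P e) →
        ∃ e f, P e ∧ ¬ P f ∧ (l e = l f ∨ l e = r f ∨ r e = l f ∨ r e = r f) := by
      intro P h3 h4
      by_contra hno
      push Not at hno
      have key : ∀ e f, (l e = l f ∨ l e = r f ∨ r e = l f ∨ r e = r f) → (P e ↔ P f) := by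
        intro e f hef
        constructor
        · intro he
          by_contra hf
          have := hno e f he hf
          tauto
        · intro hf
          by_contra he
          have := hno f e hf he
          have q1 := this.1.symm
          have q2 := this.2.1.symm
          have q3 := this.2.2.1.symm
          have q4 := this.2.2.2.symm
          tauto
      have k1 : ∀ j : {j // j ∈ J1}, (P (Sum.inr j) ↔ P (Sum.inl j.1)) := by
        intro j
        apply key
        left; rfl
      have k2 : ∀ u w, u ≠ j0 → w ≠ j0 → (P (Sum.inl u) → P (Sum.inl w)) := by
        intro u w hu hw hPu
        by_contra hPw
        obtain ⟨p, q, g1, g2, g3, g4, g5⟩ := h2 j0 (fun v => P (Sum.inl v)) ⟨u, hu, hPu⟩ ⟨w, hw, hPw⟩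
        apply g4
        refine (key (Sum.inl p) (Sum.inl q) ?_).1 g3
        simpa [l, r, g1, g2] using g5
      obtain ⟨y, hy, hy2⟩ := ha' j0
      have k3 : P (Sum.inl j0) ↔ P (Sum.inl y) := by
        apply key
        simp only [l, r, Sum.elim_inl, hy, if_false]
        tauto
      have k4 : ∀ u, P (Sum.inl u) ↔ P (Sum.inl y) := by
        intro u
        by_cases hu : u = j0
        · rw [hu, k3]
        · exact ⟨k2 u y hu hy, k2 y u hy hu⟩
      have k5 : ∀ e, P e ↔ P (Sum.inl y) := by
        rintro (u | j)
        · exact k4 u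
        · rw [k1, k4]
      obtain ⟨e, he⟩ := h3
      obtain ⟨e', he'⟩ := h4
      rw [k5] at he he'
      exact he' he
    have : Nonempty (V ⊕ {j // j ∈ J1}) := ⟨Sum.inl j0⟩
    obtain ⟨L, g1, g2, g3⟩ := euler l r heven hconn
    refine ⟨L.map (fun d => f d.1), ?_, chain_of_euler l r f ?_ L g1, ?_⟩
    · intro v
      obtain ⟨i, hi⟩ := g2 (Sum.inl v)
      exact List.mem_map.2 ⟨_, hi, rfl⟩
    · have hl : ∀ e, l e = a (f e) := by rintro (u | j) <;> rfl
      have hrr : ∀ e, r e = a (f e) ∨ r e = b (f e) := by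
        rintro (u | j)
        · simp only [r, f, Sum.elim_inl, id]
          split_ifs <;> simp
        · right; rfl
      intro e e' hee
      apply hR
      have q1 := hl e
      have q2 := hl e'
      rcases hrr e with q3 | q3 <;> rcases hrr e' with q4 | q4 <;> rw [q1, q2, q3, q4] at hee <;> tauto
    · simp only [Fintype.card_sum, Fintype.card_coe] at g3
      simp only [List.length_map]
      omega

end DF

section Final
open scoped Classical
variable {V : Type*} [Fintype V]

/-- equal or adjacent -/
def RR (G : SimpleGraph V) (u v : V) : Prop := u = v ∨ G.Adj u v

lemma conn_cross (G : SimpleGraph V) (h : G.Connected) (P : V → Prop) (h1 : ∃ u, P u)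
    (h2 : ∃ u, ¬ P u) : ∃ u w, P u ∧ ¬ P w ∧ G.Adj u w := by
  obtain ⟨u, hu⟩ := h1
  obtain ⟨w, hw⟩ := h2
  obtain ⟨p⟩ := h.preconnected u w
  obtain ⟨d, -, h3, h4⟩ := p.exists_boundary_dart {v | P v} hu hw
  exact ⟨d.fst, d.snd, h3, h4, d.adj⟩

lemma cover_exists : ∀ (k : ℕ) (R : V → V → Prop), (∀ u v, R u v → R v u) → (∀ u, R u u) →
    (∀ v a b c, R v a → R v b → R v c → R a b ∨ R a c ∨ R b c) →
    2 ≤ Fintype.card V →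
    (∀ P : V → Prop, (∃ u, P u) → (∃ u, ¬ P u) → ∃ u w, P u ∧ ¬ P w ∧ R u w) →
    (∀ v, ∀ P : V → Prop, (∃ u, u ≠ v ∧ P u) → (∃ u, u ≠ v ∧ ¬ P u) →
      ∃ u w, u ≠ v ∧ w ≠ v ∧ P u ∧ ¬ P w ∧ R u w) →
    (Finset.univ.filter (fun p : V × V => ¬ R p.1 p.2)).card = k →
    ∃ L : List V, (∀ v, v ∈ L) ∧ List.IsChain R (L ++ L) ∧
      3 * L.length + 2 ≤ 4 * Fintype.card V := by
  intro k
  induction k using Nat.strong_induction_on with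
  | _ k ih =>
  intro R hs hr hcf hn hcon h2c hk
  by_cases hdf : ∀ x a b c, R x a → R x b → R x c → R a b → R b c → b ≠ x → R a c
  · exact df_case hs hr hcf hdf hn hcon h2c
  push Not at hdf
  obtain ⟨x, a, b, c, ha, hb, hc, hab, hbc, hbx, hac⟩ := hdf
  let R' : V → V → Prop := fun u v => R u v ∨ (R x u ∧ R x v)
  have hlt : (Finset.univ.filter (fun p : V × V => ¬ R' p.1 p.2)).card < k := by
    rw [← hk]
    apply Finset.card_lt_card
    rw [Finset.ssubset_iff_of_subset]
    · exact ⟨(a, c), by simpa using hac, by simp [R', ha, hc]⟩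
    · intro p hp
      simp only [Finset.mem_filter, Finset.mem_univ, true_and, R'] at hp ⊢
      tauto
  obtain ⟨L, h1, h2, h3⟩ := ih _ hlt R'
    (by
      rintro u v (h | h)
      · exact Or.inl (hs _ _ h)
      · exact Or.inr h.symm)
    (fun u => Or.inl (hr u))
    (by
      intro v p q s hp hq hs'
      by_cases kp : R x p <;> by_cases kq : R x q <;> by_cases ks : R x s
      · exact Or.inl (Or.inr ⟨kp, kq⟩)
      · exact Or.inl (Or.inr ⟨kp, kq⟩)
      · exact Or.inr (Or.inl (Or.inr ⟨kp, ks⟩))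
      · have e2 : R v q := by rcases hq with h | h; exact h; exact absurd h.2 kq
        have e3 : R v s := by rcases hs' with h | h; exact h; exact absurd h.2 ks
        rcases hp with e1 | e1
        · have := hcf v p q s e1 e2 e3
          simp only [R']; tauto
        · have := hcf v x q s (hs _ _ e1.1) e2 e3
          simp only [R']; tauto
      · exact Or.inr (Or.inr (Or.inr ⟨kq, ks⟩))
      · have e2 : R v p := by rcases hp with h | h; exact h; exact absurd h.2 kp
        have e3 : R v s := by rcases hs' with h | h; exact h; exact absurd h.2 ks
        rcases hq with e1 | e1
        · have := hcf v p q s e2 e1 e3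
          simp only [R']; tauto
        · have := hcf v x p s (hs _ _ e1.1) e2 e3
          simp only [R']; tauto
      · have e2 : R v p := by rcases hp with h | h; exact h; exact absurd h.2 kp
        have e3 : R v q := by rcases hq with h | h; exact h; exact absurd h.2 kq
        rcases hs' with e1 | e1
        · have := hcf v p q s e2 e3 e1
          simp only [R']; tauto
        · have := hcf v x p q (hs _ _ e1.1) e2 e3
          simp only [R']; tauto
      · have := hcf v p q s (by rcases hp with h | h; exact h; exact absurd h.2 kp)
          (by rcases hq with h | h; exact h; exact absurd h.2 kq)
          (by rcases hs' with h | h; exact h; exact absurd h.2 ks)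
        simp only [R']; tauto) hn
    (by
      intro P g1 g2
      obtain ⟨u, w, g3, g4, g5⟩ := hcon P g1 g2
      exact ⟨u, w, g3, g4, Or.inl g5⟩)
    (by
      intro v P g1 g2
      obtain ⟨u, w, g3, g4, g5, g6, g7⟩ := h2c v P g1 g2
      exact ⟨u, w, g3, g4, g5, g6, Or.inl g7⟩) (by congr!)
  obtain ⟨L', g1, g2, g3⟩ := closure_step hs hr hcf x a b c ha hb hc hab hbc hac hbx L h1 h2
  exact ⟨L', g1, g2, by omega⟩

lemma walk_of_chain (G : SimpleGraph V) (L : List V) : ∀ u v : V,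
    List.IsChain (RR G) (u :: (L ++ [v])) →
    ∃ w : G.Walk u v, (∀ z ∈ L, z ∈ w.support) ∧ w.length ≤ L.length + 1 := by
  induction L with
  | nil =>
    intro u v h
    simp at h
    rcases h with rfl | h
    · exact ⟨Walk.nil, by simp, by simp⟩
    · exact ⟨h.toWalk, by simp, by simp⟩
  | cons z L ih =>
    intro u v h
    rw [List.cons_append, List.isChain_cons_cons] at h
    obtain ⟨w, h1, h2⟩ := ih z v h.2
    rcases h.1 with rfl | h3
    · exact ⟨w, by
        intro y hy
        rcases List.mem_cons.1 hy with rfl | hy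
        · simp
        · exact h1 y hy, by simp; omega⟩
    · exact ⟨Walk.cons h3 w, by
        intro y hy
        rcases List.mem_cons.1 hy with rfl | hy
        · simp
        · simp [h1 y hy], by simp; omega⟩

end Final

/-- Every 2-vertex-connected claw-free simple graph on `n ≥ 1`
vertices has a spanning closed walk of length at most `4n/3 − 2/3`.
Claw-freeness is expressed as the absence of an induced-subgraph embedding of
`K_{1,3}` into `G`. -/
theorem spanning_closed_walk_clawfree_two_connected
    {V : Type*} [Fintype V] (G : SimpleGraph V) (hn : 1 ≤ Fintype.card V) (hconn : G.Connected)
    (hclawfree : IsEmpty (completeBipartiteGraph (Fin 1) (Fin 3) ↪g G))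
    (h2vc : ∀ v : V, (G.induce {u : V | u ≠ v}).Connected) :
    ∃ (v : V) (w : G.Walk v v), (∀ u : V, u ∈ w.support) ∧
      (w.length : ℝ) ≤ 4 * Fintype.card V / 3 - 2 / 3 := by
  classical
  have hsym : ∀ u v, RR G u v → RR G v u := by
    rintro u v (h | h)
    · exact Or.inl h.symm
    · exact Or.inr h.symm
  have hn2 : 2 ≤ Fintype.card V := by
    obtain ⟨v⟩ := hconn.nonempty
    obtain ⟨u, hu⟩ := (h2vc v).nonempty
    have : Nontrivial V := ⟨u, v, hu⟩
    exact Fintype.one_lt_card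
  have hcf : ∀ v a b c, RR G v a → RR G v b → RR G v c → RR G a b ∨ RR G a c ∨ RR G b c := by
    intro v a b c ha hb hc
    by_contra hno
    simp only [RR, not_or] at hno
    obtain ⟨⟨h1, h2⟩, ⟨h3, h4⟩, h5, h6⟩ := hno
    have ha' : G.Adj v a := by
      rcases ha with rfl | ha
      · rcases hb with rfl | hb
        · exact absurd rfl h1
        · exact absurd hb h2
      · exact ha
    have hb' : G.Adj v b := by
      rcases hb with rfl | hb
      · exact absurd ha'.symm h2
      · exact hb
    have hc' : G.Adj v c := by
      rcases hc with rfl | hc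
      · exact absurd ha'.symm h4
      · exact hc
    refine hclawfree.false ?_
    have h2' : ¬ G.Adj b a := fun h => h2 h.symm
    have h4' : ¬ G.Adj c a := fun h => h4 h.symm
    have h6' : ¬ G.Adj c b := fun h => h6 h.symm
    let f : Fin 1 ⊕ Fin 3 → V := Sum.elim (fun _ => v) ![a, b, c]
    have hinj : Function.Injective f := by
      have n1 := ha'.ne
      have n2 := hb'.ne
      have n3 := hc'.ne
      rintro (i | i) (j | j) hij
      · congr 1; exact Subsingleton.elim _ _
      · fin_cases j <;> simp [f] at hij <;> simp_all
      · fin_cases i <;> simp [f] at hij <;> simp_all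
      · fin_cases i <;> fin_cases j <;> simp [f] at hij <;> simp_all
    have hadj : ∀ i j, G.Adj (f i) (f j) ↔
        (completeBipartiteGraph (Fin 1) (Fin 3)).Adj i j := by
      rintro (i | i) (j | j)
      · simp [f]
      · fin_cases j <;> simp [f, ha', hb', hc']
      · fin_cases i <;> simp [f, ha'.symm, hb'.symm, hc'.symm]
      · fin_cases i <;> fin_cases j <;> simp [f, h2, h4, h6, h2', h4', h6']
    exact ⟨⟨f, hinj⟩, hadj _ _⟩
  obtain ⟨L, h1, h2, h3⟩ := cover_exists _ (RR G) hsym (fun u => Or.inl rfl) hcf hn2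
    (by
      intro P g1 g2
      obtain ⟨u, w, g3, g4, g5⟩ := conn_cross G hconn P g1 g2
      exact ⟨u, w, g3, g4, Or.inr g5⟩)
    (by
      rintro v P ⟨u, hu, hPu⟩ ⟨w, hw, hPw⟩
      obtain ⟨p, q, g3, g4, g5⟩ := conn_cross _ (h2vc v) (fun z => P z.1) ⟨⟨u, hu⟩, hPu⟩
        ⟨⟨w, hw⟩, hPw⟩
      exact ⟨p.1, q.1, p.2, q.2, g3, g4, Or.inr (by simpa using g5)⟩) rfl
  obtain ⟨v0⟩ := hconn.nonempty
  obtain ⟨v, L', rfl⟩ := List.exists_cons_of_ne_nil (List.ne_nil_of_mem (h1 v0))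
  obtain ⟨w, g1, g2⟩ := walk_of_chain G L' v v (List.IsChain.prefix h2 ⟨L', by simp⟩)
  refine ⟨v, w, ?_, ?_⟩
  · intro u
    rcases List.mem_cons.1 (h1 u) with rfl | hu
    · simp
    · exact g1 u hu
  · have h4 : 3 * w.length + 2 ≤ 4 * Fintype.card V := by simp at h3; omega
    have h5 : (3 * w.length + 2 : ℝ) ≤ 4 * Fintype.card V := by exact_mod_cast h4
    linarith
end
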